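/- (Strong form of the generalized Nehari–Schwarz lemma at the boundary) Let B be a maximal Blaschke product and let f ∈ 𝓑 be nonconstant with C_f ⊇ C_B. Suppose there exists a sequence (z_n) in 𝔻 with B'(z_n) ≠ 0 for all n, |z_n| → 1, and f^h(z_n)/B^h(z_n) = 1 + o((1 − |z_n|)²) as n → ∞, where f^h and B^h denote the hyperbolic derivatives. Then f = T ∘ B for some conformal automorphism T of 𝔻; in particular f is itself a maximal Blaschke product. -/

import Mathlib

open Metric Filter

/-- The order of vanishing of `f` at `z`. -/
noncomputable def vOrder (f : ℂ → ℂ) (z : ℂ) : ℕ∞ :=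
  sInf ((fun n : ℕ => (n : ℕ∞)) '' {n : ℕ | iteratedDeriv n f z ≠ 0})

/-- A (finite or infinite) Blaschke product: a holomorphic function on the open unit
disk of the form `B(z) = η z^m ∏_j (|z_j|/z_j)(z_j − z)/(1 − conj z_j · z)`, where
`|η| = 1`, `m ≥ 0`, the points `z_j ∈ 𝔻 \ {0}` satisfy the Blaschke condition
`Σ_j (1 − |z_j|) < ∞`, and the (possibly infinite) product converges. -/
def IsBlaschkeProduct (B : ℂ → ℂ) : Prop :=
  (∀ z ∈ Metric.ball (0 : ℂ) 1, DifferentiableAt ℂ B z) ∧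
  ∃ (η : ℂ) (m : ℕ) (ι : Type) (a : ι → ℂ),
    ‖η‖ = 1 ∧ (∀ j, a j ≠ 0 ∧ ‖a j‖ < 1) ∧
    Summable (fun j => 1 - ‖a j‖) ∧
    ∀ z ∈ Metric.ball (0 : ℂ) 1,
      B z = η * z ^ m *
        ∏' j, (((‖a j‖ : ℝ) : ℂ) / a j) * ((a j - z) / (1 - (starRingEnd ℂ) (a j) * z))

/-- A Blaschke product `B` is *maximal* if for every nonconstant holomorphic map `f`
of the open unit disk into the closed unit disk whose critical set contains that of
`B` (with multiplicities), one has
`|f'(z)| (1 − |B(z)|²) ≤ |B'(z)| (1 − |f(z)|²)` on the disk. -/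
def IsMaximalBlaschke (B : ℂ → ℂ) : Prop :=
  IsBlaschkeProduct B ∧
  ∀ f : ℂ → ℂ,
    (∀ z ∈ Metric.ball (0 : ℂ) 1, DifferentiableAt ℂ f z) →
    (∀ z ∈ Metric.ball (0 : ℂ) 1, ‖f z‖ ≤ 1) →
    (∃ z ∈ Metric.ball (0 : ℂ) 1, ∃ w ∈ Metric.ball (0 : ℂ) 1, f z ≠ f w) →
    (∀ z ∈ Metric.ball (0 : ℂ) 1, vOrder (deriv B) z ≤ vOrder (deriv f) z) →
    ∀ z ∈ Metric.ball (0 : ℂ) 1,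
      ‖deriv f z‖ * (1 - ‖B z‖ ^ 2) ≤ ‖deriv B z‖ * (1 - ‖f z‖ ^ 2)

/-- The hyperbolic derivative `f^h(z) = (1 − |z|²)|f'(z)|/(1 − |f(z)|²)`. -/
noncomputable def hDeriv (f : ℂ → ℂ) (z : ℂ) : ℝ :=
  (1 - ‖z‖ ^ 2) * ‖deriv f z‖ / (1 - ‖f z‖ ^ 2)

open Topology
/-- One-sided second order expansion: `φ` dominates near `z` a real part of an analytic function
plus `L * ‖w - z‖ ^ 2` up to a small error, with equality at `z`. -/
def SubLap (φ : ℂ → ℝ) (z : ℂ) (L : ℝ) : Prop :=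
  ∃ H : ℂ → ℂ, AnalyticAt ℂ H z ∧ φ z = (H z).re ∧
    ∀ ε > 0, ∀ᶠ w in 𝓝 z, (H w).re + (L - ε) * ‖w - z‖ ^ 2 ≤ φ w

lemma SubLap.mono_fun {φ ψ : ℂ → ℝ} {z : ℂ} {L : ℝ} (h : SubLap φ z L)
    (hle : ∀ᶠ w in 𝓝 z, φ w ≤ ψ w) (heq : ψ z ≤ φ z) : SubLap ψ z L := by
  obtain ⟨H, hH, h0, h1⟩ := h
  refine ⟨H, hH, ?_, fun ε hε => ?_⟩
  · rw [← h0]; exact le_antisymm heq hle.self_of_nhds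
  · filter_upwards [h1 ε hε, hle] with w h2 h3 using h2.trans h3

lemma SubLap.congr {φ ψ : ℂ → ℝ} {z : ℂ} {L : ℝ} (h : SubLap φ z L)
    (hle : ∀ᶠ w in 𝓝 z, φ w = ψ w) : SubLap ψ z L :=
  h.mono_fun (hle.mono fun _ h => h.le) hle.self_of_nhds.ge

lemma SubLap.add {φ ψ : ℂ → ℝ} {z : ℂ} {L M : ℝ} (h : SubLap φ z L) (h' : SubLap ψ z M) :
    SubLap (fun w => φ w + ψ w) z (L + M) := by
  obtain ⟨H, hH, h0, h1⟩ := h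
  obtain ⟨K, hK, k0, k1⟩ := h'
  refine ⟨fun w => H w + K w, hH.add hK, by simp [h0, k0], fun ε hε => ?_⟩
  filter_upwards [h1 (ε / 2) (by positivity), k1 (ε / 2) (by positivity)] with w h2 h3
  simp only [Complex.add_re]
  nlinarith

lemma SubLap.re {H : ℂ → ℂ} {z : ℂ} (hH : AnalyticAt ℂ H z) :
    SubLap (fun w => (H w).re) z 0 :=
  ⟨H, hH, rfl, fun ε hε => Eventually.of_forall fun w => by nlinarith [sq_nonneg ‖w - z‖]⟩

lemma SubLap.const (c : ℝ) (z : ℂ) : SubLap (fun _ => c) z 0 := by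
  simpa using SubLap.re (H := fun _ => (c : ℂ)) (z := z) analyticAt_const

lemma SubLap.log_norm {h : ℂ → ℂ} {z : ℂ} (hh : AnalyticAt ℂ h z) (h0 : h z ≠ 0) (c : ℝ) :
    SubLap (fun w => c * Real.log ‖h w‖) z 0 := by
  have hA : AnalyticAt ℂ (fun w => (c : ℂ) * (Complex.log (h w / h z) + (Real.log ‖h z‖ : ℝ))) z := by
    refine analyticAt_const.mul (AnalyticAt.add (AnalyticAt.clog (hh.div analyticAt_const h0) ?_)
      analyticAt_const)
    rw [div_self h0]; exact Complex.one_mem_slitPlane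
  refine (SubLap.re hA).congr ?_
  filter_upwards [hh.continuousAt.eventually_ne h0] with w hw
  rw [Complex.re_ofReal_mul, Complex.add_re, Complex.log_re, Complex.ofReal_re, norm_div,
    Real.log_div (norm_ne_zero_iff.2 hw) (norm_ne_zero_iff.2 h0)]
  ring

lemma SubLap.le_zero {φ : ℂ → ℝ} {z : ℂ} {L : ℝ} (h : SubLap φ z L) (hm : IsLocalMax φ z) :
    L ≤ 0 := by
  by_contra! hL
  obtain ⟨H, hH, h0, h1⟩ := h
  have h2 := h1 (L / 2) (by positivity)
  have h3 : IsLocalMax (fun w => ‖Complex.exp (H w)‖) z := by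
    filter_upwards [h2, hm] with w h2 h3
    simp only [Complex.norm_exp, Real.exp_le_exp]
    nlinarith [sq_nonneg ‖w - z‖]
  have hd : ∀ᶠ w in 𝓝 z, DifferentiableAt ℂ (fun w => Complex.exp (H w)) w := by
    filter_upwards [hH.eventually_analyticAt] with w hw
    exact hw.differentiableAt.cexp
  have h4 := Complex.eventually_eq_of_isLocalMax_norm hd h3
  have h5 : ∀ᶠ w in 𝓝 z, w = z := by
    filter_upwards [h2, hm, h4] with w h2 h3 h4
    have h6 : (H w).re = (H z).re := by
      have := congrArg norm h4
      simpa [Complex.norm_exp] using this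
    have h7 : ‖w - z‖ ^ 2 ≤ 0 := by
      have : (L / 2) * ‖w - z‖ ^ 2 ≤ 0 := by nlinarith
      by_contra! h8
      nlinarith [mul_pos (half_pos hL) h8]
    have h8 : ‖w - z‖ = 0 := by
      have := sq_nonneg ‖w - z‖
      exact pow_eq_zero_iff two_ne_zero |>.1 (le_antisymm h7 this)
    exact sub_eq_zero.1 (norm_eq_zero.1 h8)
  have h6 : (𝓝[≠] z) = ⊥ := by
    rw [← Filter.empty_mem_iff_bot]
    rw [mem_nhdsWithin_iff_eventually]
    filter_upwards [h5] with w hw hw'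
    exact hw' hw
  exact (NormedField.nhdsNE_neBot z).ne h6

lemma sq_expand {h : ℂ → ℂ} {z : ℂ} (hh : AnalyticAt ℂ h z) (h0 : h z = 0) {ε : ℝ} (hε : 0 < ε) :
    ∀ᶠ w in 𝓝 z, (‖deriv h z‖ ^ 2 - ε) * ‖w - z‖ ^ 2 ≤ ‖h w‖ ^ 2 ∧
      ‖h w‖ ^ 2 ≤ (‖deriv h z‖ ^ 2 + ε) * ‖w - z‖ ^ 2 := by
  have hd := hh.differentiableAt.hasDerivAt
  have h1 := hasDerivAt_iff_tendsto_slope.1 hd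
  have h2 : Tendsto (fun w => ‖slope h z w‖ ^ 2) (𝓝[≠] z) (𝓝 (‖deriv h z‖ ^ 2)) :=
    (h1.norm).pow 2
  have h3 : ∀ᶠ w in 𝓝[≠] z, ‖slope h z w‖ ^ 2 ∈ Set.Ioo (‖deriv h z‖ ^ 2 - ε) (‖deriv h z‖ ^ 2 + ε) :=
    h2.eventually (Ioo_mem_nhds (by linarith) (by linarith))
  rw [eventually_nhdsWithin_iff] at h3
  filter_upwards [h3] with w hw
  by_cases hwz : w = z
  · simp [hwz, h0]
  · have h4 := hw hwz
    have h5 : ‖h w‖ = ‖slope h z w‖ * ‖w - z‖ := by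
      rw [slope_def_field, h0, sub_zero, norm_div, div_mul_cancel₀]
      exact norm_ne_zero_iff.2 (sub_ne_zero.2 hwz)
    rw [h5, mul_pow]
    have := sq_nonneg ‖w - z‖
    exact ⟨mul_le_mul_of_nonneg_right h4.1.le this, mul_le_mul_of_nonneg_right h4.2.le this⟩

lemma SubLap.sq_norm_zero {h : ℂ → ℂ} {z : ℂ} (hh : AnalyticAt ℂ h z) (h0 : h z = 0) (c : ℝ) :
    SubLap (fun w => c * ‖h w‖ ^ 2) z (c * ‖deriv h z‖ ^ 2) := by
  refine ⟨fun _ => 0, analyticAt_const, by simp [h0], fun ε hε => ?_⟩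
  have hc : 0 < |c| + 1 := by positivity
  filter_upwards [sq_expand hh h0 (div_pos hε hc)] with w hw
  have h1 : |c| * (ε / (|c| + 1)) ≤ ε := by
    rw [mul_div_assoc', div_le_iff₀ hc]; nlinarith [abs_nonneg c]
  have h2 := sq_nonneg ‖w - z‖
  simp only [Complex.zero_re, zero_add]
  rcases le_or_gt 0 c with h3 | h3
  · rw [abs_of_nonneg h3] at *
    have := mul_le_mul_of_nonneg_left hw.1 h3
    nlinarith [mul_le_mul_of_nonneg_right h1 h2]
  · rw [abs_of_neg h3] at *
    have := mul_le_mul_of_nonneg_left hw.2 (neg_nonneg.2 h3.le)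
    nlinarith [mul_le_mul_of_nonneg_right h1 h2]

lemma SubLap.sq_norm {h : ℂ → ℂ} {z : ℂ} (hh : AnalyticAt ℂ h z) (c : ℝ) :
    SubLap (fun w => c * ‖h w‖ ^ 2) z (c * ‖deriv h z‖ ^ 2) := by
  have h1 : AnalyticAt ℂ (fun w => h w - h z) z := hh.sub analyticAt_const
  have h2 := SubLap.sq_norm_zero h1 (by simp) c
  have h3 : AnalyticAt ℂ (fun w => (c : ℂ) * (2 * (starRingEnd ℂ) (h z) * h w - (‖h z‖ ^ 2 : ℝ))) z :=
    analyticAt_const.mul ((analyticAt_const.mul hh).sub analyticAt_const)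
  have h4 := h2.add (SubLap.re h3)
  rw [deriv_sub_const, add_zero] at h4
  refine h4.congr (Eventually.of_forall fun w => ?_)
  simp only [Complex.re_ofReal_mul]
  rw [← mul_add]
  congr 1
  rw [← Complex.normSq_eq_norm_sq, ← Complex.normSq_eq_norm_sq, ← Complex.normSq_eq_norm_sq]
  simp [Complex.normSq_apply]
  ring

/-- the disk automorphism identity -/
lemma one_sub_moebius (c g : ℂ) (h : 1 - (starRingEnd ℂ) c * g ≠ 0) :
    1 - ‖(g - c) / (1 - (starRingEnd ℂ) c * g)‖ ^ 2 =
      (1 - ‖c‖ ^ 2) * (1 - ‖g‖ ^ 2) / ‖1 - (starRingEnd ℂ) c * g‖ ^ 2 := by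
  have h1 : ‖1 - (starRingEnd ℂ) c * g‖ ^ 2 ≠ 0 := by positivity
  rw [norm_div, div_pow, eq_div_iff h1, sub_mul, div_mul_cancel₀ _ h1]
  simp only [← Complex.normSq_eq_norm_sq]
  simp [Complex.normSq_apply]
  ring

lemma one_sub_ne {c g : ℂ} (hc : ‖c‖ < 1) (hg : ‖g‖ ≤ 1) : 1 - (starRingEnd ℂ) c * g ≠ 0 := by
  intro h
  have h1 : (starRingEnd ℂ) c * g = 1 := (sub_eq_zero.1 h).symm
  have h2 := congrArg norm h1
  rw [norm_mul, RCLike.norm_conj, norm_one] at h2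
  nlinarith [norm_nonneg c, norm_nonneg g]

lemma SubLap.log_one_sub {g : ℂ → ℂ} {z : ℂ} (hg : AnalyticAt ℂ g z) (h1 : ‖g z‖ < 1) (c : ℝ)
    (hc : c = 1 ∨ c = -1) :
    SubLap (fun w => c * Real.log (1 - ‖g w‖ ^ 2)) z
      (-c * (‖deriv g z‖ / (1 - ‖g z‖ ^ 2)) ^ 2) := by
  set a := g z with ha
  have hden : 1 - (starRingEnd ℂ) a * g z ≠ 0 := one_sub_ne h1 h1.le
  have hdA : AnalyticAt ℂ (fun w => 1 - (starRingEnd ℂ) a * g w) z :=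
    analyticAt_const.sub (analyticAt_const.mul hg)
  set T : ℂ → ℂ := fun w => (g w - a) / (1 - (starRingEnd ℂ) a * g w) with hT
  have hTA : AnalyticAt ℂ T z := (hg.sub analyticAt_const).div hdA hden
  have hT0 : T z = 0 := by simp [hT, ha]
  have ha2 : 0 < 1 - ‖a‖ ^ 2 := by nlinarith [norm_nonneg a]
  have hTd : ‖deriv T z‖ = ‖deriv g z‖ / (1 - ‖a‖ ^ 2) := by
    have hd : HasDerivAt T ((deriv g z * (1 - (starRingEnd ℂ) a * g z) -
        (g z - a) * (-((starRingEnd ℂ) a * deriv g z))) / (1 - (starRingEnd ℂ) a * g z) ^ 2) z := by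
      have e1 := hg.differentiableAt.hasDerivAt
      exact (e1.sub_const a).div ((e1.const_mul _).const_sub 1) hden
    rw [hd.deriv, ← ha]
    have e2 : 1 - (starRingEnd ℂ) a * a = ((1 - ‖a‖ ^ 2 : ℝ) : ℂ) := by
      rw [mul_comm, Complex.mul_conj, Complex.normSq_eq_norm_sq]; push_cast; ring
    rw [e2, sub_self, zero_mul, sub_zero, norm_div, norm_mul, norm_pow, Complex.norm_real,
      Real.norm_of_nonneg ha2.le]
    field_simp
  have key : SubLap (fun w => c * Real.log (1 - ‖T w‖ ^ 2)) z (-c * ‖deriv T z‖ ^ 2) := by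
    have hcont : ContinuousAt (fun w => ‖T w‖ ^ 2) z := (hTA.continuousAt.norm).pow 2
    have hlt : ∀ᶠ w in 𝓝 z, ‖T w‖ ^ 2 < 1 :=
      hcont.eventually_lt continuousAt_const (by simp [hT0])
    rcases hc with rfl | rfl
    · refine ⟨fun _ => 0, analyticAt_const, by simp [hT0], fun ε hε => ?_⟩
      set K := ‖deriv T z‖ ^ 2 with hK
      have hKn : 0 ≤ K := by positivity
      have hc2 : ∀ᶠ w in 𝓝 z, (K + ε / 2) < (K + ε) * (1 - ‖T w‖ ^ 2) := by
        refine continuousAt_const.eventually_lt (continuousAt_const.mul (continuousAt_const.sub hcont)) ?_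
        simp [hT0]; linarith
      filter_upwards [sq_expand hTA hT0 (half_pos hε), hlt, hc2] with w h2 h3 h4
      have h5 := Real.one_sub_inv_le_log_of_pos (sub_pos.2 h3)
      have h6 : -((K + ε) * ‖w - z‖ ^ 2) ≤ 1 - (1 - ‖T w‖ ^ 2)⁻¹ := by
        have h7 : 0 < 1 - ‖T w‖ ^ 2 := sub_pos.2 h3
        have h8 : 1 - (1 - ‖T w‖ ^ 2)⁻¹ = - (‖T w‖ ^ 2 / (1 - ‖T w‖ ^ 2)) := by
          field_simp; ring
        rw [h8, neg_le_neg_iff, div_le_iff₀ h7]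
        nlinarith [sq_nonneg ‖w - z‖, h2.2, mul_le_mul_of_nonneg_right h4.le (sq_nonneg ‖w - z‖)]
      simp only [Complex.zero_re, zero_add, one_mul]
      nlinarith
    · have := SubLap.sq_norm_zero hTA hT0 1
      simp only [one_mul, neg_neg] at this ⊢
      refine this.mono_fun ?_ (by simp [hT0])
      filter_upwards [hlt] with w hw
      have := Real.log_le_sub_one_of_pos (sub_pos.2 hw)
      linarith
  have h5 := (key.add (SubLap.log_norm hdA hden (2 * c))).add (SubLap.const (-c * Real.log (1 - ‖a‖ ^ 2)) z)
  rw [hTd, add_zero, add_zero] at h5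
  refine h5.congr ?_
  have hlt : ∀ᶠ w in 𝓝 z, ‖g w‖ < 1 := hg.continuousAt.norm.eventually_lt continuousAt_const h1
  filter_upwards [hlt, hdA.continuousAt.eventually_ne hden] with w hw hw2
  have h7 := one_sub_moebius a (g w) hw2
  simp only [hT]
  have h8 : 0 < 1 - ‖g w‖ ^ 2 := by nlinarith [norm_nonneg (g w)]
  rw [h7, Real.log_div (by positivity) (by positivity), Real.log_mul ha2.ne' h8.ne', Real.log_pow]
  push_cast; ring

/-- The disk automorphism sending `c` to `0`. -/
noncomputable def mb (c w : ℂ) : ℂ := (w - c) / (1 - (starRingEnd ℂ) c * w)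

lemma mb_one_sub {c w : ℂ} (hc : ‖c‖ < 1) (hw : ‖w‖ ≤ 1) :
    1 - ‖mb c w‖ ^ 2 = (1 - ‖c‖ ^ 2) * (1 - ‖w‖ ^ 2) / ‖1 - (starRingEnd ℂ) c * w‖ ^ 2 :=
  one_sub_moebius c w (one_sub_ne hc hw)

lemma one_sub_sq_pos {w : ℂ} (hw : ‖w‖ < 1) : 0 < 1 - ‖w‖ ^ 2 := by
  nlinarith [norm_nonneg w]

lemma mb_norm_lt {c w : ℂ} (hc : ‖c‖ < 1) (hw : ‖w‖ < 1) : ‖mb c w‖ < 1 := by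
  have h := mb_one_sub hc hw.le
  have h1 : 0 < 1 - ‖mb c w‖ ^ 2 := by
    rw [h]
    have := norm_pos_iff.2 (one_sub_ne hc hw.le)
    have := one_sub_sq_pos hc
    have := one_sub_sq_pos hw
    positivity
  nlinarith [norm_nonneg (mb c w)]

lemma mb_self (c : ℂ) : mb c c = 0 := by simp [mb]

lemma mb_zero (c : ℂ) : mb c 0 = -c := by simp [mb]

lemma mb_inv {c w : ℂ} (hc : ‖c‖ < 1) (hw : ‖w‖ < 1) : mb (-c) (mb c w) = w := by
  have h1 := one_sub_ne hc hw.le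
  have h2 : 1 - (starRingEnd ℂ) c * c ≠ 0 := one_sub_ne hc hc.le
  have h3 : 1 + (starRingEnd ℂ) c * mb c w ≠ 0 := by
    have := one_sub_ne (c := -c) (g := mb c w) (by simpa using hc) (mb_norm_lt hc hw).le
    simpa using this
  simp only [mb] at h3 ⊢
  simp only [map_neg, neg_mul, sub_neg_eq_add]
  rw [div_eq_iff h3]
  clear h3 h2
  generalize (starRingEnd ℂ) c = d at *
  have h4 : 1 - w * d ≠ 0 := by rwa [mul_comm]
  field_simp
  ring

lemma mb_hasDerivAt {c w : ℂ} (hc : ‖c‖ < 1) (hw : ‖w‖ ≤ 1) :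
    HasDerivAt (mb c) ((1 - (‖c‖ ^ 2 : ℝ)) / (1 - (starRingEnd ℂ) c * w) ^ 2) w := by
  have h1 := one_sub_ne hc hw
  have h2 : HasDerivAt (fun w => w - c) 1 w := (hasDerivAt_id w).sub_const c
  have h3 : HasDerivAt (fun w => 1 - (starRingEnd ℂ) c * w) (-((starRingEnd ℂ) c)) w := by
    simpa using ((hasDerivAt_id w).const_mul ((starRingEnd ℂ) c)).const_sub 1
  refine (h2.div h3 h1).congr_deriv ?_
  congr 1
  rw [← Complex.normSq_eq_norm_sq, Complex.normSq_eq_conj_mul_self]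
  ring

lemma mb_comp_hyp {c : ℂ} (hc : ‖c‖ < 1) {h : ℂ → ℂ} {z : ℂ} (hd : DifferentiableAt ℂ h z)
    (hz : ‖h z‖ < 1) :
    ‖deriv (fun w => mb c (h w)) z‖ / (1 - ‖mb c (h z)‖ ^ 2) = ‖deriv h z‖ / (1 - ‖h z‖ ^ 2) := by
  have h1 := (mb_hasDerivAt hc hz.le).comp z hd.hasDerivAt
  have h2 : deriv (fun w => mb c (h w)) z = _ := h1.deriv
  rw [h2, mb_one_sub hc hz.le, norm_mul, norm_div, norm_pow]
  have h3 := one_sub_sq_pos hc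
  have h5 : ‖(1 : ℂ) - (‖c‖ ^ 2 : ℝ)‖ = 1 - ‖c‖ ^ 2 := by
    rw [← Complex.ofReal_one, ← Complex.ofReal_sub, Complex.norm_real, Real.norm_of_nonneg h3.le]
  have := norm_pos_iff.2 (one_sub_ne hc hz.le)
  have := one_sub_sq_pos hz
  rw [h5]
  field_simp

lemma schwarz_pick {h : ℂ → ℂ} (hd : DifferentiableOn ℂ h (ball 0 1))
    (hlt : ∀ z ∈ ball (0:ℂ) 1, ‖h z‖ < 1) {z : ℂ} (hz : z ∈ ball (0:ℂ) 1) :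
    ‖deriv h z‖ / (1 - ‖h z‖ ^ 2) ≤ 1 / (1 - ‖z‖ ^ 2) := by
  have hz1 : ‖z‖ < 1 := by simpa using hz
  have hz1' : ‖-z‖ < 1 := by simpa using hz1
  have m1 : ∀ w ∈ ball (0:ℂ) 1, mb (-z) w ∈ ball (0:ℂ) 1 := fun w hw => by
    simpa using mb_norm_lt hz1' (by simpa using hw)
  set g : ℂ → ℂ := fun w => mb (h z) (h (mb (-z) w)) with hg
  have hda : ∀ w ∈ ball (0:ℂ) 1, DifferentiableAt ℂ h w := fun w hw =>
    hd.differentiableAt (isOpen_ball.mem_nhds hw)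
  have d1 : ∀ w ∈ ball (0:ℂ) 1, DifferentiableAt ℂ (fun w => h (mb (-z) w)) w := fun w hw =>
    (hda _ (m1 w hw)).comp w (mb_hasDerivAt hz1' (by simpa using (mem_ball_zero_iff.1 hw).le)).differentiableAt
  have d2 : DifferentiableOn ℂ g (ball 0 1) := fun w hw =>
    (DifferentiableAt.comp (g := mb (h z)) w
      (mb_hasDerivAt (hlt z hz) (hlt _ (m1 w hw)).le).differentiableAt (d1 w hw)).differentiableWithinAt
  have e0 : mb (-z) 0 = z := by simp [mb_zero]
  have g0 : g 0 = 0 := by simp [hg, e0, mb_self]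
  have h3 := Complex.norm_deriv_le_div_of_mapsTo_ball (R₁ := 1) (R₂ := 1) (c := 0) d2 (by
    intro w hw
    rw [g0]
    simpa using (mb_norm_lt (hlt z hz) (hlt _ (m1 w hw))).le) one_pos
  have h0 : (0:ℂ) ∈ ball (0:ℂ) 1 := by simp
  have e1 := mb_comp_hyp (hlt z hz) (d1 0 h0) (by rw [e0]; exact hlt z hz)
  have e2 : deriv (fun w => h (mb (-z) w)) 0 = deriv h z * (1 - (‖z‖ ^ 2 : ℝ)) := by
    have := (mb_hasDerivAt (c := -z) (w := 0) hz1' (by simp))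
    have h4 : HasDerivAt h (deriv h z) (mb (-z) 0) := by rw [e0]; exact (hda z hz).hasDerivAt
    rw [show (fun w => h (mb (-z) w)) = h ∘ mb (-z) from rfl, (h4.comp 0 this).deriv]
    simp
  rw [e2, e0, mb_self] at e1
  have hp := one_sub_sq_pos hz1
  have h5 : ‖(1 : ℂ) - (‖z‖ ^ 2 : ℝ)‖ = 1 - ‖z‖ ^ 2 := by
    rw [← Complex.ofReal_one, ← Complex.ofReal_sub, Complex.norm_real, Real.norm_of_nonneg hp.le]
  have h6 : ‖deriv g 0‖ = ‖deriv h z‖ * (1 - ‖z‖ ^ 2) / (1 - ‖h z‖ ^ 2) := by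
    rw [← h5, ← norm_mul, ← e1]; simp [hg]
  rw [h6] at h3
  rw [le_div_iff₀ hp]
  calc _ = ‖deriv h z‖ * (1 - ‖z‖ ^ 2) / (1 - ‖h z‖ ^ 2) := by ring
    _ ≤ _ := by simpa using h3

/-- The ratio of two pulled-back hyperbolic metrics. -/
noncomputable def ratE (q B f : ℂ → ℂ) (z : ℂ) : ℝ := ‖q z‖ * (1 - ‖B z‖ ^ 2) / (1 - ‖f z‖ ^ 2)

lemma ratE_contAt {q B f : ℂ → ℂ} {z : ℂ} (hq : ContinuousAt q z) (hB : ContinuousAt B z)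
    (hf : ContinuousAt f z) (hfz : ‖f z‖ < 1) : ContinuousAt (ratE q B f) z := by
  unfold ratE
  refine ContinuousAt.div ?_ ?_ (one_sub_sq_pos hfz).ne'
  · exact hq.norm.mul (continuousAt_const.sub (hB.norm.pow 2))
  · exact (continuousAt_const.sub (hf.norm.pow 2))

lemma diffOn_analyticAt {h : ℂ → ℂ} (hd : DifferentiableOn ℂ h (ball 0 1)) {z : ℂ}
    (hz : ‖z‖ < 1) : AnalyticAt ℂ h z :=
  hd.analyticAt (isOpen_ball.mem_nhds (by simpa using hz))

lemma rigidity_local {B f q : ℂ → ℂ} (hB : DifferentiableOn ℂ B (ball 0 1))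
    (hf : DifferentiableOn ℂ f (ball 0 1)) (hq : DifferentiableOn ℂ q (ball 0 1))
    (hB1 : ∀ z ∈ ball (0:ℂ) 1, ‖B z‖ < 1) (hf1 : ∀ z ∈ ball (0:ℂ) 1, ‖f z‖ < 1)
    (hfq : ∀ z ∈ ball (0:ℂ) 1, deriv f z = q z * deriv B z)
    {a z : ℂ} (ha : ‖a‖ < 1) (hz : ‖z‖ < 1) (hza : mb a z ≠ 0) {ε : ℝ} (hε : 0 < ε)
    (hE : ratE q B f z ≤ 1)
    (hpos : 1 < ratE q B f z * Real.exp (ε * (‖(mb a z)⁻¹‖ ^ 2 + ‖mb a z‖ ^ 2 - 2)))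
    (hmax : IsLocalMax (fun w => ratE q B f w *
      Real.exp (ε * (‖(mb a w)⁻¹‖ ^ 2 + ‖mb a w‖ ^ 2 - 2))) z) : False := by
  have hzD : z ∈ ball (0:ℂ) 1 := by simpa using hz
  have AB := diffOn_analyticAt hB hz
  have Af := diffOn_analyticAt hf hz
  have Aq := diffOn_analyticAt hq hz
  have pB := one_sub_sq_pos (hB1 z hzD)
  have pf := one_sub_sq_pos (hf1 z hzD)
  have pz := one_sub_sq_pos hz
  have hEpos : 0 < ratE q B f z := by
    by_contra! h
    have := mul_nonpos_of_nonpos_of_nonneg h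
      (Real.exp_pos (ε * (‖(mb a z)⁻¹‖ ^ 2 + ‖mb a z‖ ^ 2 - 2))).le
    linarith
  have hqz : q z ≠ 0 := by
    intro h; simp [ratE, h] at hEpos
  have Ab : AnalyticAt ℂ (mb a) z :=
    (analyticAt_id.sub analyticAt_const).div (analyticAt_const.sub (analyticAt_const.mul analyticAt_id))
      (one_sub_ne ha hz.le)
  have S := ((((SubLap.log_norm Aq hqz 1).add (SubLap.log_one_sub AB (hB1 z hzD) 1 (Or.inl rfl))).add
    (SubLap.log_one_sub Af (hf1 z hzD) (-1) (Or.inr rfl))).add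
    (SubLap.sq_norm (Ab.inv hza) ε)).add (SubLap.sq_norm Ab ε)
  have hD := (isOpen_ball (x := (0:ℂ)) (ε := 1)).mem_nhds hzD
  have key : ∀ᶠ w in 𝓝 z, Real.log (ratE q B f w *
      Real.exp (ε * (‖(mb a w)⁻¹‖ ^ 2 + ‖mb a w‖ ^ 2 - 2))) + 2 * ε =
      1 * Real.log ‖q w‖ + 1 * Real.log (1 - ‖B w‖ ^ 2) + -1 * Real.log (1 - ‖f w‖ ^ 2) +
        ε * ‖(mb a)⁻¹ w‖ ^ 2 + ε * ‖mb a w‖ ^ 2 := by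
    filter_upwards [hD, Aq.continuousAt.eventually_ne hqz] with w hw hqw
    have pB := one_sub_sq_pos (hB1 w hw)
    have pf := one_sub_sq_pos (hf1 w hw)
    have := norm_pos_iff.2 hqw
    rw [Real.log_mul (by unfold ratE; positivity) (by positivity), Real.log_exp, ratE,
      Real.log_div (by positivity) (by positivity), Real.log_mul (by positivity) (by positivity)]
    simp only [Pi.inv_apply]
    ring
  have hle := SubLap.le_zero S (by
    have h0 := key.self_of_nhds
    filter_upwards [key, hmax, hD, Aq.continuousAt.eventually_ne hqz] with w h1 h2 hw hqw
    rw [← h1, ← h0]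
    have pB := one_sub_sq_pos (hB1 w hw)
    have pf := one_sub_sq_pos (hf1 w hw)
    have := norm_pos_iff.2 hqw
    gcongr
    unfold ratE; positivity)
  set E := ratE q B f z with hEdef
  set lB := ‖deriv B z‖ / (1 - ‖B z‖ ^ 2) with hlB
  have e1 : ‖deriv f z‖ / (1 - ‖f z‖ ^ 2) = E * lB := by
    rw [hfq z hzD, norm_mul, hEdef, ratE, hlB]; field_simp
  set x := ‖mb a z‖ ^ 2 with hx
  set m := 1 / (1 - ‖z‖ ^ 2) with hm
  have hmpos : 0 < m := by positivity
  have hx0 : 0 < x := by have := norm_pos_iff.2 hza; positivity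
  have hx1 : x < 1 := by have := one_sub_sq_pos (mb_norm_lt ha hz); linarith
  have e2 : ‖deriv (mb a) z‖ = (1 - x) * m := by
    have := mb_comp_hyp ha (differentiableAt_id (x := z) (𝕜 := ℂ)) hz
    simp only [id] at this
    rw [deriv_id, norm_one, ← hx, ← hm] at this
    rw [div_eq_iff (by linarith)] at this
    rw [this]; ring
  have e3 : ‖deriv ((mb a)⁻¹) z‖ = (1 - x) * m / x := by
    rw [(Ab.differentiableAt.hasDerivAt.inv hza).deriv, norm_div, norm_neg, e2, norm_pow]
  have e4 : ‖(mb a z)⁻¹‖ ^ 2 = 1 / x := by rw [norm_inv, hx]; simp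
  have hlBm : lB ≤ m := schwarz_pick hB hB1 hzD
  have hlB0 : 0 ≤ lB := by positivity
  rw [e1, e2, e3] at hle
  rw [e4] at hpos
  have hlog : 0 < Real.log E + ε * (1 / x + x - 2) := by
    have := Real.log_pos hpos
    rwa [Real.log_mul hEpos.ne' (by positivity), Real.log_exp] at this
  have hlogE : Real.log E ≤ 0 := Real.log_nonpos hEpos.le hE
  have hE2 : 1 + 2 * Real.log E ≤ E ^ 2 := by
    have h1 : E ^ 2 = Real.exp (2 * Real.log E) := by
      rw [mul_comm, Real.exp_mul, Real.exp_log hEpos]; norm_num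
    rw [h1]; linarith [Real.add_one_le_exp (2 * Real.log E)]
  have h1 : lB ^ 2 * (2 * Real.log E) ≤ lB ^ 2 * (E ^ 2 - 1) :=
    mul_le_mul_of_nonneg_left (by linarith) (sq_nonneg _)
  have h2 : m ^ 2 * (2 * Real.log E) ≤ lB ^ 2 * (2 * Real.log E) :=
    mul_le_mul_of_nonpos_right (by gcongr) (by linarith)
  have h3 : m ^ 2 * (2 * (-(ε * (1 / x + x - 2)))) < m ^ 2 * (2 * Real.log E) := by
    apply mul_lt_mul_of_pos_left (by linarith) (by positivity)
  have h4 : ε * ((1 - x) * m / x) ^ 2 + ε * ((1 - x) * m) ^ 2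
      - m ^ 2 * (2 * (ε * (1 / x + x - 2))) = ε * m ^ 2 * ((1 - x) ^ 2 / x) ^ 2 := by
    field_simp; ring
  have h5 : 0 ≤ ε * m ^ 2 * ((1 - x) ^ 2 / x) ^ 2 := by positivity
  nlinarith

lemma mb_one_sub_bounds {a z : ℂ} (ha : ‖a‖ < 1) (hz : ‖z‖ < 1) :
    (1 - ‖a‖ ^ 2) / 4 * (1 - ‖z‖ ^ 2) ≤ 1 - ‖mb a z‖ ^ 2 ∧
    1 - ‖mb a z‖ ^ 2 ≤ (1 - ‖z‖ ^ 2) / (1 - ‖a‖) ^ 2 := by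
  rw [mb_one_sub ha hz.le]
  have pa := one_sub_sq_pos ha
  have pz := one_sub_sq_pos hz
  have h0 := norm_pos_iff.2 (one_sub_ne ha hz.le)
  have hprod : ‖(starRingEnd ℂ) a * z‖ ≤ ‖a‖ := by
    rw [norm_mul, RCLike.norm_conj]; nlinarith [norm_nonneg a, norm_nonneg z]
  have h1 : ‖1 - (starRingEnd ℂ) a * z‖ ≤ 2 := by
    have := norm_sub_le (1:ℂ) ((starRingEnd ℂ) a * z)
    rw [norm_one] at this; linarith
  have h2 : 1 - ‖a‖ ≤ ‖1 - (starRingEnd ℂ) a * z‖ := by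
    have := norm_sub_norm_le (1:ℂ) ((starRingEnd ℂ) a * z)
    rw [norm_one] at this; linarith
  have h3 : 0 < 1 - ‖a‖ := by linarith
  constructor
  · rw [le_div_iff₀ (by positivity)]
    have : ‖1 - (starRingEnd ℂ) a * z‖ ^ 2 ≤ 4 := by nlinarith
    nlinarith [mul_pos pa pz]
  · apply div_le_div₀ pz.le _ (by positivity) (by gcongr)
    nlinarith [norm_nonneg a]

lemma rigidity {B f q : ℂ → ℂ} (hB : DifferentiableOn ℂ B (ball 0 1))
    (hf : DifferentiableOn ℂ f (ball 0 1)) (hq : DifferentiableOn ℂ q (ball 0 1))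
    (hB1 : ∀ z ∈ ball (0:ℂ) 1, ‖B z‖ < 1) (hf1 : ∀ z ∈ ball (0:ℂ) 1, ‖f z‖ < 1)
    (hfq : ∀ z ∈ ball (0:ℂ) 1, deriv f z = q z * deriv B z)
    (hE : ∀ z ∈ ball (0:ℂ) 1, ratE q B f z ≤ 1) {a : ℂ} (ha : ‖a‖ < 1)
    (hEa : ratE q B f a < 1) :
    ∃ ε > 0, ∀ z ∈ ball (0:ℂ) 1, ratE q B f z ≤ Real.exp (-(ε * (1 - ‖z‖) ^ 2)) := by
  have haD : a ∈ ball (0:ℂ) 1 := by simpa using ha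
  have cE : ∀ z ∈ ball (0:ℂ) 1, ContinuousAt (ratE q B f) z := fun z hz => by
    have hz' : ‖z‖ < 1 := by simpa using hz
    exact ratE_contAt (diffOn_analyticAt hq hz').continuousAt (diffOn_analyticAt hB hz').continuousAt
      (diffOn_analyticAt hf hz').continuousAt (hf1 z hz)
  set δ := (1 - ratE q B f a) / 2 with hδ
  have hδ0 : 0 < δ := by linarith
  have h1 : ∀ᶠ w in 𝓝 a, ratE q B f w < 1 - δ :=
    (cE a haD).eventually_lt_const (by linarith)
  obtain ⟨r, hr0, hr⟩ := Metric.eventually_nhds_iff.1 h1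
  set r0 := min (r / 3) (1 / 2) with hr0def
  have hr0pos : 0 < r0 := by positivity
  have hr0lt : r0 < 1 := lt_of_le_of_lt (min_le_right _ _) (by norm_num)
  have hsmall : ∀ z ∈ ball (0:ℂ) 1, ‖mb a z‖ ≤ r0 → ratE q B f z < 1 - δ := by
    intro z hz hb
    have hz' : ‖z‖ < 1 := by simpa using hz
    apply hr
    rw [dist_eq_norm]
    have e : z - a = mb a z * (1 - (starRingEnd ℂ) a * z) := by
      rw [mb, div_mul_cancel₀ _ (one_sub_ne ha hz'.le)]
    rw [e, norm_mul]
    have : ‖1 - (starRingEnd ℂ) a * z‖ ≤ 2 := by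
      have := norm_sub_le (1:ℂ) ((starRingEnd ℂ) a * z)
      rw [norm_one, norm_mul, RCLike.norm_conj] at this
      nlinarith [norm_nonneg a, norm_nonneg z]
    have h3 : r0 ≤ r / 3 := min_le_left _ _
    calc _ ≤ r0 * 2 := by gcongr
      _ < r := by linarith
  set v0 := (1 - r0 ^ 2) ^ 2 / r0 ^ 2 with hv0
  have hv0pos : 0 < v0 := by
    have : 0 < 1 - r0 ^ 2 := by nlinarith
    positivity
  set ε := δ / v0 with hεdef
  have hε : 0 < ε := by positivity
  have vform : ∀ z : ℂ, mb a z ≠ 0 → ‖(mb a z)⁻¹‖ ^ 2 + ‖mb a z‖ ^ 2 - 2 =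
      (1 - ‖mb a z‖ ^ 2) ^ 2 / ‖mb a z‖ ^ 2 := fun z h => by
    rw [norm_inv]; field_simp; ring
  have hδexp : 1 - δ ≤ Real.exp (-δ) := by linarith [Real.add_one_le_exp (-δ)]
  have Ab : ∀ z : ℂ, ‖z‖ < 1 → ContinuousAt (mb a) z := fun z hz =>
    (mb_hasDerivAt ha hz.le).continuousAt
  have main : ∀ z ∈ ball (0:ℂ) 1, r0 ≤ ‖mb a z‖ →
      ratE q B f z * Real.exp (ε * (‖(mb a z)⁻¹‖ ^ 2 + ‖mb a z‖ ^ 2 - 2)) ≤ 1 := by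
    intro z1 hz1 hb1
    by_contra! hcon
    have hz1' : ‖z1‖ < 1 := by simpa using hz1
    set Φ : ℂ → ℝ := fun w => ratE q B f w * Real.exp (ε * (‖(mb a w)⁻¹‖ ^ 2 + ‖mb a w‖ ^ 2 - 2)) with hΦ
    have hfar : ∃ R < 1, ∀ z : ℂ, R ≤ ‖z‖ → ‖z‖ < 1 → r0 ≤ ‖mb a z‖ → Φ z < Φ z1 := by
      have ht : Tendsto (fun t : ℝ => Real.exp (ε * (((1 - t ^ 2) / (1 - ‖a‖) ^ 2) ^ 2 / r0 ^ 2))) (𝓝 1) (𝓝 1) := by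
        have : ContinuousAt (fun t : ℝ => Real.exp (ε * (((1 - t ^ 2) / (1 - ‖a‖) ^ 2) ^ 2 / r0 ^ 2))) 1 := by
          fun_prop
        simpa [ContinuousAt] using this
      have he := ht.eventually_lt_const hcon
      obtain ⟨s, hs0, hs⟩ := Metric.eventually_nhds_iff.1 he
      refine ⟨1 - s / 2, by linarith, fun z hz hz' hb => ?_⟩
      have h4 := hs (y := ‖z‖) (by rw [Real.dist_eq, abs_lt]; constructor <;> linarith)
      refine lt_of_le_of_lt ?_ h4
      have hb0 : mb a z ≠ 0 := norm_pos_iff.1 (hr0pos.trans_le hb)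
      have h5 := (mb_one_sub_bounds ha hz').2
      have h6 := one_sub_sq_pos (mb_norm_lt ha hz')
      simp only [hΦ]
      rw [vform z hb0]
      refine (mul_le_of_le_one_left (Real.exp_pos _).le (hE z (by simpa using hz'))).trans ?_
      gcongr
    obtain ⟨R, hR1, hR⟩ := hfar
    have hR1' : ‖z1‖ < R := by
      by_contra! h
      exact lt_irrefl _ (hR z1 h hz1' hb1)
    have cmb : ContinuousOn (mb a) (closedBall 0 R) := fun z hz =>
      (Ab z (lt_of_le_of_lt (by simpa using hz) hR1)).continuousWithinAt
    have hK : IsCompact (closedBall (0:ℂ) R ∩ (fun z => ‖mb a z‖) ⁻¹' Set.Ici r0) := by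
      apply (isCompact_closedBall (0:ℂ) R).of_isClosed_subset _ Set.inter_subset_left
      exact cmb.norm.preimage_isClosed_of_isClosed isClosed_closedBall isClosed_Ici
    obtain ⟨z2, ⟨hz2R, hz2b⟩, hz2max⟩ := hK.exists_isMaxOn ⟨z1, by simpa using hR1'.le, hb1⟩
      (f := Φ) (by
        intro z hz
        have hz' : ‖z‖ < 1 := lt_of_le_of_lt (by simpa using hz.1) hR1
        have hb0 : mb a z ≠ 0 := norm_pos_iff.1 (hr0pos.trans_le hz.2)
        refine ContinuousAt.continuousWithinAt ?_
        refine (cE z (by simpa using hz')).mul ?_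
        refine Real.continuous_exp.continuousAt.comp (continuousAt_const.mul ?_)
        exact ((((Ab z hz').inv₀ hb0).norm.pow 2).add ((Ab z hz').norm.pow 2)).sub continuousAt_const)
    have hz2' : ‖z2‖ < 1 := lt_of_le_of_lt (by simpa using hz2R) hR1
    have hz2b' : r0 ≤ ‖mb a z2‖ := hz2b
    have h12 : Φ z1 ≤ Φ z2 := hz2max ⟨by simpa using hR1'.le, hb1⟩
    have hz2lt : ‖z2‖ < R := by
      by_contra! h
      exact lt_irrefl _ (h12.trans_lt (hR z2 h hz2' hz2b))
    have hb0 : mb a z2 ≠ 0 := norm_pos_iff.1 (hr0pos.trans_le hz2b')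
    have hb2 : r0 < ‖mb a z2‖ := by
      rcases hz2b'.lt_or_eq with h | h
      · exact h
      exfalso
      have h7 := hsmall z2 (by simpa using hz2') h.ge
      have h8 : Φ z2 ≤ 1 := by
        simp only [hΦ]
        rw [vform z2 hb0, ← h, ← hv0, hεdef, div_mul_cancel₀ _ hv0pos.ne']
        calc _ ≤ Real.exp (-δ) * Real.exp δ := by gcongr; linarith
          _ = 1 := by rw [← Real.exp_add]; simp
      linarith
    refine rigidity_local hB hf hq hB1 hf1 hfq ha hz2' hb0 hε (hE z2 (by simpa using hz2'))
      (hcon.trans_le h12) ?_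
    have n1 : ∀ᶠ w in 𝓝 z2, ‖w‖ < R := continuous_norm.continuousAt.eventually_lt_const hz2lt
    have n2 : ∀ᶠ w in 𝓝 z2, r0 < ‖mb a w‖ := (Ab z2 hz2').norm.eventually_const_lt hb2
    filter_upwards [n1, n2] with w h3 h4
    exact hz2max ⟨by simpa using h3.le, h4.le⟩
  set c0 := (1 - ‖a‖ ^ 2) / 4 with hc0
  have hc0pos : 0 < c0 := by have := one_sub_sq_pos ha; positivity
  refine ⟨min δ (ε * c0 ^ 2), by positivity, fun z hz => ?_⟩
  have hz' : ‖z‖ < 1 := by simpa using hz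
  have hz0 := norm_nonneg z
  rcases le_total ‖mb a z‖ r0 with h | h
  · refine (hsmall z hz h).le.trans (hδexp.trans ?_)
    gcongr
    have : (1 - ‖z‖) ^ 2 ≤ 1 := by nlinarith
    calc _ ≤ δ * 1 := by gcongr; exact min_le_left _ _
      _ = δ := mul_one _
  · have hm := main z hz h
    have hb0 : mb a z ≠ 0 := norm_pos_iff.1 (hr0pos.trans_le h)
    rw [← le_div_iff₀ (Real.exp_pos _), one_div, ← Real.exp_neg] at hm
    refine hm.trans ?_
    apply Real.exp_le_exp.2
    apply neg_le_neg
    rw [vform z hb0]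
    have h5 := (mb_one_sub_bounds ha hz').1
    have h6 := one_sub_sq_pos (mb_norm_lt ha hz')
    have h7 : c0 * (1 - ‖z‖) ≤ 1 - ‖mb a z‖ ^ 2 := by
      refine le_trans ?_ h5
      gcongr; nlinarith
    have h8 : 0 < ‖mb a z‖ ^ 2 := by have := norm_pos_iff.2 hb0; positivity
    have h9 : (1 - ‖mb a z‖ ^ 2) ^ 2 ≤ (1 - ‖mb a z‖ ^ 2) ^ 2 / ‖mb a z‖ ^ 2 := by
      rw [le_div_iff₀ h8]; nlinarith [sq_nonneg (1 - ‖mb a z‖ ^ 2)]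
    have h10 : (c0 * (1 - ‖z‖)) ^ 2 ≤ (1 - ‖mb a z‖ ^ 2) ^ 2 := by
      have : 0 ≤ 1 - ‖z‖ := by linarith
      gcongr
    calc _ ≤ ε * c0 ^ 2 * (1 - ‖z‖) ^ 2 := by gcongr; exact min_le_right _ _
      _ = ε * (c0 * (1 - ‖z‖)) ^ 2 := by ring
      _ ≤ _ := by gcongr; exact h10.trans h9

lemma vOrder_eq {g : ℂ → ℂ} {z : ℂ} (hg : AnalyticAt ℂ g z) : vOrder g z = analyticOrderAt g z := by
  refine ENat.eq_of_forall_natCast_le_iff fun n => ?_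
  rw [natCast_le_analyticOrderAt_iff_iteratedDeriv_eq_zero hg, vOrder, le_sInf_iff]
  constructor
  · intro h i hi
    by_contra hne
    have := h i ⟨i, hne, rfl⟩
    have : n ≤ i := by exact_mod_cast this
    omega
  · rintro h _ ⟨i, hi, rfl⟩
    by_contra! hlt
    exact hi (h i (by exact_mod_cast hlt))

lemma deriv_diffOn {h : ℂ → ℂ} (hd : DifferentiableOn ℂ h (ball 0 1)) :
    DifferentiableOn ℂ (deriv h) (ball 0 1) := hd.deriv isOpen_ball

lemma ball_preconn : IsPreconnected (ball (0:ℂ) 1) := (convex_ball (0:ℂ) 1).isPreconnected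

lemma order_ne_top {u : ℂ → ℂ} (hu : DifferentiableOn ℂ u (ball 0 1))
    (hnz : ∃ z ∈ ball (0:ℂ) 1, u z ≠ 0) {z : ℂ} (hz : z ∈ ball (0:ℂ) 1) :
    analyticOrderAt u z ≠ ⊤ := by
  obtain ⟨x, hx, hxu⟩ := hnz
  refine AnalyticOnNhd.analyticOrderAt_ne_top_of_isPreconnected (hu.analyticOnNhd isOpen_ball)
    ball_preconn hx hz ?_
  rw [analyticOrderAt_eq_zero.2 (Or.inr hxu)]; simp

lemma eventually_ne_zero {u : ℂ → ℂ} (hu : DifferentiableOn ℂ u (ball 0 1))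
    (hnz : ∃ z ∈ ball (0:ℂ) 1, u z ≠ 0) {z : ℂ} (hz : z ∈ ball (0:ℂ) 1) :
    ∀ᶠ w in 𝓝[≠] z, u w ≠ 0 := by
  have h := order_ne_top hu hnz hz
  rcases (hu.analyticAt (isOpen_ball.mem_nhds hz)).eventually_eq_zero_or_eventually_ne_zero with h1 | h1
  · exact absurd (analyticOrderAt_eq_top.2 h1) h
  · exact h1

lemma exists_div {u v : ℂ → ℂ} (hu : DifferentiableOn ℂ u (ball 0 1))
    (hv : DifferentiableOn ℂ v (ball 0 1)) (hnz : ∃ z ∈ ball (0:ℂ) 1, v z ≠ 0)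
    (hord : ∀ z ∈ ball (0:ℂ) 1, analyticOrderAt v z ≤ analyticOrderAt u z) :
    ∃ q : ℂ → ℂ, DifferentiableOn ℂ q (ball 0 1) ∧ ∀ z ∈ ball (0:ℂ) 1, u z = q z * v z := by
  set q : ℂ → ℂ := fun z => limUnder (𝓝[≠] z) (fun w => u w / v w) with hq
  have key : ∀ z ∈ ball (0:ℂ) 1, ∃ k : ℂ → ℂ, AnalyticAt ℂ k z ∧
      (∀ᶠ w in 𝓝 z, q w = k w) ∧ u z = k z * v z := by
    intro z hz
    have au := hu.analyticAt (isOpen_ball.mem_nhds hz)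
    have av := hv.analyticAt (isOpen_ball.mem_nhds hz)
    have hvt := order_ne_top hv hnz hz
    obtain ⟨g, hg, hg0, hgv⟩ := av.analyticOrderAt_ne_top.1 hvt
    have hle := hord z hz
    rw [← Nat.cast_analyticOrderNatAt hvt] at hle
    obtain ⟨h, hh, hhu⟩ := (natCast_le_analyticOrderAt au).1 hle
    refine ⟨fun w => h w / g w, hh.div hg hg0, ?_, ?_⟩
    · have hgne := hg.continuousAt.eventually_ne hg0
      have hk := (hh.div hg hg0).eventually_analyticAt
      have hall := (hgv.and (hhu.and hgne)).eventually_nhds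
      filter_upwards [hall, hk] with w hw hkw
      simp only [hq]
      apply Tendsto.limUnder_eq
      have h1 : Tendsto (fun w => h w / g w) (𝓝[≠] w) (𝓝 (h w / g w)) :=
        hkw.continuousAt.tendsto.mono_left nhdsWithin_le_nhds
      refine h1.congr' ?_
      by_cases hwz : w = z
      · subst hwz
        filter_upwards [hw.filter_mono nhdsWithin_le_nhds, self_mem_nhdsWithin] with y hy hne
        have : y - w ≠ 0 := sub_ne_zero.2 hne
        rw [hy.1, hy.2.1, smul_eq_mul, smul_eq_mul, mul_div_mul_left _ _ (pow_ne_zero _ this)]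
      · have hne' : ∀ᶠ y in 𝓝 w, y ≠ z := eventually_ne_nhds hwz
        filter_upwards [hw.filter_mono nhdsWithin_le_nhds, hne'.filter_mono nhdsWithin_le_nhds] with y hy hne
        have : y - z ≠ 0 := sub_ne_zero.2 hne
        rw [hy.1, hy.2.1, smul_eq_mul, smul_eq_mul, mul_div_mul_left _ _ (pow_ne_zero _ this)]
    · rw [hgv.self_of_nhds, hhu.self_of_nhds]
      simp only [smul_eq_mul]
      field_simp
  refine ⟨q, fun z hz => ?_, fun z hz => ?_⟩
  · obtain ⟨k, hk, he, -⟩ := key z hz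
    exact (hk.differentiableAt.congr_of_eventuallyEq he).differentiableWithinAt
  · obtain ⟨k, hk, he, h3⟩ := key z hz
    rw [he.self_of_nhds]; exact h3

lemma order_le_of_mul {u v q : ℂ → ℂ} (hv : DifferentiableOn ℂ v (ball 0 1))
    (hq : DifferentiableOn ℂ q (ball 0 1)) (h : ∀ z ∈ ball (0:ℂ) 1, u z = q z * v z)
    {z : ℂ} (hz : z ∈ ball (0:ℂ) 1) : analyticOrderAt v z ≤ analyticOrderAt u z := by
  have e : u =ᶠ[𝓝 z] q * v := by
    filter_upwards [isOpen_ball.mem_nhds hz] with w hw using h w hw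
  rw [analyticOrderAt_congr e, analyticOrderAt_mul (hq.analyticAt (isOpen_ball.mem_nhds hz))
    (hv.analyticAt (isOpen_ball.mem_nhds hz))]
  exact le_add_self

/-- Maximality expressed with quotients. -/
def MaxP (F : ℂ → ℂ) : Prop :=
  DifferentiableOn ℂ F (ball 0 1) ∧ (∀ z ∈ ball (0:ℂ) 1, ‖F z‖ < 1) ∧
  (∃ z ∈ ball (0:ℂ) 1, deriv F z ≠ 0) ∧
  ∀ h q : ℂ → ℂ, DifferentiableOn ℂ h (ball 0 1) → DifferentiableOn ℂ q (ball 0 1) →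
    (∀ z ∈ ball (0:ℂ) 1, ‖h z‖ < 1) → (∀ z ∈ ball (0:ℂ) 1, deriv h z = q z * deriv F z) →
    ∀ z ∈ ball (0:ℂ) 1, ratE q F h z ≤ 1

lemma norm_lt_of_nonconst {h : ℂ → ℂ} (hd : DifferentiableOn ℂ h (ball 0 1))
    (hle : ∀ z ∈ ball (0:ℂ) 1, ‖h z‖ ≤ 1)
    (hnc : ∃ z ∈ ball (0:ℂ) 1, ∃ w ∈ ball (0:ℂ) 1, h z ≠ h w) :
    ∀ z ∈ ball (0:ℂ) 1, ‖h z‖ < 1 := by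
  intro z hz
  by_contra! hge
  have hmax : IsMaxOn (norm ∘ h) (ball (0:ℂ) 1) z := fun w hw => (hle w hw).trans hge
  have := Complex.eqOn_of_isPreconnected_of_isMaxOn_norm ball_preconn isOpen_ball hd hz hmax
  obtain ⟨x, hx, y, hy, hxy⟩ := hnc
  exact hxy ((this hx).trans (this hy).symm)

lemma nonconst_of_deriv {h : ℂ → ℂ} {z : ℂ} (hz : z ∈ ball (0:ℂ) 1) (hd : deriv h z ≠ 0) :
    ∃ z ∈ ball (0:ℂ) 1, ∃ w ∈ ball (0:ℂ) 1, h z ≠ h w := by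
  by_contra! hc
  apply hd
  have : h =ᶠ[𝓝 z] fun _ => h z := by
    filter_upwards [isOpen_ball.mem_nhds hz] with w hw using hc w hw z hz
  rw [this.deriv_eq]; simp

lemma exists_deriv_ne {h : ℂ → ℂ} (hd : DifferentiableOn ℂ h (ball 0 1))
    (hnc : ∃ z ∈ ball (0:ℂ) 1, ∃ w ∈ ball (0:ℂ) 1, h z ≠ h w) :
    ∃ z ∈ ball (0:ℂ) 1, deriv h z ≠ 0 := by
  by_contra! hc
  obtain ⟨x, hx, y, hy, hxy⟩ := hnc
  exact hxy (isOpen_ball.is_const_of_deriv_eq_zero ball_preconn hd hc hx hy)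

lemma maxP_of_maximal {B : ℂ → ℂ} (hB : IsMaximalBlaschke B) (hle : ∀ z ∈ ball (0:ℂ) 1, ‖B z‖ ≤ 1)
    (hnz : ∃ z ∈ ball (0:ℂ) 1, deriv B z ≠ 0) : MaxP B := by
  have hd : DifferentiableOn ℂ B (ball 0 1) := fun z hz => (hB.1.1 z hz).differentiableWithinAt
  have hlt : ∀ z ∈ ball (0:ℂ) 1, ‖B z‖ < 1 := by
    obtain ⟨z, hz, h⟩ := hnz
    exact norm_lt_of_nonconst hd hle (nonconst_of_deriv hz h)
  refine ⟨hd, hlt, hnz, fun h q hh hq h1 hhq => ?_⟩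
  have main : ∀ z ∈ ball (0:ℂ) 1, ‖deriv h z‖ * (1 - ‖B z‖ ^ 2) ≤ ‖deriv B z‖ * (1 - ‖h z‖ ^ 2) := by
    by_cases hnc : ∃ z ∈ ball (0:ℂ) 1, ∃ w ∈ ball (0:ℂ) 1, h z ≠ h w
    · refine hB.2 h (fun z hz => hh.differentiableAt (isOpen_ball.mem_nhds hz))
        (fun z hz => (h1 z hz).le) hnc (fun z hz => ?_)
      rw [vOrder_eq ((deriv_diffOn hd).analyticAt (isOpen_ball.mem_nhds hz)),
        vOrder_eq ((deriv_diffOn hh).analyticAt (isOpen_ball.mem_nhds hz))]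
      exact order_le_of_mul (deriv_diffOn hd) hq hhq hz
    · intro z hz
      have : deriv h z = 0 := by
        by_contra h0; exact hnc (nonconst_of_deriv hz h0)
      rw [this]
      have := one_sub_sq_pos (h1 z hz)
      simp only [norm_zero, zero_mul]; positivity
  intro z hz
  have hcont : ContinuousAt (ratE q B h) z :=
    ratE_contAt (hq.differentiableAt (isOpen_ball.mem_nhds hz)).continuousAt
      (hd.differentiableAt (isOpen_ball.mem_nhds hz)).continuousAt
      (hh.differentiableAt (isOpen_ball.mem_nhds hz)).continuousAt (h1 z hz)
  refine le_of_tendsto (hcont.tendsto.mono_left nhdsWithin_le_nhds : Tendsto _ (𝓝[≠] z) _) ?_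
  filter_upwards [eventually_ne_zero (deriv_diffOn hd) hnz hz,
    (isOpen_ball.eventually_mem hz).filter_mono nhdsWithin_le_nhds] with w hw hwD
  have p1 := one_sub_sq_pos (h1 w hwD)
  have := main w hwD
  rw [hhq w hwD, norm_mul] at this
  have p2 := norm_pos_iff.2 hw
  rw [ratE, div_le_one p1]
  nlinarith

lemma maximal_of_maxP {F : ℂ → ℂ} (hF : MaxP F) (hb : IsBlaschkeProduct F) : IsMaximalBlaschke F := by
  obtain ⟨hd, hlt, hnz, hmax⟩ := hF
  refine ⟨hb, fun f hf hle hnc hord z hz => ?_⟩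
  have hfd : DifferentiableOn ℂ f (ball 0 1) := fun z hz => (hf z hz).differentiableWithinAt
  obtain ⟨q, hq, hfq⟩ := exists_div (deriv_diffOn hfd) (deriv_diffOn hd) hnz (fun z hz => by
    have := hord z hz
    rwa [vOrder_eq ((deriv_diffOn hd).analyticAt (isOpen_ball.mem_nhds hz)),
        vOrder_eq ((deriv_diffOn hfd).analyticAt (isOpen_ball.mem_nhds hz))] at this)
  have hf1 := norm_lt_of_nonconst hfd hle hnc
  have h := hmax f q hfd hq hf1 hfq z hz
  rw [ratE, div_le_one (one_sub_sq_pos (hf1 z hz))] at h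
  rw [hfq z hz, norm_mul]
  nlinarith [norm_nonneg (deriv F z)]

lemma mb_deriv_norm {c w : ℂ} (hc : ‖c‖ < 1) (hw : ‖w‖ < 1) :
    ‖deriv (mb c) w‖ * (1 - ‖w‖ ^ 2) = 1 - ‖mb c w‖ ^ 2 := by
  have := mb_comp_hyp hc (differentiableAt_id (x := w) (𝕜 := ℂ)) hw
  simp only [id] at this
  rw [deriv_id, norm_one, div_eq_div_iff (one_sub_sq_pos (mb_norm_lt hc hw)).ne' (one_sub_sq_pos hw).ne'] at this
  linarith

lemma mb_deriv_ne {c w : ℂ} (hc : ‖c‖ < 1) (hw : ‖w‖ < 1) : deriv (mb c) w ≠ 0 := by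
  intro h
  have := mb_deriv_norm hc hw
  rw [h, norm_zero, zero_mul] at this
  linarith [one_sub_sq_pos (mb_norm_lt hc hw)]

lemma mb_diffOn {c : ℂ} (hc : ‖c‖ < 1) : DifferentiableOn ℂ (mb c) (ball 0 1) := fun w hw =>
  (mb_hasDerivAt hc (by simpa using (mem_ball_zero_iff.1 hw).le)).differentiableAt.differentiableWithinAt

lemma comp_diffOn {g h : ℂ → ℂ} (hg : DifferentiableOn ℂ g (ball 0 1))
    (hh : DifferentiableOn ℂ h (ball 0 1)) (hlt : ∀ z ∈ ball (0:ℂ) 1, ‖h z‖ < 1) :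
    DifferentiableOn ℂ (fun z => g (h z)) (ball 0 1) :=
  hg.comp hh (fun z hz => by simpa using hlt z hz)

lemma comp_deriv {g h : ℂ → ℂ} (hg : DifferentiableOn ℂ g (ball 0 1))
    (hh : DifferentiableOn ℂ h (ball 0 1)) (hlt : ∀ z ∈ ball (0:ℂ) 1, ‖h z‖ < 1)
    {z : ℂ} (hz : z ∈ ball (0:ℂ) 1) :
    deriv (fun z => g (h z)) z = deriv g (h z) * deriv h z :=
  deriv_comp (h₂ := g) (h := h) z (hg.differentiableAt (isOpen_ball.mem_nhds (by simpa using hlt z hz)))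
    (hh.differentiableAt (isOpen_ball.mem_nhds hz))

lemma maxP_comp {B : ℂ → ℂ} (hB : MaxP B) {τ c : ℂ} (hτ : ‖τ‖ = 1) (hc : ‖c‖ < 1) :
    MaxP (fun z => τ * mb c (B z)) := by
  obtain ⟨hd, hlt, ⟨x, hx, hx0⟩, hmax⟩ := hB
  have d1 := comp_diffOn (mb_diffOn hc) hd hlt
  have hder : ∀ z ∈ ball (0:ℂ) 1, deriv (fun z => τ * mb c (B z)) z =
      τ * (deriv (mb c) (B z) * deriv B z) := fun z hz => by
    rw [deriv_const_mul_field, comp_deriv (mb_diffOn hc) hd hlt hz]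
  have τ0 : τ ≠ 0 := by rintro rfl; simp at hτ
  refine ⟨d1.const_mul τ, fun z hz => ?_, ⟨x, hx, ?_⟩, fun h q hh hq h1 hhq z hz => ?_⟩
  · rw [norm_mul, hτ, one_mul]; exact mb_norm_lt hc (hlt z hz)
  · rw [hder x hx]
    exact mul_ne_zero τ0 (mul_ne_zero (mb_deriv_ne hc (hlt x hx)) hx0)
  · have h2 := hmax h (fun z => q z * (τ * deriv (mb c) (B z))) hh
      (hq.mul ((comp_diffOn (deriv_diffOn (mb_diffOn hc)) hd hlt).const_mul τ)) h1
      (fun z hz => by rw [hhq z hz, hder z hz]; ring) z hz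
    rw [ratE] at h2 ⊢
    rw [norm_mul, norm_mul, hτ, one_mul, mul_assoc, mb_deriv_norm hc (hlt z hz)] at h2
    rwa [norm_mul, hτ, one_mul]

lemma rat_eq_one {B f q : ℂ → ℂ} (hB : MaxP B)
    (hf : DifferentiableOn ℂ f (ball 0 1)) (hq : DifferentiableOn ℂ q (ball 0 1))
    (hf1 : ∀ z ∈ ball (0:ℂ) 1, ‖f z‖ < 1)
    (hfq : ∀ z ∈ ball (0:ℂ) 1, deriv f z = q z * deriv B z)
    {x : ℂ} (hx : x ∈ ball (0:ℂ) 1) (h1 : ratE q B f x = 1) :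
    ∀ z ∈ ball (0:ℂ) 1, ratE q B f z = 1 := by
  intro a ha
  have hE := hB.2.2.2 f q hf hq hf1 hfq
  by_contra hne
  obtain ⟨ε, hε, h⟩ := rigidity hB.1 hf hq hB.2.1 hf1 hfq hE (by simpa using ha)
    (lt_of_le_of_ne (hE a ha) hne)
  have h2 := h x hx
  rw [h1] at h2
  have : 0 < 1 - ‖x‖ := by have : ‖x‖ < 1 := by simpa using hx
                           linarith
  have h3 : Real.exp (-(ε * (1 - ‖x‖) ^ 2)) < 1 := by
    rw [Real.exp_lt_one_iff]; nlinarith [mul_pos hε (pow_pos this 2)]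
  linarith

lemma mb_compose {c d σ : ℂ} (hc : ‖c‖ < 1) (hd : ‖d‖ < 1) (hσ : ‖σ‖ = 1) :
    ∃ τ e : ℂ, ‖τ‖ = 1 ∧ ‖e‖ < 1 ∧ ∀ w : ℂ, ‖w‖ < 1 → mb (-d) (σ * mb c w) = τ * mb e w := by
  have hcs : (starRingEnd ℂ) σ * σ = 1 := by
    rw [← Complex.normSq_eq_conj_mul_self, Complex.normSq_eq_norm_sq, hσ]; simp
  have hσ0 : σ ≠ 0 := by rintro rfl; simp at hσ
  set κ := σ - d * (starRingEnd ℂ) c with hκ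
  set k := (starRingEnd ℂ) σ * d with hk
  have hk1 : ‖k‖ < 1 := by rw [hk, norm_mul, RCLike.norm_conj, hσ, one_mul]; exact hd
  have hκe : κ = σ * (1 - k * (starRingEnd ℂ) c) := by
    rw [hκ, hk]; linear_combination (-d * (starRingEnd ℂ) c) * hcs * (-1)
  have hnk := one_sub_ne hk1 hc.le
  have hne : 1 - k * (starRingEnd ℂ) c ≠ 0 := by
    intro h
    apply hnk
    have := congrArg (starRingEnd ℂ) h
    simpa using this
  have hκ0 : κ ≠ 0 := by rw [hκe]; exact mul_ne_zero hσ0 hne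
  have hκ0' : (starRingEnd ℂ) κ ≠ 0 := by simpa using hκ0
  refine ⟨κ / (σ * (starRingEnd ℂ) κ), (σ * c - d) / κ, ?_, ?_, ?_⟩
  · rw [norm_div, norm_mul, RCLike.norm_conj, hσ, one_mul, div_self (norm_ne_zero_iff.2 hκ0)]
  · have h1 : σ * c - d = σ * (c - k) := by
      rw [hk]; linear_combination d * hcs
    rw [hκe, h1, mul_div_mul_left _ _ hσ0]
    have h2 : ‖1 - k * (starRingEnd ℂ) c‖ = ‖1 - (starRingEnd ℂ) k * c‖ := by
      rw [← RCLike.norm_conj (1 - k * (starRingEnd ℂ) c)]; simp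
    rw [norm_div, h2, ← norm_div]
    exact mb_norm_lt hk1 hc
  · intro w hw
    have n1 := one_sub_ne hc hw.le
    have n2 : 1 + (starRingEnd ℂ) d * (σ * mb c w) ≠ 0 := by
      have := one_sub_ne (c := -d) (g := σ * mb c w) (by simpa using hd)
        (by rw [norm_mul, hσ, one_mul]; exact (mb_norm_lt hc hw).le)
      simpa using this
    have e1 : (starRingEnd ℂ) κ * σ = 1 - (starRingEnd ℂ) d * c * σ := by
      rw [hκ]; simp only [map_sub, map_mul, Complex.conj_conj]; linear_combination hcs
    have e2 : (starRingEnd ℂ) (σ * c - d) * σ = (starRingEnd ℂ) c - (starRingEnd ℂ) d * σ := by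
      simp only [map_sub, map_mul]; linear_combination (starRingEnd ℂ) c * hcs
    have hm : mb c w * (1 - (starRingEnd ℂ) c * w) = w - c := by
      rw [mb, div_mul_cancel₀ _ n1]
    have n3 : (1 - (starRingEnd ℂ) d * c * σ) - ((starRingEnd ℂ) c - (starRingEnd ℂ) d * σ) * w ≠ 0 := by
      have : (1 + (starRingEnd ℂ) d * (σ * mb c w)) * (1 - (starRingEnd ℂ) c * w) =
        (1 - (starRingEnd ℂ) d * c * σ) - ((starRingEnd ℂ) c - (starRingEnd ℂ) d * σ) * w := by
        linear_combination ((starRingEnd ℂ) d * σ) * hm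
      rw [← this]; exact mul_ne_zero n2 n1
    have L : mb (-d) (σ * mb c w) = (σ * (w - c) + d * (1 - (starRingEnd ℂ) c * w)) /
        ((1 - (starRingEnd ℂ) d * c * σ) - ((starRingEnd ℂ) c - (starRingEnd ℂ) d * σ) * w) := by
      rw [mb]
      simp only [map_neg, neg_mul, sub_neg_eq_add]
      rw [div_eq_div_iff n2 n3]
      linear_combination (σ - d * (starRingEnd ℂ) d * σ) * hm
    have R : κ / (σ * (starRingEnd ℂ) κ) * mb ((σ * c - d) / κ) w = (κ * w - (σ * c - d)) /
        ((1 - (starRingEnd ℂ) d * c * σ) - ((starRingEnd ℂ) c - (starRingEnd ℂ) d * σ) * w) := by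
      rw [← e1, ← e2] at n3 ⊢
      rw [mb, map_div₀]
      have n4 : 1 - (starRingEnd ℂ) (σ * c - d) / (starRingEnd ℂ) κ * w ≠ 0 := by
        intro h
        apply n3
        field_simp at h
        linear_combination σ * h
      generalize (starRingEnd ℂ) (σ * c - d) = A at *
      generalize (starRingEnd ℂ) κ = K at *
      have n5 : K - A * w ≠ 0 := by
        intro h; apply n3; linear_combination σ * h
      rw [div_mul_div_comm, div_eq_div_iff (mul_ne_zero (mul_ne_zero hσ0 hκ0') n4) n3]
      field_simp
    rw [L, R, hκ]
    congr 1
    ring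

lemma eq_moebius {B f q : ℂ → ℂ} (hB : MaxP B)
    (hf : DifferentiableOn ℂ f (ball 0 1)) (hq : DifferentiableOn ℂ q (ball 0 1))
    (hf1 : ∀ z ∈ ball (0:ℂ) 1, ‖f z‖ < 1)
    (hfq : ∀ z ∈ ball (0:ℂ) 1, deriv f z = q z * deriv B z)
    (h1 : ∀ z ∈ ball (0:ℂ) 1, ratE q B f z = 1) :
    ∃ τ c : ℂ, ‖τ‖ = 1 ∧ ‖c‖ < 1 ∧ ∀ z ∈ ball (0:ℂ) 1, f z = τ * mb c (B z) := by
  obtain ⟨x, hx, hx0⟩ := hB.2.2.1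
  have hBx := hB.2.1 x hx
  have hfx := hf1 x hx
  have dB := mb_diffOn hBx
  have df := mb_diffOn hfx
  set Q : ℂ → ℂ := fun z => deriv (mb (f x)) (f z) * q z / deriv (mb (B x)) (B z) with hQ
  have hB0 : ∀ z ∈ ball (0:ℂ) 1, deriv (mb (B x)) (B z) ≠ 0 := fun z hz => mb_deriv_ne hBx (hB.2.1 z hz)
  have hQd : DifferentiableOn ℂ Q (ball 0 1) :=
    ((comp_diffOn (deriv_diffOn df) hf hf1).mul hq).div (comp_diffOn (deriv_diffOn dB) hB.1 hB.2.1) hB0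
  have hQn : ∀ z ∈ ball (0:ℂ) 1, ‖Q z‖ * (1 - ‖mb (B x) (B z)‖ ^ 2) = 1 - ‖mb (f x) (f z)‖ ^ 2 := by
    intro z hz
    have a1 := mb_deriv_norm hBx (hB.2.1 z hz)
    have a2 := mb_deriv_norm hfx (hf1 z hz)
    have a3 := h1 z hz
    rw [ratE, div_eq_one_iff_eq (one_sub_sq_pos (hf1 z hz)).ne'] at a3
    have a4 := norm_pos_iff.2 (hB0 z hz)
    rw [← a1, ← a2, ← a3, hQ]
    simp only [norm_div, norm_mul]
    field_simp
  have hQx : ‖Q x‖ = 1 := by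
    have := hQn x hx
    simpa [mb_self] using this
  have hQ0 : Q x ≠ 0 := by intro h; rw [h] at hQx; simp at hQx
  set σ := (Q x)⁻¹ with hσ
  have hσ1 : ‖σ‖ = 1 := by rw [hσ, norm_inv, hQx, inv_one]
  set b : ℂ → ℂ := fun z => 1 * mb (B x) (B z) with hb
  have hbM : MaxP b := maxP_comp hB norm_one hBx
  set g : ℂ → ℂ := fun z => σ * mb (f x) (f z) with hg
  have hgd : DifferentiableOn ℂ g (ball 0 1) := (comp_diffOn df hf hf1).const_mul σ
  have hgn : ∀ z, ‖g z‖ = ‖mb (f x) (f z)‖ := fun z => by rw [hg]; simp [hσ1]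
  have hbn : ∀ z, ‖b z‖ = ‖mb (B x) (B z)‖ := fun z => by rw [hb]; simp
  have hg1 : ∀ z ∈ ball (0:ℂ) 1, ‖g z‖ < 1 := fun z hz => by rw [hgn]; exact mb_norm_lt hfx (hf1 z hz)
  have hgder : ∀ z ∈ ball (0:ℂ) 1, deriv g z = σ * Q z * deriv b z := fun z hz => by
    rw [hg, hb]
    rw [deriv_const_mul_field, deriv_const_mul_field, comp_deriv df hf hf1 hz, comp_deriv dB hB.1 hB.2.1 hz,
      hfq z hz, hQ]
    have := hB0 z hz
    field_simp
  set h : ℂ → ℂ := fun z => (g z + b z) / 2 with hh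
  have hhd : DifferentiableOn ℂ h (ball 0 1) := (hgd.add hbM.1).div_const 2
  have hh1 : ∀ z ∈ ball (0:ℂ) 1, ‖h z‖ < 1 := fun z hz => by
    rw [hh]; simp only [norm_div, Complex.norm_ofNat]
    have := norm_add_le (g z) (b z)
    have := hg1 z hz
    have := hbM.2.1 z hz
    linarith
  have hhder : ∀ z ∈ ball (0:ℂ) 1, deriv h z = ((σ * Q z + 1) / 2) * deriv b z := fun z hz => by
    have e := ((hgd.differentiableAt (isOpen_ball.mem_nhds hz)).hasDerivAt.add
      (hbM.1.differentiableAt (isOpen_ball.mem_nhds hz)).hasDerivAt).div_const 2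
    rw [show h = fun z => (g + b) z / 2 from rfl, e.deriv, hgder z hz]
    ring
  have hall := rat_eq_one hbM hhd (q := fun z => (σ * Q z + 1) / 2)
    (((hQd.const_mul σ).add_const 1).div_const 2) hh1 hhder hx (by
      rw [ratE]
      have e1 : b x = 0 := by simp [hb, mb_self]
      have e2 : h x = 0 := by simp [hh, hg, hb, mb_self]
      have e3 : σ * Q x = 1 := by rw [hσ, inv_mul_cancel₀ hQ0]
      rw [e1, e2, e3]; norm_num)
  have hgb : ∀ z ∈ ball (0:ℂ) 1, g z = b z := by
    intro z hz
    have a1 := hall z hz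
    rw [ratE, div_eq_one_iff_eq (one_sub_sq_pos (hh1 z hz)).ne'] at a1
    have a2 := hQn z hz
    rw [← hgn, ← hbn] at a2
    have a3 : ‖(σ * Q z + 1) / 2‖ ≤ (‖Q z‖ + 1) / 2 := by
      simp only [norm_div, Complex.norm_ofNat]
      have := norm_add_le (σ * Q z) 1
      rw [norm_mul, hσ1, norm_one, one_mul] at this
      linarith
    have a4 : 0 ≤ 1 - ‖b z‖ ^ 2 := (one_sub_sq_pos (hbM.2.1 z hz)).le
    have a5 := mul_le_mul_of_nonneg_right a3 a4
    have a6 : ‖h z‖ ^ 2 = ‖g z + b z‖ ^ 2 / 4 := by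
      simp only [hh, norm_div, Complex.norm_ofNat, div_pow]; norm_num
    have par := parallelogram_law_with_norm ℝ (g z) (b z)
    have : ‖g z - b z‖ ^ 2 ≤ 0 := by nlinarith
    have : ‖g z - b z‖ = 0 := by nlinarith [norm_nonneg (g z - b z)]
    exact sub_eq_zero.1 (norm_eq_zero.1 this)
  obtain ⟨τ, e, hτ, he, hform⟩ := mb_compose hBx hfx (σ := Q x) hQx
  refine ⟨τ, e, hτ, he, fun z hz => ?_⟩
  rw [← hform (B z) (hB.2.1 z hz)]
  have h3 := hgb z hz
  simp only [hg, hb, one_mul] at h3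
  rw [← h3, ← mul_assoc, hσ, mul_inv_cancel₀ hQ0, one_mul, mb_inv hfx (hf1 z hz)]

lemma normal_family {ι : Type*} (U : Ultrafilter ι) (h : ι → ℂ → ℂ)
    (hev : ∀ ρ : ℝ, ρ < 1 → ∀ᶠ i in (U : Filter ι), DifferentiableOn ℂ (h i) (ball 0 ρ) ∧
      ∀ z ∈ ball (0:ℂ) ρ, ‖h i z‖ ≤ 1) :
    ∃ g : ℂ → ℂ, DifferentiableOn ℂ g (ball 0 1) ∧ (∀ z ∈ ball (0:ℂ) 1, ‖g z‖ ≤ 1) ∧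
      (∀ z ∈ ball (0:ℂ) 1, Tendsto (fun i => h i z) U (𝓝 (g z))) ∧
      ∀ n : ℕ, ∀ z ∈ ball (0:ℂ) 1,
        Tendsto (fun i => iteratedDeriv n (h i) z) U (𝓝 (iteratedDeriv n g z)) := by
  have hlim : ∀ z ∈ ball (0:ℂ) 1, ∃ y ∈ closedBall (0:ℂ) 1, Tendsto (fun i => h i z) U (𝓝 y) := by
    intro z hz
    have hz' : ‖z‖ < 1 := by simpa using hz
    obtain ⟨ρ, hρ1, hρ2⟩ := exists_between hz'
    have he : ∀ᶠ i in (U : Filter ι), h i z ∈ closedBall (0:ℂ) 1 := by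
      filter_upwards [hev ρ hρ2] with i hi
      simpa using hi.2 z (by simpa using hρ1)
    obtain ⟨y, hy, hle⟩ := (isCompact_closedBall (0:ℂ) 1).ultrafilter_le_nhds (U.map (fun i => h i z))
      (by rw [le_principal_iff]; exact he)
    exact ⟨y, hy, hle⟩
  choose! g hg1 hg2 using hlim
  have hlip : ∀ z ∈ ball (0:ℂ) 1, ∃ R > 0, ∀ᶠ i in (U : Filter ι), ∀ y ∈ ball z R,
      y ∈ ball (0:ℂ) 1 ∧ dist (h i y) (h i z) ≤ 2 / R * dist y z := by
    intro z hz
    have hz' : ‖z‖ < 1 := by simpa using hz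
    obtain ⟨ρ, hρ1, hρ2⟩ := exists_between hz'
    refine ⟨ρ - ‖z‖, by linarith, ?_⟩
    have hsub : ball z (ρ - ‖z‖) ⊆ ball 0 ρ := by
      apply ball_subset_ball'; simp
    filter_upwards [hev ρ hρ2] with i hi y hy
    refine ⟨ball_subset_ball hρ2.le (hsub hy), ?_⟩
    refine Complex.dist_le_div_mul_dist_of_mapsTo_ball (hi.1.mono hsub) (fun w hw => ?_) hy
    rw [mem_closedBall, dist_eq_norm]
    have := hi.2 w (hsub hw)
    have := hi.2 z (by simpa using hρ1)
    linarith [norm_sub_le (h i w) (h i z)]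
  have hTL : TendstoLocallyUniformlyOn h g U (ball 0 1) := by
    rw [Metric.tendstoLocallyUniformlyOn_iff]
    intro ε hε z hz
    obtain ⟨R, hR, hev2⟩ := hlip z hz
    set r := min R (ε / 4 * R / 2) with hr
    have hr0 : 0 < r := by positivity
    have hb : ∀ᶠ i in (U : Filter ι), ∀ y ∈ ball z r, dist (h i y) (h i z) ≤ ε / 4 := by
      filter_upwards [hev2] with i hi y hy
      have hyR : y ∈ ball z R := ball_subset_ball (min_le_left _ _) hy
      refine (hi y hyR).2.trans ?_
      have : dist y z ≤ ε / 4 * R / 2 := (mem_ball.1 hy).le.trans (min_le_right _ _)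
      calc _ ≤ 2 / R * (ε / 4 * R / 2) := by gcongr
        _ = ε / 4 := by field_simp
    have hgl : ∀ y ∈ ball z r ∩ ball 0 1, dist (g y) (g z) ≤ ε / 4 := by
      intro y hy
      refine le_of_tendsto ((hg2 y hy.2).dist (hg2 z hz)) ?_
      filter_upwards [hb] with i hi using hi y hy.1
    refine ⟨ball z r ∩ ball 0 1, ?_, ?_⟩
    · rw [Set.inter_comm]; exact inter_mem_nhdsWithin _ (ball_mem_nhds z hr0)
    · have h3 : ∀ᶠ i in (U : Filter ι), dist (h i z) (g z) < ε / 4 :=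
        (Metric.tendsto_nhds.1 (hg2 z hz)) _ (by positivity)
      filter_upwards [hb, h3] with i hi h3 y hy
      have a1 := hi y hy.1
      have a2 := hgl y hy
      have := dist_triangle4 (g y) (g z) (h i z) (h i y)
      rw [dist_comm (g z) (h i z), dist_comm (h i z) (h i y)] at this
      linarith
  have hD : ∀ z ∈ ball (0:ℂ) 1, ∃ ρ < 1, z ∈ ball (0:ℂ) ρ ∧ ∀ n : ℕ,
      (∀ᶠ i in (U : Filter ι), DifferentiableOn ℂ (iteratedDeriv n (h i)) (ball 0 ρ)) ∧
      TendstoLocallyUniformlyOn (fun i => iteratedDeriv n (h i)) (iteratedDeriv n g) U (ball 0 ρ) := by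
    intro z hz
    have hz' : ‖z‖ < 1 := by simpa using hz
    obtain ⟨ρ, hρ1, hρ2⟩ := exists_between hz'
    refine ⟨ρ, hρ2, by simpa using hρ1, fun n => ?_⟩
    induction n with
    | zero =>
      simp only [iteratedDeriv_zero]
      exact ⟨(hev ρ hρ2).mono fun i hi => hi.1, hTL.mono (ball_subset_ball hρ2.le)⟩
    | succ n ih =>
      simp only [iteratedDeriv_succ]
      exact ⟨ih.1.mono fun i hi => hi.deriv isOpen_ball, ih.2.deriv ih.1 isOpen_ball⟩
  refine ⟨g, fun z hz => ?_, fun z hz => by simpa using hg1 z hz, hg2, fun n z hz => ?_⟩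
  · obtain ⟨ρ, hρ, hzρ, hn⟩ := hD z hz
    have := (hn 0).2.differentiableOn (hn 0).1 isOpen_ball
    simp only [iteratedDeriv_zero] at this
    exact (this.differentiableAt (isOpen_ball.mem_nhds hzρ)).differentiableWithinAt
  · obtain ⟨ρ, hρ, hzρ, hn⟩ := hD z hz
    exact (hn n).2.tendsto_at hzρ

/-- A Blaschke factor. -/
noncomputable def bf (a z : ℂ) : ℂ :=
  (((‖a‖ : ℝ) : ℂ) / a) * ((a - z) / (1 - (starRingEnd ℂ) a * z))

lemma bf_eq (a z : ℂ) : bf a z = -(((‖a‖ : ℝ) : ℂ) / a) * mb a z := by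
  rw [bf, mb, ← neg_sub z a]; ring

lemma bf_coef {a : ℂ} (ha : a ≠ 0) : ‖((‖a‖ : ℝ) : ℂ) / a‖ = 1 := by
  simp [ha]

lemma bf_norm {a : ℂ} (ha : a ≠ 0) (z : ℂ) : ‖bf a z‖ = ‖mb a z‖ := by
  rw [bf_eq, norm_mul, norm_neg, bf_coef ha, one_mul]

lemma bf_zero {a : ℂ} (ha : a ≠ 0) : bf a 0 = (‖a‖ : ℝ) := by
  rw [bf_eq, mb_zero]; field_simp

lemma bf_norm_lt {a z : ℂ} (ha : a ≠ 0) (ha1 : ‖a‖ < 1) (hz : ‖z‖ < 1) : ‖bf a z‖ < 1 := by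
  rw [bf_norm ha]; exact mb_norm_lt ha1 hz

lemma bf_norm_circle {a z : ℂ} (ha : a ≠ 0) (ha1 : ‖a‖ < 1) (hz : ‖z‖ = 1) : ‖bf a z‖ = 1 := by
  rw [bf_norm ha]
  have := mb_one_sub ha1 hz.le
  rw [hz] at this
  have : ‖mb a z‖ ^ 2 = 1 := by simp at this; linarith
  nlinarith [norm_nonneg (mb a z)]

lemma bf_diffAt {a z : ℂ} (ha1 : ‖a‖ < 1) (hz : ‖z‖ ≤ 1) : DifferentiableAt ℂ (bf a) z := by
  have : bf a = fun z => -(((‖a‖ : ℝ) : ℂ) / a) * mb a z := funext (bf_eq a)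
  rw [this]
  exact (mb_hasDerivAt ha1 hz).differentiableAt.const_mul _

lemma bf_sub_one {a z : ℂ} (ha : a ≠ 0) (ha1 : ‖a‖ < 1) (hz : ‖z‖ < 1) :
    ‖bf a z - 1‖ ≤ 2 / (1 - ‖z‖) * (1 - ‖a‖) := by
  have hn := one_sub_ne ha1 hz.le
  have haa : (starRingEnd ℂ) a * a = ((‖a‖ : ℝ) : ℂ) ^ 2 := by
    rw [← Complex.normSq_eq_conj_mul_self, Complex.normSq_eq_norm_sq]; simp
  have e : bf a z - 1 = -((1 - ((‖a‖ : ℝ) : ℂ)) * ((a + (‖a‖ : ℝ) * z) / a) / (1 - (starRingEnd ℂ) a * z)) := by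
    rw [bf]
    generalize hk : (starRingEnd ℂ) a = k at *
    have hn' : 1 - z * k ≠ 0 := by rwa [mul_comm]
    field_simp
    linear_combination z * haa
  rw [e, norm_neg, norm_div, norm_mul, norm_div]
  have h1 : ‖(1:ℂ) - ((‖a‖ : ℝ) : ℂ)‖ = 1 - ‖a‖ := by
    rw [← Complex.ofReal_one, ← Complex.ofReal_sub, Complex.norm_real, Real.norm_of_nonneg (by linarith)]
  have hap := norm_pos_iff.2 ha
  have h2 : ‖a + (‖a‖ : ℝ) * z‖ / ‖a‖ ≤ 2 := by
    rw [div_le_iff₀ hap]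
    refine (norm_add_le _ _).trans ?_
    rw [norm_mul, Complex.norm_real, norm_norm]
    nlinarith
  have h3 : 1 - ‖z‖ ≤ ‖1 - (starRingEnd ℂ) a * z‖ := by
    have := norm_sub_norm_le (1:ℂ) ((starRingEnd ℂ) a * z)
    rw [norm_one, norm_mul, RCLike.norm_conj] at this
    nlinarith [norm_nonneg z]
  rw [h1]
  have h4 : 0 < 1 - ‖z‖ := by linarith
  have h5 : 0 < 1 - ‖a‖ := by linarith
  calc _ ≤ (1 - ‖a‖) * 2 / (1 - ‖z‖) := by gcongr
    _ = _ := by ring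

lemma bf_multipliable {ι : Type*} {a : ι → ℂ} (ha : ∀ j, a j ≠ 0 ∧ ‖a j‖ < 1)
    (hs : Summable fun j => 1 - ‖a j‖) {z : ℂ} (hz : ‖z‖ < 1) : Multipliable fun j => bf (a j) z := by
  have h1 : Summable fun j => ‖bf (a j) z - 1‖ :=
    Summable.of_nonneg_of_le (fun _ => norm_nonneg _)
      (fun j => bf_sub_one (ha j).1 (ha j).2 hz) (hs.mul_left _)
  have := multipliable_one_add_of_summable h1
  simpa using this

lemma prod_ge_one_sub_sum {ι : Type*} (s : Finset ι) (x : ι → ℝ) (h0 : ∀ j, 0 ≤ x j) (h1 : ∀ j, x j ≤ 1) :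
    1 - ∑ j ∈ s, (1 - x j) ≤ ∏ j ∈ s, x j := by
  classical
  induction s using Finset.induction_on with
  | empty => simp
  | insert a s ha ih =>
    rw [Finset.sum_insert ha, Finset.prod_insert ha]
    have h2 : ∏ j ∈ s, x j ≤ 1 := Finset.prod_le_one (fun j _ => h0 j) (fun j _ => h1 j)
    nlinarith [h0 a, h1 a]

lemma prod_bf_le {ι : Type*} {a : ι → ℂ} (ha : ∀ j, a j ≠ 0 ∧ ‖a j‖ < 1) (s : Finset ι) {z : ℂ}
    (hz : ‖z‖ < 1) : ‖∏ j ∈ s, bf (a j) z‖ ≤ 1 := by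
  rw [norm_prod]
  exact Finset.prod_le_one (fun j _ => norm_nonneg _) (fun j _ => (bf_norm_lt (ha j).1 (ha j).2 hz).le)

lemma prod_bf_diffAt {ι : Type*} {a : ι → ℂ} (ha : ∀ j, a j ≠ 0 ∧ ‖a j‖ < 1) (s : Finset ι) {z : ℂ}
    (hz : ‖z‖ ≤ 1) : DifferentiableAt ℂ (fun z => ∏ j ∈ s, bf (a j) z) z :=
  DifferentiableAt.fun_finsetProd fun j _ => bf_diffAt (ha j).2 hz

lemma bp_diffOn {ι : Type*} {a : ι → ℂ} (ha : ∀ j, a j ≠ 0 ∧ ‖a j‖ < 1)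
    (hs : Summable fun j => 1 - ‖a j‖) :
    DifferentiableOn ℂ (fun z => ∏' j, bf (a j) z) (ball 0 1) := by
  classical
  obtain ⟨g, hg, -, hgl, -⟩ := normal_family (Ultrafilter.of (atTop : Filter (Finset ι)))
    (fun s z => ∏ j ∈ s, bf (a j) z) (fun ρ hρ => Eventually.of_forall fun s => by
      refine ⟨fun z hz => ?_, fun z hz => ?_⟩
      · have hz' : ‖z‖ < ρ := by simpa using hz
        exact (prod_bf_diffAt ha s (by linarith)).differentiableWithinAt
      · have hz' : ‖z‖ < ρ := by simpa using hz
        exact prod_bf_le ha s (by linarith))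
  refine hg.congr fun z hz => ?_
  have h1 := (bf_multipliable ha hs (z := z) (by simpa using hz)).hasProd
  exact tendsto_nhds_unique (h1.mono_left (Ultrafilter.of_le _)) (hgl z hz)

lemma bp_norm_le {ι : Type*} {a : ι → ℂ} (ha : ∀ j, a j ≠ 0 ∧ ‖a j‖ < 1)
    (hs : Summable fun j => 1 - ‖a j‖) {z : ℂ} (hz : ‖z‖ < 1) : ‖∏' j, bf (a j) z‖ ≤ 1 := by
  have h1 := (bf_multipliable ha hs hz).hasProd
  exact le_of_tendsto (Filter.Tendsto.norm h1) (Eventually.of_forall fun s => prod_bf_le ha s hz)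

lemma bp_zero_ge {ι : Type*} {a : ι → ℂ} (ha : ∀ j, a j ≠ 0 ∧ ‖a j‖ < 1)
    (hs : Summable fun j => 1 - ‖a j‖) : 1 - ∑' j, (1 - ‖a j‖) ≤ ‖∏' j, bf (a j) 0‖ := by
  have h1 := (bf_multipliable ha hs (z := 0) (by simp)).hasProd
  refine ge_of_tendsto (Filter.Tendsto.norm h1) (Eventually.of_forall fun s => ?_)
  have h2 : ∑ j ∈ s, (1 - ‖a j‖) ≤ ∑' j, (1 - ‖a j‖) :=
    hs.sum_le_tsum s (fun j _ => by linarith [(ha j).2])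
  have h3 := prod_ge_one_sub_sum s (fun j => ‖a j‖) (fun j => norm_nonneg _) (fun j => (ha j).2.le)
  rw [norm_prod]
  have : ∀ j, ‖bf (a j) 0‖ = ‖a j‖ := fun j => by rw [bf_zero (ha j).1]; simp
  simp only [this]
  linarith

lemma mean_norm_ge {R : ℂ → ℂ} (hR : DifferentiableOn ℂ R (ball 0 1)) {ρ : ℝ} (h0 : 0 < ρ) (h1 : ρ < 1) :
    ‖R 0‖ ≤ Real.circleAverage (fun z => ‖R z‖) 0 ρ := by
  have h2 : DiffContOnCl ℂ R (ball 0 |ρ|) := by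
    apply DifferentiableOn.diffContOnCl
    rw [abs_of_pos h0, closure_ball _ h0.ne']
    exact hR.mono (closedBall_subset_ball h1)
  rw [← h2.circleAverage, Real.circleAverage_def, Real.circleAverage_def, norm_smul, smul_eq_mul,
    Real.norm_of_nonneg (by positivity)]
  gcongr
  exact intervalIntegral.norm_integral_le_integral_norm (by positivity)

/-- the circular means of `1 - |F|` tend to zero -/
def MeanP (F : ℂ → ℂ) : Prop :=
  ∀ ε > 0, ∃ ρ₀ < 1, ∀ ρ, 0 < ρ → ρ₀ < ρ → ρ < 1 → Real.circleAverage (fun z => 1 - ‖F z‖) 0 ρ ≤ ε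

lemma near_circle {p : ℂ → ℂ} (hp : ContinuousOn p (closedBall 0 1)) (h1 : ∀ z, ‖z‖ = 1 → ‖p z‖ = 1)
    {ε : ℝ} (hε : 0 < ε) : ∃ ρ₀ < 1, ∀ z : ℂ, ρ₀ < ‖z‖ → ‖z‖ < 1 → 1 - ‖p z‖ ≤ ε := by
  have hu := (isCompact_closedBall (0:ℂ) 1).uniformContinuousOn_of_continuous hp
  rw [Metric.uniformContinuousOn_iff] at hu
  obtain ⟨δ, hδ, hu⟩ := hu ε hε
  refine ⟨max (1 - δ) 0, by simp [hδ], fun z hz hz1 => ?_⟩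
  have hz0 : 0 < ‖z‖ := (le_max_right _ _).trans_lt hz
  have hzd : 1 - δ < ‖z‖ := (le_max_left _ _).trans_lt hz
  have hn : ‖z / ‖z‖‖ = 1 := by simp [hz0.ne']
  have hd : dist z (z / ‖z‖) < δ := by
    have : z - z / ‖z‖ = -(z / ‖z‖) * ((1 - ‖z‖ : ℝ) : ℂ) := by
      have : (‖z‖ : ℂ) ≠ 0 := by simpa using hz0.ne'
      push_cast; field_simp; ring
    rw [dist_eq_norm, this, norm_mul, norm_neg, hn, Complex.norm_real, Real.norm_of_nonneg (by linarith)]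
    linarith
  have := hu z (by simpa using hz1.le) (z / ‖z‖) (by simp [hz0.ne']) hd
  rw [dist_comm, dist_eq_norm] at this
  have h3 := norm_sub_norm_le (p (z / ‖z‖)) (p z)
  rw [h1 _ hn] at h3
  linarith

lemma blaschke_mean {B : ℂ → ℂ} (hb : IsBlaschkeProduct B) :
    DifferentiableOn ℂ B (ball 0 1) ∧ (∀ z ∈ ball (0:ℂ) 1, ‖B z‖ ≤ 1) ∧ MeanP B := by
  classical
  obtain ⟨hd, η, m, ι, a, hη, ha, hs, hBz⟩ := hb
  have hB : DifferentiableOn ℂ B (ball 0 1) := fun z hz => (hd z hz).differentiableWithinAt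
  change ∀ z ∈ ball (0:ℂ) 1, B z = η * z ^ m * ∏' j, bf (a j) z at hBz
  have hle : ∀ z ∈ ball (0:ℂ) 1, ‖B z‖ ≤ 1 := by
    intro z hz
    have hz' : ‖z‖ < 1 := by simpa using hz
    rw [hBz z hz, norm_mul, norm_mul, hη, one_mul, norm_pow]
    exact mul_le_one₀ (pow_le_one₀ (norm_nonneg _) hz'.le) (norm_nonneg _) (bp_norm_le ha hs hz')
  refine ⟨hB, hle, fun ε hε => ?_⟩
  have ht := (tendsto_tsum_compl_atTop_zero (fun j => 1 - ‖a j‖)).eventually (gt_mem_nhds (half_pos hε))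
  obtain ⟨A, hA⟩ := ht.exists
  set R : ℂ → ℂ := fun z => ∏' j : {j // j ∉ A}, bf (a j) z with hR
  set p : ℂ → ℂ := fun z => η * z ^ m * ∏ j ∈ A, bf (a j) z with hp
  have ha' : ∀ j : {j // j ∉ A}, a j ≠ 0 ∧ ‖a j‖ < 1 := fun j => ha j
  have hs' : Summable fun j : {j // j ∉ A} => 1 - ‖a j‖ := hs.subtype _
  have hRd : DifferentiableOn ℂ R (ball 0 1) := bp_diffOn ha' hs'
  have hR0 : 1 - ε / 2 ≤ ‖R 0‖ := by
    have := bp_zero_ge ha' hs'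
    change _ ≤ ‖R 0‖ at this
    linarith
  have hspl : ∀ z ∈ ball (0:ℂ) 1, B z = p z * R z := by
    intro z hz
    have hz' : ‖z‖ < 1 := by simpa using hz
    have e1 := Multipliable.tprod_mul_tprod_compl (s := (A : Set ι)) (f := fun j => bf (a j) z)
      (A.finite_toSet.multipliable _) (bf_multipliable ha' hs' hz')
    rw [hBz z hz, hp, hR, ← e1]
    have e2 : ∏' (x : ((A : Set ι) : Set ι)), bf (a ↑x) z = ∏ j ∈ A, bf (a j) z :=
      Finset.tprod_subtype' A (fun j => bf (a j) z)
    rw [e2]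
    have e3 : (∏' (x : ↥((A : Set ι)ᶜ)), bf (a ↑x) z) = ∏' j : {j // j ∉ A}, bf (a j) z := rfl
    rw [e3]; ring
  have hpc : ContinuousOn p (closedBall 0 1) := by
    intro z hz
    have hz' : ‖z‖ ≤ 1 := by simpa using hz
    refine ContinuousAt.continuousWithinAt ?_
    exact (ContinuousAt.mul (by fun_prop) (prod_bf_diffAt ha A hz').continuousAt)
  obtain ⟨ρ₀, hρ₀, hnear⟩ := near_circle hpc (fun z hz => by
    rw [hp]; simp only
    rw [norm_mul, norm_mul, hη, norm_pow, hz, norm_prod,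
      Finset.prod_congr rfl (fun j _ => bf_norm_circle (ha j).1 (ha j).2 hz)]; simp) (half_pos hε)
  refine ⟨ρ₀, hρ₀, fun ρ h0 h1 h2 => ?_⟩
  have hsub : sphere (0:ℂ) |ρ| ⊆ ball 0 1 := by
    intro z hz; rw [abs_of_pos h0] at hz
    have : ‖z‖ = ρ := by simpa using hz
    simp [this, h2]
  have i1 : CircleIntegrable (fun z => 1 - ‖B z‖) 0 ρ :=
    ContinuousOn.circleIntegrable' (continuousOn_const.sub (hB.continuousOn.mono hsub).norm)
  have i3 : CircleIntegrable (fun z => ‖R z‖) 0 ρ :=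
    ContinuousOn.circleIntegrable' (hRd.continuousOn.mono hsub).norm
  have i2 : CircleIntegrable (fun z => (ε / 2 + 1) - ‖R z‖) 0 ρ :=
    ContinuousOn.circleIntegrable' (continuousOn_const.sub (hRd.continuousOn.mono hsub).norm)
  calc _ ≤ Real.circleAverage (fun z => (ε / 2 + 1) - ‖R z‖) 0 ρ := by
        refine Real.circleAverage_mono i1 i2 fun z hz => ?_
        have hzD := hsub hz
        have hz' : ‖z‖ < 1 := by simpa using hzD
        have hzρ : ‖z‖ = ρ := by rw [abs_of_pos h0] at hz; simpa using hz
        have n1 := hnear z (by rw [hzρ]; exact h1) hz'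
        have n2 : ‖R z‖ ≤ 1 := bp_norm_le ha' hs' hz'
        rw [hspl z hzD, norm_mul]
        nlinarith [norm_nonneg (R z), norm_nonneg (p z)]
    _ = (ε / 2 + 1) - Real.circleAverage (fun z => ‖R z‖) 0 ρ := by
        rw [Real.circleAverage_fun_sub (circleIntegrable_const _ _ _) i3, Real.circleAverage_const]
    _ ≤ ε := by linarith [mean_norm_ge hRd h0 h2]

lemma MeanP.of_le {F G : ℂ → ℂ} (hF : MeanP F) (hFc : ContinuousOn F (ball 0 1))
    (hGc : ContinuousOn G (ball 0 1)) {C : ℝ} (hC : 0 < C)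
    (hle : ∀ z ∈ ball (0:ℂ) 1, 1 - ‖G z‖ ≤ C * (1 - ‖F z‖)) : MeanP G := by
  intro ε hε
  obtain ⟨ρ₀, hρ₀, h⟩ := hF (ε / C) (by positivity)
  refine ⟨ρ₀, hρ₀, fun ρ h0 h1 h2 => ?_⟩
  have hsub : sphere (0:ℂ) |ρ| ⊆ ball 0 1 := by
    intro z hz; rw [abs_of_pos h0] at hz
    have : ‖z‖ = ρ := by simpa using hz
    simp [this, h2]
  calc _ ≤ Real.circleAverage (fun z => C • (1 - ‖F z‖)) 0 ρ := by
        refine Real.circleAverage_mono ?_ ?_ fun z hz => hle z (hsub hz)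
        · exact ContinuousOn.circleIntegrable' (continuousOn_const.sub (hGc.mono hsub).norm)
        · have := (hFc.mono hsub).norm; exact ContinuousOn.circleIntegrable' (by fun_prop)
    _ = C * Real.circleAverage (fun z => (1 - ‖F z‖)) 0 ρ := by
        rw [Real.circleAverage_fun_smul, smul_eq_mul]
    _ ≤ C * (ε / C) := by gcongr; exact h ρ h0 h1 h2
    _ = ε := by field_simp

lemma MeanP.moebius {F : ℂ → ℂ} (hF : MeanP F) (hFd : DifferentiableOn ℂ F (ball 0 1))
    (hF1 : ∀ z ∈ ball (0:ℂ) 1, ‖F z‖ < 1) {f : ℂ → ℂ} {τ c : ℂ} (hτ : ‖τ‖ = 1) (hc : ‖c‖ < 1)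
    (hf : DifferentiableOn ℂ f (ball 0 1))
    (he : ∀ z ∈ ball (0:ℂ) 1, f z = τ * mb c (F z)) : MeanP f := by
  have hc' : 0 < 1 - ‖c‖ := by linarith
  refine hF.of_le hFd.continuousOn hf.continuousOn (C := 2 * (1 + ‖c‖) / (1 - ‖c‖)) (by positivity) ?_
  intro z hz
  have hFz := hF1 z hz
  have h1 := mb_one_sub hc hFz.le
  have h2 := mb_norm_lt hc hFz
  rw [he z hz, norm_mul, hτ, one_mul]
  have h3 : 1 - ‖c‖ ≤ ‖1 - (starRingEnd ℂ) c * F z‖ := by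
    have := norm_sub_norm_le (1:ℂ) ((starRingEnd ℂ) c * F z)
    rw [norm_one, norm_mul, RCLike.norm_conj] at this
    nlinarith [norm_nonneg c]
  have h4 : 1 - ‖mb c (F z)‖ ≤ 1 - ‖mb c (F z)‖ ^ 2 := by nlinarith [norm_nonneg (mb c (F z))]
  refine h4.trans ?_
  rw [h1]
  have h5 : (0:ℝ) ≤ 1 - ‖F z‖ ^ 2 := by nlinarith [norm_nonneg (F z)]
  calc _ ≤ (1 - ‖c‖ ^ 2) * (1 - ‖F z‖ ^ 2) / (1 - ‖c‖) ^ 2 := by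
        have : 0 ≤ 1 - ‖c‖ ^ 2 := by nlinarith [norm_nonneg c]
        gcongr
    _ = (1 + ‖c‖) / (1 - ‖c‖) * (1 - ‖F z‖ ^ 2) := by field_simp; ring
    _ ≤ (1 + ‖c‖) / (1 - ‖c‖) * (2 * (1 - ‖F z‖)) := by
        gcongr; nlinarith [norm_nonneg (F z)]
    _ = _ := by ring

section pts
open Polynomial

lemma pair_bound (a b : ℝ) : (a - b) ^ 2 ≤ (1 + a ^ 2) * (1 + b ^ 2) := by
  nlinarith [sq_nonneg (1 + a * b)]

noncomputable def WW {n : ℕ} (x : Fin n → ℝ) : ℝ :=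
  ∏ i, ∏ k ∈ Finset.univ.erase i, |x i - x k|

lemma WW_nonneg {n : ℕ} (x : Fin n → ℝ) : 0 ≤ WW x :=
  Finset.prod_nonneg fun _ _ => Finset.prod_nonneg fun _ _ => abs_nonneg _

lemma WW_le {n : ℕ} (x : Fin n → ℝ) : WW x ≤ ∏ i, (1 + x i ^ 2) ^ (n - 1) := by
  have hp : 0 ≤ ∏ i, (1 + x i ^ 2) ^ (n - 1) := Finset.prod_nonneg fun i _ => by positivity
  refine le_of_sq_le_sq ?_ hp
  rw [WW, ← Finset.prod_pow, ← Finset.prod_pow]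
  have e : ∏ i, ∏ k ∈ Finset.univ.erase i, ((1 + x i ^ 2) * (1 + x k ^ 2)) = ∏ i, ((1 + x i ^ 2) ^ (n - 1)) ^ 2 := by
    have h1 : ∀ i : Fin n, ∏ k ∈ Finset.univ.erase i, ((1 + x i ^ 2) * (1 + x k ^ 2))
        = (1 + x i ^ 2) ^ (n - 1) * ∏ k ∈ Finset.univ.erase i, (1 + x k ^ 2) := by
      intro i
      rw [Finset.prod_mul_distrib, Finset.prod_const, Finset.card_erase_of_mem (Finset.mem_univ _)]
      simp
    simp only [h1]
    rw [Finset.prod_mul_distrib]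
    have h2 : ∏ i : Fin n, ∏ k ∈ Finset.univ.erase i, (1 + x k ^ 2) = ∏ k : Fin n, (1 + x k ^ 2) ^ (n - 1) := by
      rw [Finset.prod_comm' (t' := Finset.univ) (s' := fun k => Finset.univ.erase k)]
      · refine Finset.prod_congr rfl fun k _ => ?_
        rw [Finset.prod_const, Finset.card_erase_of_mem (Finset.mem_univ _)]
        simp
      · intro a b; simp [eq_comm]
    rw [h2, ← Finset.prod_mul_distrib]
    refine Finset.prod_congr rfl fun k _ => by ring
  rw [← e]
  refine Finset.prod_le_prod (fun i _ => sq_nonneg _) fun i _ => ?_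
  rw [← Finset.prod_pow]
  refine Finset.prod_le_prod (fun i _ => sq_nonneg _) fun k _ => ?_
  rw [sq_abs]; exact pair_bound _ _

lemma WW_split {n : ℕ} (x : Fin n → ℝ) (j : Fin n) :
    WW x = (∏ k ∈ Finset.univ.erase j, (x j - x k) ^ 2) *
      ∏ i ∈ Finset.univ.erase j, ∏ k ∈ (Finset.univ.erase i).erase j, |x i - x k| := by
  rw [WW, ← Finset.mul_prod_erase Finset.univ _ (Finset.mem_univ j)]
  have : ∏ i ∈ Finset.univ.erase j, ∏ k ∈ Finset.univ.erase i, |x i - x k|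
      = ∏ i ∈ Finset.univ.erase j, (|x i - x j| * ∏ k ∈ (Finset.univ.erase i).erase j, |x i - x k|) := by
    refine Finset.prod_congr rfl fun i hi => ?_
    rw [Finset.mul_prod_erase (Finset.univ.erase i) (fun k => |x i - x k|)]
    simp at hi ⊢; exact fun h => hi h.symm
  rw [this, Finset.prod_mul_distrib, ← mul_assoc, ← Finset.prod_mul_distrib]
  congr 1
  refine Finset.prod_congr rfl fun k _ => ?_
  rw [abs_sub_comm (x k) (x j), abs_mul_abs_self]; ring

lemma exists_max {n : ℕ} (q : ℝ → ℝ) (hq : Continuous q) {κ : ℝ} (hκ : 0 < κ)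
    (hlow : ∀ t, κ * (1 + t ^ 2) ^ n ≤ q t) :
    ∃ x : Fin n → ℝ, 0 < WW x ∧ ∀ y : Fin n → ℝ, WW y / ∏ j, q (y j) ≤ WW x / ∏ j, q (x j) := by
  have hqpos : ∀ t, 0 < q t := fun t => lt_of_lt_of_le (by positivity) (hlow t)
  set Ψ : (Fin n → ℝ) → ℝ := fun x => WW x / ∏ j, q (x j) with hΨ
  have hc : Continuous Ψ := by
    refine Continuous.div ?_ ?_ fun x => (Finset.prod_pos fun j _ => hqpos _).ne'
    · unfold WW; fun_prop
    · fun_prop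
  set x₀ : Fin n → ℝ := fun i => (i : ℕ) with hx₀
  have h0 : 0 < WW x₀ := by
    refine Finset.prod_pos fun i _ => Finset.prod_pos fun k hk => ?_
    rw [abs_pos, sub_ne_zero]
    simp only [hx₀]
    simp at hk
    intro h; exact hk (Fin.ext (by exact_mod_cast h.symm))
  have hΨ0 : 0 < Ψ x₀ := div_pos h0 (Finset.prod_pos fun j _ => hqpos _)
  have hub : ∀ x (l : Fin n), Ψ x ≤ (κ ^ n)⁻¹ / (1 + x l ^ 2) := by
    intro x l
    have hn : n - 1 + 1 = n := by have := l.isLt; omega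
    have b1 := WW_le x
    have b2 : κ ^ n * ∏ j, (1 + x j ^ 2) ^ n ≤ ∏ j, q (x j) := by
      calc κ ^ n * ∏ j, (1 + x j ^ 2) ^ n = ∏ j, (κ * (1 + x j ^ 2) ^ n) := by
            rw [Finset.prod_mul_distrib]; simp
        _ ≤ _ := Finset.prod_le_prod (fun i _ => by positivity) fun i _ => hlow _
    have b3 : (∏ j, (1 + x j ^ 2) ^ n) = (∏ i, (1 + x i ^ 2) ^ (n - 1)) * ∏ i, (1 + x i ^ 2) := by
      rw [← Finset.prod_mul_distrib]
      refine Finset.prod_congr rfl fun i _ => ?_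
      rw [← pow_succ, hn]
    have b4 : 1 + x l ^ 2 ≤ ∏ i, (1 + x i ^ 2) := by
      rw [← Finset.mul_prod_erase Finset.univ (fun i => 1 + x i ^ 2) (Finset.mem_univ l)]
      refine le_mul_of_one_le_right (by positivity) ?_
      refine Finset.one_le_prod fun i => ?_
      intro _; have := sq_nonneg (x i); linarith
    have b5 : 0 < ∏ i, (1 + x i ^ 2) ^ (n - 1) := Finset.prod_pos fun i _ => by positivity
    have b6 : 0 < ∏ i, (1 + x i ^ 2) := Finset.prod_pos fun i _ => by positivity
    calc Ψ x ≤ (∏ i, (1 + x i ^ 2) ^ (n - 1)) / (κ ^ n * ∏ j, (1 + x j ^ 2) ^ n) := by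
          simp only [hΨ]
          have : 0 < κ ^ n * ∏ j, (1 + x j ^ 2) ^ n :=
            mul_pos (by positivity) (Finset.prod_pos fun i _ => by positivity)
          gcongr
      _ = (κ ^ n)⁻¹ / ∏ i, (1 + x i ^ 2) := by rw [b3]; field_simp
      _ ≤ _ := by gcongr
  set r : ℝ := max ‖x₀‖ ((κ ^ n)⁻¹ / Ψ x₀ + 1) with hr
  obtain ⟨x, hx, hmax⟩ := (isCompact_closedBall (0 : Fin n → ℝ) r).exists_isMaxOn
    ⟨x₀, mem_closedBall_zero_iff.2 (le_max_left _ _)⟩ hc.continuousOn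
  have h1 : Ψ x₀ ≤ Ψ x := hmax (mem_closedBall_zero_iff.2 (le_max_left _ _) : x₀ ∈ closedBall 0 r)
  refine ⟨x, ?_, fun y => ?_⟩
  · by_contra hcon
    have : WW x = 0 := le_antisymm (not_lt.1 hcon) (WW_nonneg x)
    simp [hΨ, this] at h1
    simp [hΨ] at hΨ0
    linarith
  · by_cases hy : y ∈ closedBall 0 r
    · exact hmax hy
    · refine le_trans ?_ h1
      have hy' : r < ‖y‖ := by simpa using hy
      have hr0 : 0 ≤ r := (norm_nonneg _).trans (le_max_left _ _)
      have : ∃ l, r < ‖y l‖ := by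
        by_contra hcon
        push Not at hcon
        exact absurd ((pi_norm_le_iff_of_nonneg hr0).2 hcon) (not_le.2 hy')
      obtain ⟨l, hl⟩ := this
      refine (hub y l).trans ?_
      have hrr : (κ ^ n)⁻¹ / Ψ x₀ + 1 ≤ r := le_max_right _ _
      have hpos : 0 < (κ ^ n)⁻¹ / Ψ x₀ := by positivity
      have : (κ ^ n)⁻¹ / Ψ x₀ ≤ 1 + y l ^ 2 := by
        have : y l ^ 2 = ‖y l‖ ^ 2 := by simp
        rw [this]
        nlinarith
      rw [div_le_iff₀ (by positivity)]
      rw [div_le_iff₀ hΨ0] at this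
      linarith

lemma exists_pts {n : ℕ} (Q : ℝ[X]) (hQm : Q.Monic) (hQd : Q.natDegree = 2 * n) {κ : ℝ} (hκ : 0 < κ)
    (hlow : ∀ t, κ * (1 + t ^ 2) ^ n ≤ Q.eval t) :
    ∃ x m : Fin n → ℝ, (∀ j, 0 < m j) ∧
      Q = (∏ j, (X - C (x j))) ^ 2 + ∑ j, C (m j) * (∏ i ∈ Finset.univ.erase j, (X - C (x i))) ^ 2 := by
  have hqpos : ∀ t, 0 < Q.eval t := fun t => lt_of_lt_of_le (by positivity) (hlow t)
  obtain ⟨x, hW, hmax⟩ := exists_max (fun t => Q.eval t) Q.continuous hκ hlow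
  set A : Fin n → ℝ[X] := fun j => ∏ i ∈ Finset.univ.erase j, (X - C (x i)) with hA
  set N : ℝ[X] := ∏ j, (X - C (x j)) with hN
  have hNA : ∀ j, N = (X - C (x j)) * A j := fun j =>
    (Finset.mul_prod_erase Finset.univ _ (Finset.mem_univ j)).symm
  have hinj : Function.Injective x := by
    intro i k hik
    by_contra hne
    have : WW x = 0 := by
      refine Finset.prod_eq_zero (Finset.mem_univ i) (Finset.prod_eq_zero (i := k) ?_ ?_)
      · simp; exact fun h => hne h.symm
      · simp [hik]
    linarith
  have hAev : ∀ j t, (A j).eval t = ∏ i ∈ Finset.univ.erase j, (t - x i) := by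
    intro j t; simp [hA, eval_prod]
  have hAne : ∀ j, (A j).eval (x j) ≠ 0 := by
    intro j; rw [hAev]
    refine Finset.prod_ne_zero_iff.2 fun i hi => sub_ne_zero.2 fun h => ?_
    simp at hi; exact hi (hinj h).symm
  have hA0 : ∀ j i, i ≠ j → (A i).eval (x j) = 0 := by
    intro j i hij; rw [hAev]
    exact Finset.prod_eq_zero (i := j) (by simp [hij.symm]) (by simp)
  have hcrit : ∀ j, 2 * (A j).derivative.eval (x j) * Q.eval (x j) = (A j).eval (x j) * Q.derivative.eval (x j) := by
    intro j
    have hm : IsLocalMax (fun y => ((A j).eval y) ^ 2 / Q.eval y) (x j) := by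
      refine Eventually.of_forall fun y => ?_
      have h1 := hmax (Function.update x j y)
      set K := ∏ i ∈ Finset.univ.erase j, ∏ k ∈ (Finset.univ.erase i).erase j, |x i - x k| with hK
      have e1 : WW (Function.update x j y) = (A j).eval y ^ 2 * K := by
        rw [WW_split _ j, hAev, ← Finset.prod_pow]
        congr 1
        · refine Finset.prod_congr rfl fun k hk => ?_
          simp at hk
          simp [hk]
        · refine Finset.prod_congr rfl fun i hi => Finset.prod_congr rfl fun k hk => ?_
          simp at hi hk
          simp [hi, hk]
      have e2 : WW x = (A j).eval (x j) ^ 2 * K := by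
        rw [WW_split _ j, hAev, ← Finset.prod_pow]
      set L := ∏ i ∈ Finset.univ.erase j, Q.eval (x i) with hL
      have hLp : 0 < L := Finset.prod_pos fun _ _ => hqpos _
      have hKp : 0 < K := by
        have hK0 : 0 ≤ K := Finset.prod_nonneg fun _ _ => Finset.prod_nonneg fun _ _ => abs_nonneg _
        rcases hK0.lt_or_eq with h | h
        · exact h
        · rw [e2, ← h] at hW; simp at hW
      have e3 : ∏ i, Q.eval (Function.update x j y i) = Q.eval y * L := by
        rw [← Finset.mul_prod_erase Finset.univ _ (Finset.mem_univ j)]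
        congr 1
        · simp
        · refine Finset.prod_congr rfl fun k hk => ?_
          simp at hk
          simp [hk]
      have e4 : ∏ i, Q.eval (x i) = Q.eval (x j) * L := by
        rw [← Finset.mul_prod_erase Finset.univ _ (Finset.mem_univ j)]
      rw [e1, e2, e3, e4, mul_div_mul_comm, mul_div_mul_comm] at h1
      exact le_of_mul_le_mul_right h1 (by positivity)
    have hd : HasDerivAt (fun y => ((A j).eval y) ^ 2 / Q.eval y) _ (x j) :=
      (((A j).hasDerivAt (x j)).fun_pow 2).fun_div (Q.hasDerivAt (x j)) (hqpos _).ne'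
    have h0 := hm.hasDerivAt_eq_zero hd
    rw [div_eq_zero_iff] at h0
    have h0' := h0.resolve_right (pow_ne_zero _ (hqpos _).ne')
    refine mul_left_cancel₀ (hAne j) ?_
    simp at h0'
    linear_combination h0'
  refine ⟨x, fun j => Q.eval (x j) / (A j).eval (x j) ^ 2, fun j =>
    div_pos (hqpos _) (by have := hAne j; positivity), ?_⟩
  set m : Fin n → ℝ := fun j => Q.eval (x j) / (A j).eval (x j) ^ 2 with hm
  have hmA : ∀ j, m j * (A j).eval (x j) ^ 2 = Q.eval (x j) := fun j => by
    rw [hm]; have := hAne j; field_simp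
  change Q = N ^ 2 + ∑ j, C (m j) * A j ^ 2
  set T := Q - N ^ 2 - ∑ j, C (m j) * A j ^ 2 with hT
  have hT0 : ∀ j, T.eval (x j) = 0 := by
    intro j
    have hs : (∑ i, C (m i) * A i ^ 2).eval (x j) = Q.eval (x j) := by
      rw [eval_finsetSum, Finset.sum_eq_single j]
      · simp [hmA]
      · intro i _ hij; simp [hA0 j i hij]
      · simp
    rw [hT, eval_sub, eval_sub, hs, hNA j]; simp
  have hT1 : ∀ j, T.derivative.eval (x j) = 0 := by
    intro j
    have hs : (∑ i, C (m i) * A i ^ 2).derivative.eval (x j) = Q.derivative.eval (x j) := by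
      rw [derivative_sum, eval_finsetSum, Finset.sum_eq_single j]
      · simp [derivative_pow]
        refine mul_left_cancel₀ (hAne j) ?_
        rw [← hcrit j, ← hmA]; ring
      · intro i _ hij; simp [derivative_pow, hA0 j i hij]
      · simp
    rw [hT, derivative_sub, derivative_sub, eval_sub, eval_sub, hs, hNA j]; simp [derivative_pow]
  have hdvd : N ^ 2 ∣ T := by
    rw [hN, ← Finset.prod_pow]
    refine Finset.prod_dvd_of_coprime ?_ ?_
    · intro i _ k _ hik
      refine IsCoprime.pow ?_
      exact isCoprime_X_sub_C_of_isUnit_sub (sub_ne_zero.2 (hinj.ne hik)).isUnit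
    · intro j _
      by_cases hTz : T = 0
      · rw [hTz]; exact dvd_zero _
      · rw [← le_rootMultiplicity_iff hTz]
        exact (one_lt_rootMultiplicity_iff_isRoot hTz).2 ⟨hT0 j, hT1 j⟩
  have hNm : N.Monic := monic_prod_of_monic _ _ fun j _ => monic_X_sub_C _
  have hNd : (N ^ 2).natDegree = 2 * n := by
    rw [hNm.natDegree_pow, hN, natDegree_prod_of_monic _ _ fun j _ => monic_X_sub_C _]; simp
  have hdeg : T.degree < (N ^ 2).degree := by
    have d1 : (Q - N ^ 2).degree < (N ^ 2).degree := by
      have e : Q.degree = (N ^ 2).degree := by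
        rw [degree_eq_natDegree hQm.ne_zero, degree_eq_natDegree (hNm.pow 2).ne_zero, hQd, hNd]
      rw [← e]
      exact degree_sub_lt_left e hQm.ne_zero (by rw [hQm.leadingCoeff, (hNm.pow 2).leadingCoeff])
    have d2 : (∑ j, C (m j) * A j ^ 2).degree < (N ^ 2).degree := by
      refine (degree_sum_le _ _).trans_lt ?_
      rw [Finset.sup_lt_iff (bot_lt_iff_ne_bot.2 (degree_ne_bot.2 (hNm.pow 2).ne_zero))]
      intro j _
      have hmj : m j ≠ 0 := (div_pos (hqpos _) (by have := hAne j; positivity)).ne'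
      rw [degree_C_mul hmj]
      have hAm : (A j).Monic := monic_prod_of_monic _ _ fun j _ => monic_X_sub_C _
      rw [hNA j, mul_pow, degree_mul, degree_pow, degree_pow, degree_X_sub_C, degree_eq_natDegree hAm.ne_zero]
      generalize (A j).natDegree = a
      rw [nsmul_eq_mul, nsmul_eq_mul]
      exact_mod_cast (by omega : 2 * a < 2 * 1 + 2 * a)
    exact (degree_sub_le _ _).trans_lt (max_lt d1 d2)
  have := eq_zero_of_dvd_of_degree_lt hdvd hdeg
  rw [hT] at this
  linear_combination this
end pts

section ptsC
open Polynomial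

lemma exists_pts_C {n : ℕ} (ξ : Fin n → ℂ) (hξ : ∀ j, 0 < (ξ j).im) :
    ∃ x m : Fin n → ℝ, (∀ j, 0 < m j) ∧ ∀ y : ℂ,
      (∏ j, (y - ξ j)) * (∏ j, (y - (starRingEnd ℂ) (ξ j))) =
        (∏ j, (y - x j)) ^ 2 + ∑ j, (m j : ℂ) * (∏ i ∈ Finset.univ.erase j, (y - x i)) ^ 2 := by
  set q : Fin n → ℝ[X] := fun j => (X - C (ξ j).re) ^ 2 + C ((ξ j).im ^ 2) with hq
  have hm : ∀ j, (q j).Monic := fun j => by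
    refine ((monic_X_sub_C _).pow 2).add_of_left ?_
    refine degree_C_le.trans_lt ?_
    rw [degree_pow, degree_X_sub_C]; norm_num
  have hd : ∀ j, (q j).natDegree = 2 := fun j => by
    rw [hq]; simp only [natDegree_add_C]; simp
  have hlow : ∀ t : ℝ, (∏ j : Fin n, (2 + (1 + 2 * (ξ j).re ^ 2) / (ξ j).im ^ 2)⁻¹) * (1 + t ^ 2) ^ n
      ≤ (∏ j, q j).eval t := by
    intro t
    have e : (1 + t ^ 2) ^ n = ∏ j : Fin n, (1 + t ^ 2) := by simp
    rw [e, ← Finset.prod_mul_distrib, eval_prod]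
    refine Finset.prod_le_prod (fun j _ => by have := hξ j; positivity) fun j _ => ?_
    have hb := hξ j
    rw [inv_mul_le_iff₀ (by positivity)]
    simp only [hq, eval_add, eval_pow, eval_sub, eval_X, eval_C]
    have h1 : (1 + 2 * (ξ j).re ^ 2) ≤ (1 + 2 * (ξ j).re ^ 2) / (ξ j).im ^ 2 * ((t - (ξ j).re) ^ 2 + (ξ j).im ^ 2) := by
      rw [div_mul_eq_mul_div, le_div_iff₀ (by positivity)]
      gcongr
      nlinarith [sq_nonneg (t - (ξ j).re)]
    nlinarith [sq_nonneg (t - 2 * (ξ j).re), sq_nonneg (ξ j).im]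
  obtain ⟨x, m, hmp, hQ⟩ := exists_pts (n := n) (∏ j, q j) (monic_prod_of_monic _ _ fun j _ => hm j)
    (by rw [natDegree_prod_of_monic _ _ fun j _ => hm j]; simp [hd, mul_comm])
    (Finset.prod_pos fun j _ => by have := hξ j; positivity) hlow
  refine ⟨x, m, hmp, fun y => ?_⟩
  have := congrArg (aeval y) hQ
  simp only [map_prod, map_add, map_pow, map_sum, map_mul, map_sub, aeval_X, aeval_C,
    Complex.coe_algebraMap] at this
  rw [← this, ← Finset.prod_mul_distrib]
  refine Finset.prod_congr rfl fun j _ => ?_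
  simp only [hq, map_add, map_pow, map_sub, aeval_X, aeval_C, Complex.coe_algebraMap]
  apply Complex.ext <;> simp [pow_two] <;> ring
end ptsC

lemma half_bound (x ζ : ℂ) (hζ : ζ.im < 0) : ∃ K > 0, ∀ y : ℂ, 0 < y.im → ‖y - x‖ ≤ K * ‖y - ζ‖ := by
  refine ⟨1 + ‖ζ - x‖ / (-ζ.im), by have : 0 < -ζ.im := by linarith
                                    positivity, fun y hy => ?_⟩
  have h1 : -ζ.im ≤ ‖y - ζ‖ := by
    have := Complex.abs_im_le_norm (y - ζ)
    rw [Complex.sub_im] at this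
    linarith [le_abs_self (y.im - ζ.im)]
  have h2 : ‖y - x‖ ≤ ‖y - ζ‖ + ‖ζ - x‖ := by
    have := norm_add_le (y - ζ) (ζ - x); simpa using this
  have h0 : 0 < -ζ.im := by linarith
  have h3 : ‖ζ - x‖ ≤ ‖ζ - x‖ / (-ζ.im) * ‖y - ζ‖ := by
    rw [div_mul_eq_mul_div, le_div_iff₀ h0]; gcongr
  linarith

lemma half_lower (y ζ : ℂ) (hy : 0 < y.im) (hζ : ζ.im < 0) : -ζ.im ≤ ‖y - ζ‖ := by
  have := Complex.abs_im_le_norm (y - ζ)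
  rw [Complex.sub_im] at this
  linarith [le_abs_self (y.im - ζ.im)]

lemma half_M (x : ℝ) (ζ : ℂ) (hζ : ζ.im < 0) : ∃ M > 0, ∀ y : ℂ, 0 < y.im →
    1 ≤ M * (‖y + Complex.I‖ * ‖y - ζ‖) ∧ ‖y - x‖ ^ 2 ≤ M * (‖y + Complex.I‖ * ‖y - ζ‖) := by
  obtain ⟨K, hK, h1⟩ := half_bound x ζ hζ
  obtain ⟨K', hK', h2⟩ := half_bound x (-Complex.I) (by simp)
  have h0 : 0 < -ζ.im := by linarith
  refine ⟨1 / (-ζ.im) + K * K', by positivity, fun y hy => ?_⟩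
  have a1 := h1 y hy
  have a2 := h2 y hy
  have a3 := half_lower y ζ hy hζ
  have a4 := half_lower y (-Complex.I) hy (by simp)
  simp only [sub_neg_eq_add, Complex.neg_im, Complex.I_im, neg_neg] at a2 a4
  have a5 : 1 ≤ 1 / (-ζ.im) * (‖y + Complex.I‖ * ‖y - ζ‖) := by
    rw [div_mul_eq_mul_div, le_div_iff₀ h0, one_mul, one_mul]
    nlinarith
  have a6 : ‖y - x‖ ^ 2 ≤ K * K' * (‖y + Complex.I‖ * ‖y - ζ‖) := by
    calc _ = ‖y - x‖ * ‖y - x‖ := by ring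
      _ ≤ (K * ‖y - ζ‖) * (K' * ‖y + Complex.I‖) := by gcongr
      _ = _ := by ring
  have a7 : 0 ≤ K * K' * (‖y + Complex.I‖ * ‖y - ζ‖) := by positivity
  constructor
  · linarith [add_mul (1 / (-ζ.im)) (K * K') (‖y + Complex.I‖ * ‖y - ζ‖)]
  · linarith [add_mul (1 / (-ζ.im)) (K * K') (‖y + Complex.I‖ * ‖y - ζ‖)]

lemma cay_one_sub {y : ℂ} (hy : 0 < y.im) :
    1 - ‖(y - Complex.I) / (y + Complex.I)‖ ^ 2 = 4 * y.im / ‖y + Complex.I‖ ^ 2 := by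
  have hne : y + Complex.I ≠ 0 := fun h => by
    have := congrArg Complex.im h; simp at this; linarith
  have hp : 0 < ‖y + Complex.I‖ := norm_pos_iff.2 hne
  rw [norm_div, div_pow]
  field_simp
  rw [← Complex.normSq_eq_norm_sq, ← Complex.normSq_eq_norm_sq, Complex.normSq_apply, Complex.normSq_apply]
  simp; ring

lemma xw_im {w : ℂ} (hw : ‖w‖ < 1) :
    (Complex.I * (1 + w) / (1 - w)).im = (1 - ‖w‖ ^ 2) / ‖1 - w‖ ^ 2 := by
  rw [← Complex.normSq_eq_norm_sq, ← Complex.normSq_eq_norm_sq, Complex.div_im, Complex.normSq_apply w]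
  simp; ring

noncomputable def RR {n : ℕ} (x m : Fin n → ℝ) (y : ℂ) : ℂ := y - ∑ j, (m j : ℂ) / (y - x j)

lemma y_ne {y : ℂ} (hy : 0 < y.im) (x : ℝ) : y - x ≠ 0 := fun h => by
  have := congrArg Complex.im h; simp at this; linarith

lemma RR_im {n : ℕ} (x m : Fin n → ℝ) (y : ℂ) :
    (RR x m y).im = y.im * (1 + ∑ j, m j / ‖y - x j‖ ^ 2) := by
  rw [RR, Complex.sub_im, Complex.im_sum, mul_add, Finset.mul_sum, mul_one, sub_eq_add_neg, ← Finset.sum_neg_distrib]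
  congr 1
  refine Finset.sum_congr rfl fun j _ => ?_
  rw [← Complex.normSq_eq_norm_sq, Complex.div_im]; simp; ring

lemma RR_deriv {n : ℕ} (x m : Fin n → ℝ) {y : ℂ} (hy : 0 < y.im) :
    HasDerivAt (RR x m) (1 + ∑ j, (m j : ℂ) / (y - x j) ^ 2) y := by
  have : HasDerivAt (RR x m) (1 - ∑ j, (-((m j : ℂ) / (y - x j) ^ 2))) y := by
    refine (hasDerivAt_id y).sub (HasDerivAt.fun_sum fun j _ => ?_)
    have := ((hasDerivAt_const y (m j : ℂ)).div ((hasDerivAt_id y).sub_const (x j : ℂ)) (y_ne hy _))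
    convert! this using 1
    simp; ring
  simpa using this

lemma lemmaD {n : ℕ} (w : Fin n → ℂ) (hw : ∀ j, ‖w j‖ < 1) :
    ∃ (G k : ℂ → ℂ) (c : ℝ), 0 < c ∧ DifferentiableOn ℂ G (ball 0 1) ∧ DifferentiableOn ℂ k (ball 0 1) ∧
      (∀ z ∈ ball (0:ℂ) 1, ‖G z‖ < 1 ∧ deriv G z = (∏ j, (z - w j)) * k z ∧
        c * (1 - ‖G z‖ ^ 2) ≤ (1 - ‖z‖ ^ 2) * ‖k z‖) := by
  have hne : ∀ z : ℂ, ‖z‖ < 1 → 1 - z ≠ 0 := fun z hz h => by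
    have : z = 1 := (sub_eq_zero.1 h).symm
    rw [this] at hz; simp at hz
  set Y : ℂ → ℂ := fun z => Complex.I * (1 + z) / (1 - z) with hY
  have hYim : ∀ z, ‖z‖ < 1 → 0 < (Y z).im := fun z hz => by
    rw [hY]; simp only; rw [xw_im hz]
    have := norm_pos_iff.2 (hne z hz)
    have : 0 < 1 - ‖z‖ ^ 2 := by nlinarith [norm_nonneg z]
    positivity
  have hYd : ∀ z, ‖z‖ < 1 → HasDerivAt Y (2 * Complex.I / (1 - z) ^ 2) z := fun z hz => by
    have := (((hasDerivAt_id z).const_add 1).const_mul Complex.I).div ((hasDerivAt_id z).const_sub 1) (hne z hz)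
    convert! this using 1
    simp; ring
  set ξ : Fin n → ℂ := fun j => Y (w j) with hξ
  obtain ⟨x, m, hm, hQ⟩ := exists_pts_C ξ (fun j => hYim _ (hw j))
  choose M hM0 hM using fun j => half_M (x j) ((starRingEnd ℂ) (ξ j)) (by
    rw [Complex.conj_im]; linarith [hYim _ (hw j)])
  set G : ℂ → ℂ := fun z => (RR x m (Y z) - Complex.I) / (RR x m (Y z) + Complex.I) with hG
  set k : ℂ → ℂ := fun z => 2 * Complex.I / (RR x m (Y z) + Complex.I) ^ 2 * (2 * Complex.I / (1 - z) ^ 2) *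
    ((∏ j, (2 * Complex.I / ((1 - z) * (1 - w j)))) * (∏ j, (Y z - (starRingEnd ℂ) (ξ j))) /
      (∏ j, (Y z - x j)) ^ 2) with hk
  have hRim : ∀ z, ‖z‖ < 1 → 0 < (RR x m (Y z)).im := fun z hz => by
    rw [RR_im]
    have h1 := hYim z hz
    have : 0 ≤ ∑ j, m j / ‖Y z - x j‖ ^ 2 := Finset.sum_nonneg fun j _ => by have := hm j; positivity
    positivity
  have hRI : ∀ z, ‖z‖ < 1 → RR x m (Y z) + Complex.I ≠ 0 := fun z hz h => by
    have := congrArg Complex.im h; simp at this; linarith [hRim z hz]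
  have hGd : ∀ z, ‖z‖ < 1 → HasDerivAt G (2 * Complex.I / (RR x m (Y z) + Complex.I) ^ 2 *
      ((1 + ∑ j, (m j : ℂ) / (Y z - x j) ^ 2) * (2 * Complex.I / (1 - z) ^ 2))) z := fun z hz => by
    have h1 : HasDerivAt (fun z => RR x m (Y z)) _ z := (RR_deriv x m (hYim z hz)).comp z (hYd z hz)
    have := (h1.sub_const Complex.I).div (h1.add_const Complex.I) (hRI z hz)
    convert! this using 1
    have := hRI z hz
    field_simp; ring
  have hN : ∀ z, ‖z‖ < 1 → ∏ j, (Y z - x j) ≠ 0 := fun z hz =>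
    Finset.prod_ne_zero_iff.2 fun j _ => y_ne (hYim z hz) _
  have hNA : ∀ z, ∀ j, ∏ i, (Y z - x i) = (Y z - x j) * ∏ i ∈ Finset.univ.erase j, (Y z - x i) := fun z j =>
    (Finset.mul_prod_erase Finset.univ _ (Finset.mem_univ j)).symm
  have hR' : ∀ z, ‖z‖ < 1 → 1 + ∑ j, (m j : ℂ) / (Y z - x j) ^ 2 =
      (∏ j, (Y z - ξ j)) * (∏ j, (Y z - (starRingEnd ℂ) (ξ j))) / (∏ j, (Y z - x j)) ^ 2 := fun z hz => by
    rw [hQ, add_div, div_self (pow_ne_zero _ (hN z hz)), Finset.sum_div]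
    congr 1
    refine Finset.sum_congr rfl fun j _ => ?_
    have h1 := hN z hz
    rw [hNA z j] at h1 ⊢
    rw [mul_pow, mul_div_mul_right _ _ (pow_ne_zero 2 (right_ne_zero_of_mul h1))]
  have hYsub : ∀ z, ‖z‖ < 1 → ∀ j, Y z - ξ j = (z - w j) * (2 * Complex.I / ((1 - z) * (1 - w j))) := fun z hz j => by
    have h1 := hne z hz
    have h2 := hne _ (hw j)
    simp only [hξ, hY]
    field_simp; ring
  set c : ℝ := ((1 + ∑ j, m j) * ∏ j, (2 * M j))⁻¹ with hc
  have hms : 0 ≤ ∑ j, m j := Finset.sum_nonneg fun j _ => (hm j).le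
  have hMp : 0 < ∏ j, (2 * M j) := Finset.prod_pos fun j _ => by have := hM0 j; positivity
  refine ⟨G, k, c, by positivity, fun z hz => ?_, fun z hz => ?_, fun z hz => ⟨?_, ?_, ?_⟩⟩
  · exact (hGd z (by simpa using hz)).differentiableAt.differentiableWithinAt
  · have hz' : ‖z‖ < 1 := by simpa using hz
    have h1 : DifferentiableAt ℂ (fun z => RR x m (Y z)) z :=
      ((RR_deriv x m (hYim z hz')).comp z (hYd z hz')).differentiableAt
    have h2 := (hYd z hz').differentiableAt
    have h3 := hne z hz'
    have h4 := hRI z hz'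
    have h5 := hN z hz'
    have h6 : ∀ j, (1 - z) * (1 - w j) ≠ 0 := fun j => mul_ne_zero h3 (hne _ (hw j))
    refine DifferentiableAt.differentiableWithinAt ?_
    refine DifferentiableAt.mul (DifferentiableAt.mul ?_ ?_) (DifferentiableAt.div (DifferentiableAt.mul ?_ ?_) ?_ ?_)
    · exact (differentiableAt_const _).div ((h1.add_const _).pow 2) (pow_ne_zero 2 h4)
    · exact (differentiableAt_const _).div (by fun_prop) (pow_ne_zero 2 h3)
    · exact DifferentiableAt.fun_finsetProd fun j _ => (differentiableAt_const _).div (by fun_prop) (h6 j)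
    · exact DifferentiableAt.fun_finsetProd fun j _ => h2.sub_const _
    · exact (DifferentiableAt.fun_finsetProd fun j _ => h2.sub_const _).pow 2
    · exact pow_ne_zero 2 h5
  · have hz' : ‖z‖ < 1 := by simpa using hz
    have h1 := cay_one_sub (hRim z hz')
    have h2 : 0 < 4 * (RR x m (Y z)).im / ‖RR x m (Y z) + Complex.I‖ ^ 2 := by
      have := hRim z hz'
      have := norm_pos_iff.2 (hRI z hz')
      positivity
    change ‖(RR x m (Y z) - Complex.I) / (RR x m (Y z) + Complex.I)‖ < 1
    nlinarith [norm_nonneg ((RR x m (Y z) - Complex.I) / (RR x m (Y z) + Complex.I))]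
  · have hz' : ‖z‖ < 1 := by simpa using hz
    rw [(hGd z hz').deriv, hR' z hz', Finset.prod_congr rfl fun j _ => hYsub z hz' j, Finset.prod_mul_distrib, hk]
    ring
  · have hz' : ‖z‖ < 1 := by simpa using hz
    have h1 := cay_one_sub (hRim z hz')
    have h2 := xw_im hz'
    have hy := hYim z hz'
    change (Y z).im = _ at h2
    change 1 - ‖G z‖ ^ 2 = _ at h1
    have n1 : 0 < ‖1 - z‖ := norm_pos_iff.2 (hne z hz')
    have n2 : 0 < ‖RR x m (Y z) + Complex.I‖ := norm_pos_iff.2 (hRI z hz')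
    have h3 : 1 - ‖z‖ ^ 2 = (Y z).im * ‖1 - z‖ ^ 2 := by rw [h2]; field_simp
    have hYI : ‖Y z + Complex.I‖ = 2 / ‖1 - z‖ := by
      have : Y z + Complex.I = 2 * Complex.I / (1 - z) := by
        simp only [hY]; have := hne z hz'; field_simp; ring
      rw [this]; simp
    have nN : 0 < ‖∏ j, (Y z - x j)‖ := norm_pos_iff.2 (hN z hz')
    have key : c * (‖∏ j, (Y z - x j)‖ ^ 2 * (1 + ∑ j, m j / ‖Y z - x j‖ ^ 2)) ≤
        ‖∏ j, (2 * Complex.I / ((1 - z) * (1 - w j)))‖ * ‖∏ j, (Y z - (starRingEnd ℂ) (ξ j))‖ := by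
      set t : Fin n → ℝ := fun j => M j * (‖Y z + Complex.I‖ * ‖Y z - (starRingEnd ℂ) (ξ j)‖) with ht
      have ht1 : ∀ j, 1 ≤ t j := fun j => (hM j _ hy).1
      have ht2 : ∀ j, ‖Y z - x j‖ ^ 2 ≤ t j := fun j => (hM j _ hy).2
      have ht0 : ∀ j, 0 ≤ t j := fun j => zero_le_one.trans (ht1 j)
      have b1 : ‖∏ j, (Y z - x j)‖ ^ 2 ≤ ∏ j, t j := by
        rw [norm_prod, ← Finset.prod_pow]
        exact Finset.prod_le_prod (fun j _ => by positivity) fun j _ => ht2 j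
      have b2 : ∀ j, ‖∏ j, (Y z - x j)‖ ^ 2 * (m j / ‖Y z - x j‖ ^ 2) ≤ m j * ∏ j, t j := by
        intro j
        have hj : 0 < ‖Y z - x j‖ := norm_pos_iff.2 (y_ne hy _)
        rw [hNA z j, norm_mul, mul_pow]
        have e : ‖Y z - x j‖ ^ 2 * ‖∏ i ∈ Finset.univ.erase j, (Y z - x i)‖ ^ 2 * (m j / ‖Y z - x j‖ ^ 2)
          = m j * ‖∏ i ∈ Finset.univ.erase j, (Y z - x i)‖ ^ 2 := by field_simp
        rw [e]
        refine mul_le_mul_of_nonneg_left ?_ (hm j).le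
        rw [norm_prod, ← Finset.prod_pow, ← Finset.mul_prod_erase Finset.univ t (Finset.mem_univ j)]
        have : ∏ i ∈ Finset.univ.erase j, ‖Y z - x i‖ ^ 2 ≤ ∏ i ∈ Finset.univ.erase j, t i :=
          Finset.prod_le_prod (fun j _ => by positivity) fun j _ => ht2 j
        have h0 : 0 ≤ ∏ i ∈ Finset.univ.erase j, t i := Finset.prod_nonneg fun j _ => ht0 j
        nlinarith [ht1 j]
      have b3 : ‖∏ j, (Y z - x j)‖ ^ 2 * (1 + ∑ j, m j / ‖Y z - x j‖ ^ 2) ≤ (1 + ∑ j, m j) * ∏ j, t j := by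
        rw [mul_add, Finset.mul_sum, add_mul, Finset.sum_mul, mul_one, one_mul]
        exact add_le_add b1 (Finset.sum_le_sum fun j _ => b2 j)
      have b4 : ∏ j, t j ≤ (∏ j, (2 * M j)) * (‖∏ j, (2 * Complex.I / ((1 - z) * (1 - w j)))‖ * ‖∏ j, (Y z - (starRingEnd ℂ) (ξ j))‖) := by
        rw [norm_prod, norm_prod, ← Finset.prod_mul_distrib, ← Finset.prod_mul_distrib]
        refine Finset.prod_le_prod (fun j _ => ht0 j) fun j _ => ?_
        rw [norm_div, norm_mul, norm_mul, Complex.norm_I, mul_one]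
        simp only [ht]
        rw [hYI]
        have n3 : 0 < ‖1 - w j‖ := norm_pos_iff.2 (hne _ (hw j))
        have n4 : ‖1 - w j‖ ≤ 2 := by
          have := norm_sub_le (1:ℂ) (w j); rw [norm_one] at this; linarith [hw j]
        have := hM0 j
        have e : 2 / ‖1 - z‖ ≤ 2 * (‖(2:ℂ)‖ / (‖1 - z‖ * ‖1 - w j‖)) := by
          rw [Complex.norm_ofNat, ← mul_div_assoc, div_le_div_iff₀ n1 (by positivity)]
          nlinarith
        calc _ ≤ M j * (2 * (‖(2:ℂ)‖ / (‖1 - z‖ * ‖1 - w j‖)) * ‖Y z - (starRingEnd ℂ) (ξ j)‖) := by gcongr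
          _ = _ := by ring
      rw [hc, inv_mul_le_iff₀ (by positivity)]
      refine b3.trans ?_
      rw [mul_assoc]
      gcongr
    rw [h1, h3, RR_im]
    have ek : ‖k z‖ = 2 / ‖RR x m (Y z) + Complex.I‖ ^ 2 * (2 / ‖1 - z‖ ^ 2) *
       (‖∏ j, (2 * Complex.I / ((1 - z) * (1 - w j)))‖ * ‖∏ j, (Y z - (starRingEnd ℂ) (ξ j))‖ / ‖∏ j, (Y z - x j)‖ ^ 2) := by
      simp only [hk]
      rw [norm_mul, norm_mul, norm_div, norm_div, norm_div, norm_mul, norm_pow, norm_pow, norm_pow, norm_mul]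
      simp
    rw [ek]
    set T1 := ‖∏ j, (2 * Complex.I / ((1 - z) * (1 - w j)))‖ * ‖∏ j, (Y z - (starRingEnd ℂ) (ξ j))‖
    set S1 := 1 + ∑ j, m j / ‖Y z - x j‖ ^ 2
    set N1 := ‖∏ j, (Y z - x j)‖
    have e1 : c * (4 * ((Y z).im * S1) / ‖RR x m (Y z) + Complex.I‖ ^ 2) =
        4 * (Y z).im / ‖RR x m (Y z) + Complex.I‖ ^ 2 / N1 ^ 2 * (c * (N1 ^ 2 * S1)) := by
      field_simp
    have e2 : (Y z).im * ‖1 - z‖ ^ 2 * (2 / ‖RR x m (Y z) + Complex.I‖ ^ 2 * (2 / ‖1 - z‖ ^ 2) * (T1 / N1 ^ 2)) =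
        4 * (Y z).im / ‖RR x m (Y z) + Complex.I‖ ^ 2 / N1 ^ 2 * T1 := by
      field_simp; ring
    rw [e1, e2]
    gcongr

lemma order_prod {ι : Type*} (A : Finset ι) (b : ι → ℂ → ℂ) {z : ℂ} (hb : ∀ j, AnalyticAt ℂ (b j) z) :
    analyticOrderAt (fun w => ∏ j ∈ A, b j w) z = ∑ j ∈ A, analyticOrderAt (b j) z := by
  classical
  induction A using Finset.induction_on with
  | empty =>
    simp only [Finset.prod_empty, Finset.sum_empty]
    rw [AnalyticAt.analyticOrderAt_eq_zero analyticAt_const]; simp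
  | insert a s ha ih =>
    simp only [Finset.prod_insert ha, Finset.sum_insert ha]
    rw [← ih]
    exact analyticOrderAt_mul (hb a) (Finset.analyticAt_fun_prod _ fun j _ => hb j)

lemma order_prod_card {ι : Type*} [DecidableEq ι] (A : Finset ι) (b : ι → ℂ → ℂ) (a : ι → ℂ) {z : ℂ}
    (hb : ∀ j, AnalyticAt ℂ (b j) z)
    (ho : ∀ j, analyticOrderAt (b j) z = if a j = z then 1 else 0) :
    analyticOrderAt (fun w => ∏ j ∈ A, b j w) z = ((A.filter fun j => a j = z).card : ℕ∞) := by
  rw [order_prod A b hb]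
  simp [ho]

lemma card_sig_le (Z : Set ℂ) (N : ℂ → ℕ) (A : Finset (Σ a : Z, Fin (N a))) (z : ℂ) :
    (A.filter (fun j => (j.1 : ℂ) = z)).card ≤ N z := by
  classical
  by_cases hz : z ∈ Z
  · have hsub : A.filter (fun j => (j.1 : ℂ) = z) ⊆
        Finset.univ.image (fun i : Fin (N z) => (⟨⟨z, hz⟩, i⟩ : Σ a : Z, Fin (N a))) := by
      rintro ⟨⟨a, ha⟩, i⟩ hj
      simp at hj
      obtain ⟨-, rfl⟩ := hj
      simp
    refine (Finset.card_le_card hsub).trans (Finset.card_image_le.trans ?_)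
    simp
  · rw [Finset.filter_false_of_mem]
    · simp
    · rintro ⟨⟨a, ha⟩, i⟩ - h
      simp at h; exact hz (h ▸ ha)

lemma card_sig_eq (Z : Set ℂ) (N : ℂ → ℕ) {z : ℂ} (hz : z ∈ Z) :
    ∃ A₀ : Finset (Σ a : Z, Fin (N a)), ∀ A, A₀ ⊆ A → (A.filter (fun j => (j.1 : ℂ) = z)).card = N z := by
  classical
  refine ⟨Finset.univ.image (fun i : Fin (N z) => (⟨⟨z, hz⟩, i⟩ : Σ a : Z, Fin (N a))), fun A hA => ?_⟩
  refine le_antisymm (card_sig_le Z N A z) ?_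
  have h1 : (Finset.univ.image (fun i : Fin (N z) => (⟨⟨z, hz⟩, i⟩ : Σ a : Z, Fin (N a)))).card = N z := by
    rw [Finset.card_image_of_injective]
    · simp
    · intro i j h; simpa using h
  rw [← h1]
  refine Finset.card_le_card fun j hj => ?_
  rw [Finset.mem_filter]
  refine ⟨hA hj, ?_⟩
  simp at hj
  obtain ⟨i, rfl⟩ := hj
  rfl

lemma bf_analyticAt {a z : ℂ} (ha : ‖a‖ < 1) (hz : ‖z‖ < 1) : AnalyticAt ℂ (bf a) z :=
  diffOn_analyticAt (fun w hw => (bf_diffAt ha (by simpa using (mem_ball_zero_iff.1 hw).le)).differentiableWithinAt) hz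

lemma bf_order {a z : ℂ} (ha0 : a ≠ 0) (ha : ‖a‖ < 1) (hz : ‖z‖ < 1) :
    analyticOrderAt (bf a) z = if a = z then 1 else 0 := by
  have han := bf_analyticAt ha hz
  have hc : -(((‖a‖ : ℝ) : ℂ) / a) ≠ 0 := by
    rw [neg_ne_zero]; exact div_ne_zero (by simpa using ha0) ha0
  split_ifs with h
  · subst h
    refine AnalyticAt.analyticOrderAt_eq_one_of_zero_deriv_ne_zero han ?_ ?_
    · simp [bf]
    · have : bf a = fun z => -(((‖a‖ : ℝ) : ℂ) / a) * mb a z := funext (bf_eq a)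
      rw [this, deriv_const_mul _ (mb_hasDerivAt ha ha.le).differentiableAt]
      exact mul_ne_zero hc (mb_deriv_ne ha ha)
  · rw [han.analyticOrderAt_eq_zero, bf_eq, mb]
    exact mul_ne_zero hc (div_ne_zero (sub_ne_zero.2 (Ne.symm h)) (one_sub_ne ha hz.le))

lemma le_one_of_bdry {p S F : ℂ → ℂ} (hp : ContinuousOn p (closedBall 0 1)) (h1 : ∀ z, ‖z‖ = 1 → ‖p z‖ = 1)
    (hS : DifferentiableOn ℂ S (ball 0 1)) (hF : ∀ z ∈ ball (0:ℂ) 1, ‖F z‖ ≤ 1)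
    (he : ∀ z ∈ ball (0:ℂ) 1, F z = p z * S z) : ∀ z ∈ ball (0:ℂ) 1, ‖S z‖ ≤ 1 := by
  intro z hz
  have hz' : ‖z‖ < 1 := by simpa using hz
  have key : ∀ ε : ℝ, 0 < ε → ε < 1 → (1 - ε) * ‖S z‖ ≤ 1 := by
    intro ε h0 hε
    obtain ⟨ρ₀, hρ₀, hn⟩ := near_circle hp h1 h0
    obtain ⟨ρ, hρ1, hρ2⟩ := exists_between (max_lt (max_lt hρ₀ hz') zero_lt_one)
    have a1 : ρ₀ < ρ := lt_of_le_of_lt ((le_max_left _ _).trans (le_max_left _ _)) hρ1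
    have a2 : ‖z‖ < ρ := lt_of_le_of_lt ((le_max_right _ _).trans (le_max_left _ _)) hρ1
    have a3 : 0 < ρ := lt_of_le_of_lt (le_max_right _ _) hρ1
    have hd : DiffContOnCl ℂ S (ball 0 ρ) := by
      apply DifferentiableOn.diffContOnCl
      rw [closure_ball _ a3.ne']
      exact hS.mono (closedBall_subset_ball hρ2)
    have := Complex.norm_le_of_forall_mem_frontier_norm_le (C := (1 - ε)⁻¹) isBounded_ball hd (fun y hy => by
      rw [frontier_ball _ a3.ne'] at hy
      have hy' : ‖y‖ = ρ := by simpa using hy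
      have hyD : y ∈ ball (0:ℂ) 1 := by simp [hy', hρ2]
      have b1 := hn y (by rw [hy']; exact a1) (by rw [hy']; exact hρ2)
      have b2 := hF y hyD
      rw [he y hyD, norm_mul] at b2
      rw [← one_div, le_div_iff₀ (by linarith)]
      nlinarith [norm_nonneg (S y)]) (subset_closure (show z ∈ ball 0 ρ by simpa using a2))
    rw [← one_div, le_div_iff₀ (by linarith)] at this
    linarith
  by_contra hcon
  push Not at hcon
  have hSp : 0 < ‖S z‖ := by linarith
  have := key ((‖S z‖ - 1) / (2 * ‖S z‖)) (div_pos (by linarith) (by linarith)) (by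
    rw [div_lt_one (by linarith)]; linarith)
  have e : (1 - (‖S z‖ - 1) / (2 * ‖S z‖)) * ‖S z‖ = (‖S z‖ + 1) / 2 := by field_simp; ring
  rw [e] at this
  linarith

lemma eq_of_mul_eq {p S T : ℂ → ℂ} (hp : DifferentiableOn ℂ p (ball 0 1)) (hnz : ∃ z ∈ ball (0:ℂ) 1, p z ≠ 0)
    (hS : DifferentiableOn ℂ S (ball 0 1)) (hT : DifferentiableOn ℂ T (ball 0 1))
    (he : ∀ z ∈ ball (0:ℂ) 1, p z * S z = p z * T z) : ∀ z ∈ ball (0:ℂ) 1, S z = T z := by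
  intro z hz
  have h1 : Tendsto S (𝓝[≠] z) (𝓝 (S z)) :=
    ((hS.differentiableAt (isOpen_ball.mem_nhds hz)).continuousAt).continuousWithinAt.tendsto
  have h2 : Tendsto T (𝓝[≠] z) (𝓝 (T z)) :=
    ((hT.differentiableAt (isOpen_ball.mem_nhds hz)).continuousAt).continuousWithinAt.tendsto
  refine tendsto_nhds_unique_of_eventuallyEq h1 h2 ?_
  filter_upwards [eventually_ne_zero hp hnz hz, nhdsWithin_le_nhds (isOpen_ball.mem_nhds hz)] with w hw hwD
  exact mul_left_cancel₀ hw (he w hwD)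

lemma order_split {p S F : ℂ → ℂ} (hp : DifferentiableOn ℂ p (ball 0 1)) (hS : DifferentiableOn ℂ S (ball 0 1))
    (he : ∀ z ∈ ball (0:ℂ) 1, F z = p z * S z) {z : ℂ} (hz : z ∈ ball (0:ℂ) 1) :
    analyticOrderAt F z = analyticOrderAt p z + analyticOrderAt S z := by
  have hz' : ‖z‖ < 1 := by simpa using hz
  rw [← analyticOrderAt_mul (diffOn_analyticAt hp hz') (diffOn_analyticAt hS hz')]
  refine analyticOrderAt_congr ?_
  filter_upwards [isOpen_ball.mem_nhds hz] with w hw using he w hw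

lemma ne_zero_of_order {p S F : ℂ → ℂ} (hp : DifferentiableOn ℂ p (ball 0 1)) (hS : DifferentiableOn ℂ S (ball 0 1))
    (hF : DifferentiableOn ℂ F (ball 0 1)) (hnz : ∃ z ∈ ball (0:ℂ) 1, F z ≠ 0)
    (he : ∀ z ∈ ball (0:ℂ) 1, F z = p z * S z) {z : ℂ} (hz : z ∈ ball (0:ℂ) 1)
    (ho : analyticOrderAt p z = analyticOrderAt F z) : S z ≠ 0 := by
  have hz' : ‖z‖ < 1 := by simpa using hz
  have h1 := order_split hp hS he hz
  rw [← ho] at h1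
  have h2 : analyticOrderAt p z ≠ ⊤ := by rw [ho]; exact order_ne_top hF hnz hz
  rw [← (diffOn_analyticAt hS hz').analyticOrderAt_eq_zero]
  have : analyticOrderAt p z + 0 = analyticOrderAt p z + analyticOrderAt S z := by rw [add_zero]; exact h1
  exact (WithTop.add_left_cancel h2 this).symm

lemma order_nat {F : ℂ → ℂ} (hF : DifferentiableOn ℂ F (ball 0 1)) (hnz : ∃ z ∈ ball (0:ℂ) 1, F z ≠ 0)
    {z : ℂ} (hz : z ∈ ball (0:ℂ) 1) : ((analyticOrderNatAt F z : ℕ) : ℕ∞) = analyticOrderAt F z :=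
  ENat.natCast_toNat (order_ne_top hF hnz hz)

lemma pow_order (m : ℕ) (z : ℂ) : analyticOrderAt (fun w : ℂ => w ^ m) z = if z = 0 then (m : ℕ∞) else 0 := by
  have h : AnalyticAt ℂ (fun w : ℂ => w) z := analyticAt_id
  split_ifs with h0
  · subst h0
    have := analyticOrderAt_pow (n := m) h
    have e : ((fun w : ℂ => w) ^ m) = fun w : ℂ => w ^ m := rfl
    rw [e] at this
    rw [this]
    have : analyticOrderAt (fun w : ℂ => w) 0 = 1 := analyticOrderAt_id
    rw [this]; simp
  · have h' : AnalyticAt ℂ (fun w : ℂ => w ^ m) z := h.pow m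
    rw [h'.analyticOrderAt_eq_zero]
    exact pow_ne_zero m h0

lemma factor {F : ℂ → ℂ} (hF : DifferentiableOn ℂ F (ball 0 1)) (hle : ∀ z ∈ ball (0:ℂ) 1, ‖F z‖ ≤ 1)
    (hnz : ∃ z ∈ ball (0:ℂ) 1, F z ≠ 0) :
    ∃ (m : ℕ) (ι : Type) (a : ι → ℂ) (S : ℂ → ℂ), (∀ j, a j ≠ 0 ∧ ‖a j‖ < 1) ∧
      Summable (fun j => 1 - ‖a j‖) ∧ DifferentiableOn ℂ S (ball 0 1) ∧ (∀ z ∈ ball (0:ℂ) 1, ‖S z‖ ≤ 1) ∧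
      (∀ z ∈ ball (0:ℂ) 1, S z ≠ 0) ∧
      ∀ z ∈ ball (0:ℂ) 1, F z = z ^ m * (∏' j, bf (a j) z) * S z := by
  classical
  set Z : Set ℂ := ball (0:ℂ) 1 \ {0} with hZ
  set N : ℂ → ℕ := fun z => analyticOrderNatAt F z with hN
  set m := N 0 with hm
  let ι : Type := Σ a : Z, Fin (N a)
  let a : ι → ℂ := fun j => j.1
  have ha : ∀ j, a j ≠ 0 ∧ ‖a j‖ < 1 := fun j => by
    have := j.1.2
    exact ⟨this.2, by simpa using this.1⟩
  set p : Finset ι → ℂ → ℂ := fun A z => z ^ m * ∏ j ∈ A, bf (a j) z with hp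
  have hpdA : ∀ A z, ‖z‖ ≤ 1 → DifferentiableAt ℂ (p A) z := fun A z hz =>
    (differentiableAt_pow m).mul (prod_bf_diffAt ha A hz)
  have hpd : ∀ A, DifferentiableOn ℂ (p A) (ball 0 1) := fun A z hz =>
    (hpdA A z (by simpa using (mem_ball_zero_iff.1 hz).le)).differentiableWithinAt
  have hpo : ∀ A z, z ∈ ball (0:ℂ) 1 → analyticOrderAt (p A) z =
      (if z = 0 then (m : ℕ∞) else 0) + ((A.filter fun j => a j = z).card : ℕ∞) := by
    intro A z hz
    have hz' : ‖z‖ < 1 := by simpa using hz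
    have hb : ∀ j, AnalyticAt ℂ (bf (a j)) z := fun j => bf_analyticAt (ha j).2 hz'
    rw [← pow_order m z, ← order_prod_card A (fun j => bf (a j)) a hb
      (fun j => bf_order (ha j).1 (ha j).2 hz')]
    exact analyticOrderAt_mul (analyticAt_id.pow m) (Finset.analyticAt_fun_prod _ fun j _ => hb j)
  have hple : ∀ A z, z ∈ ball (0:ℂ) 1 → analyticOrderAt (p A) z ≤ analyticOrderAt F z := by
    intro A z hz
    rw [hpo A z hz, ← order_nat hF hnz hz]
    split_ifs with h0
    · subst h0
      rw [Finset.filter_false_of_mem fun j _ => (ha j).1]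
      simp [hm, hN]
    · rw [zero_add]
      exact_mod_cast card_sig_le Z N A z
  have hpnz : ∀ A, ∃ z ∈ ball (0:ℂ) 1, p A z ≠ 0 := by
    intro A
    obtain ⟨z, hz, hFz⟩ := hnz
    have hz' : ‖z‖ < 1 := by simpa using hz
    refine ⟨z, hz, ?_⟩
    have h1 := hple A z hz
    rw [(diffOn_analyticAt hF hz').analyticOrderAt_eq_zero.2 hFz] at h1
    exact (diffOn_analyticAt (hpd A) hz').analyticOrderAt_eq_zero.1 (le_antisymm h1 (zero_le))
  have hex : ∀ A, ∃ S : ℂ → ℂ, DifferentiableOn ℂ S (ball 0 1) ∧ ∀ z ∈ ball (0:ℂ) 1, F z = S z * p A z :=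
    fun A => exists_div hF (hpd A) (hpnz A) (hple A)
  choose SA hSd hSe' using hex
  have hSe : ∀ A, ∀ z ∈ ball (0:ℂ) 1, F z = p A z * SA A z := fun A z hz => by rw [hSe' A z hz]; ring
  have hS1 : ∀ A, ∀ z ∈ ball (0:ℂ) 1, ‖SA A z‖ ≤ 1 := fun A =>
    le_one_of_bdry (p := p A) (fun z hz => (hpdA A z (by simpa using hz)).continuousAt.continuousWithinAt)
      (fun z hz => by
        simp only [hp]
        rw [norm_mul, norm_pow, hz, norm_prod,
          Finset.prod_congr rfl (fun j _ => bf_norm_circle (ha j).1 (ha j).2 hz)]; simp) (hSd A) hle (hSe A)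
  have hbd : ∀ A : Finset ι, DifferentiableOn ℂ (fun z => ∏ j ∈ A, bf (a j) z) (ball 0 1) := fun A z hz =>
    (prod_bf_diffAt ha A (by simpa using (mem_ball_zero_iff.1 hz).le)).differentiableWithinAt
  have hrel : ∀ A₀ A, A₀ ⊆ A → ∀ z ∈ ball (0:ℂ) 1, SA A₀ z = (∏ j ∈ A \ A₀, bf (a j) z) * SA A z := by
    intro A₀ A hsub
    refine eq_of_mul_eq (hpd A₀) (hpnz A₀) (hSd A₀) ((hbd _).mul (hSd A)) fun z hz => ?_
    rw [← hSe A₀ z hz, hSe A z hz]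
    simp only [hp]
    rw [← Finset.prod_sdiff hsub]; ring
  have h0D : (0:ℂ) ∈ ball (0:ℂ) 1 := by simp
  have hS0 : SA ∅ 0 ≠ 0 := by
    refine ne_zero_of_order (hpd ∅) (hSd ∅) hF hnz (hSe ∅) h0D ?_
    rw [hpo ∅ 0 h0D, ← order_nat hF hnz h0D]
    simp [hm, hN]
  have hsum : Summable (fun j => 1 - ‖a j‖) := by
    refine summable_of_sum_le (c := - Real.log ‖SA ∅ 0‖) (fun j => by simp; exact (ha j).2.le) fun A => ?_
    have h1 := hrel ∅ A (by simp) 0 h0D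
    have h2 : ‖SA ∅ 0‖ ≤ ∏ j ∈ A, ‖a j‖ := by
      rw [h1, norm_mul, Finset.sdiff_empty, norm_prod]
      have : ∀ j, ‖bf (a j) 0‖ = ‖a j‖ := fun j => by rw [bf_zero (ha j).1]; simp
      simp only [this]
      exact mul_le_of_le_one_right (Finset.prod_nonneg fun j _ => norm_nonneg _) (hS1 A 0 h0D)
    have h3 := Real.log_le_log (norm_pos_iff.2 hS0) h2
    rw [Real.log_prod (fun j _ => (norm_pos_iff.2 (ha j).1).ne')] at h3
    have h4 : ∑ j ∈ A, (1 - ‖a j‖) ≤ ∑ j ∈ A, (- Real.log ‖a j‖) :=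
      Finset.sum_le_sum fun j _ => by linarith [Real.log_le_sub_one_of_pos (norm_pos_iff.2 (ha j).1)]
    rw [Finset.sum_neg_distrib] at h4
    linarith
  set U : Ultrafilter (Finset ι) := Ultrafilter.of (atTop : Filter (Finset ι)) with hU
  have hUle : (U : Filter (Finset ι)) ≤ atTop := Ultrafilter.of_le _
  obtain ⟨S, hSdd, hSle, hSlim, -⟩ := normal_family U SA (fun ρ hρ => Eventually.of_forall fun A =>
    ⟨(hSd A).mono (ball_subset_ball hρ.le), fun z hz => hS1 A z (ball_subset_ball hρ.le hz)⟩)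
  refine ⟨m, ι, a, S, ha, hsum, hSdd, hSle, fun z hz => ?_, fun z hz => ?_⟩
  · have hz' : ‖z‖ < 1 := by simpa using hz
    have : ∃ A₀, SA A₀ z ≠ 0 := by
      by_cases h0 : z = 0
      · exact ⟨∅, by rw [h0]; exact hS0⟩
      · obtain ⟨A₀, hA₀⟩ := card_sig_eq Z N (z := z) ⟨hz, h0⟩
        refine ⟨A₀, ne_zero_of_order (hpd A₀) (hSd A₀) hF hnz (hSe A₀) hz ?_⟩
        rw [hpo A₀ z hz, ← order_nat hF hnz hz, if_neg h0, zero_add]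
        exact_mod_cast hA₀ A₀ subset_rfl
    obtain ⟨A₀, hA₀⟩ := this
    have : ‖SA A₀ z‖ ≤ ‖S z‖ := by
      refine ge_of_tendsto (hSlim z hz).norm ?_
      filter_upwards [hUle (eventually_ge_atTop A₀)] with A hA
      rw [hrel A₀ A hA z hz, norm_mul]
      exact mul_le_of_le_one_left (norm_nonneg _) (prod_bf_le ha _ hz')
    exact norm_pos_iff.1 (lt_of_lt_of_le (norm_pos_iff.2 hA₀) this)
  · have hz' : ‖z‖ < 1 := by simpa using hz
    have h1 : Tendsto (fun A : Finset ι => ∏ j ∈ A, bf (a j) z) U (𝓝 (∏' j, bf (a j) z)) :=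
      Filter.Tendsto.mono_left (bf_multipliable ha hsum hz').hasProd hUle
    have h2 : Tendsto (fun A : Finset ι => z ^ m * (∏ j ∈ A, bf (a j) z) * SA A z) U
        (𝓝 (z ^ m * (∏' j, bf (a j) z) * S z)) := (tendsto_const_nhds.mul h1).mul (hSlim z hz)
    refine tendsto_nhds_unique ?_ h2
    refine tendsto_const_nhds.congr fun A => ?_
    rw [hSe A z hz]

lemma subLap_F {F : ℂ → ℂ} {z : ℂ} (hF : AnalyticAt ℂ F z) (h1 : ‖F z‖ < 1) {s : ℝ} (hs : 0 < s)
    (hle : ‖F z‖ ≤ s) :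
    ∃ L, (‖deriv F z‖ / (2 * (1 - ‖F z‖) * Real.sqrt s)) ^ 2 ≤ L ∧
      SubLap (fun w => - Real.log (1 - ‖F w‖)) z L := by
  by_cases h0 : F z = 0
  · refine ⟨(1 / (4 * s)) * ‖deriv F z‖ ^ 2, ?_, ?_⟩
    · rw [h0, norm_zero, div_pow, mul_pow, Real.sq_sqrt hs.le]
      apply le_of_eq; field_simp; norm_num
    · refine (SubLap.sq_norm_zero hF h0 (1 / (4 * s))).mono_fun ?_ (by simp [h0])
      have hc : Tendsto (fun w => ‖F w‖) (𝓝 z) (𝓝 0) := by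
        have := hF.continuousAt.norm; rwa [ContinuousAt, h0, norm_zero] at this
      filter_upwards [hc.eventually_lt_const (show (0:ℝ) < min 1 (4 * s) by positivity)] with w hw
      have a1 : ‖F w‖ < 1 := lt_of_lt_of_le hw (min_le_left _ _)
      have a2 : ‖F w‖ < 4 * s := lt_of_lt_of_le hw (min_le_right _ _)
      have a3 := Real.log_le_sub_one_of_pos (show 0 < 1 - ‖F w‖ by linarith)
      have a4 : 1 / (4 * s) * ‖F w‖ ^ 2 ≤ ‖F w‖ := by
        rw [one_div, inv_mul_le_iff₀ (by positivity)]
        nlinarith [norm_nonneg (F w)]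
      linarith
  · have hp : 0 < ‖F z‖ := norm_pos_iff.2 h0
    set g : ℂ → ℂ := fun w => (Real.sqrt ‖F z‖ : ℂ) * Complex.exp ((1/2) * Complex.log (F w / F z)) with hg
    have hsl : F z / F z ∈ Complex.slitPlane := by rw [div_self h0]; exact Complex.one_mem_slitPlane
    have hgA : AnalyticAt ℂ g z := by
      refine analyticAt_const.mul (AnalyticAt.cexp (analyticAt_const.mul (AnalyticAt.clog
        (hF.div analyticAt_const h0) hsl)))
    have hsqp : 0 < Real.sqrt ‖F z‖ := Real.sqrt_pos.2 hp
    have hgn : ∀ᶠ w in 𝓝 z, ‖g w‖ ^ 2 = ‖F w‖ := by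
      filter_upwards [hF.continuousAt.eventually_ne h0] with w hw
      simp only [hg]
      rw [norm_mul, mul_pow, ← norm_pow (Complex.exp _), ← Complex.exp_nat_mul]
      have : ((2:ℕ):ℂ) * (1/2 * Complex.log (F w / F z)) = Complex.log (F w / F z) := by push_cast; ring
      rw [this, Complex.exp_log (div_ne_zero hw h0), norm_div, Complex.norm_real, Real.norm_eq_abs, sq_abs,
        Real.sq_sqrt hp.le]
      field_simp
    have hgz : g z = Real.sqrt ‖F z‖ := by simp [hg, div_self h0]
    have hgz' : ‖g z‖ = Real.sqrt ‖F z‖ := by rw [hgz]; simp [abs_of_pos hsqp]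
    have hgd : deriv g z = (Real.sqrt ‖F z‖ : ℂ) * ((1/2) * (deriv F z / F z)) := by
      have h2 : HasDerivAt (fun w => F w / F z) (deriv F z / F z) z := hF.differentiableAt.hasDerivAt.div_const _
      have h3 := ((h2.clog hsl).const_mul (1/2 : ℂ)).cexp.const_mul (Real.sqrt ‖F z‖ : ℂ)
      rw [div_self h0] at h3
      have := h3.deriv
      simp only [hg]
      rw [this]
      simp
    have hlt : ‖g z‖ < 1 := by rw [hgz']; rw [Real.sqrt_lt' one_pos]; simpa using h1
    refine ⟨_, ?_, (SubLap.log_one_sub hgA hlt (-1) (Or.inr rfl)).congr ?_⟩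
    · rw [hgd, hgz', Real.sq_sqrt hp.le, neg_neg, one_mul]
      have hq : ‖(Real.sqrt ‖F z‖ : ℂ) * ((1/2) * (deriv F z / F z))‖ = ‖deriv F z‖ / (2 * Real.sqrt ‖F z‖) := by
        rw [norm_mul, norm_mul, norm_div, norm_div (deriv F z), Complex.norm_real, Real.norm_eq_abs, abs_of_pos hsqp]
        have : ‖F z‖ = Real.sqrt ‖F z‖ ^ 2 := (Real.sq_sqrt hp.le).symm
        generalize hx : Real.sqrt ‖F z‖ = x at *
        rw [this]
        norm_num
        field_simp
      rw [hq]
      have hpos : 0 < 1 - ‖F z‖ := by linarith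
      refine pow_le_pow_left₀ (by positivity) ?_ 2
      rw [div_div]
      refine div_le_div_of_nonneg_left (norm_nonneg _) (by positivity) ?_
      nlinarith [Real.sqrt_le_sqrt hle]
    · filter_upwards [hgn] with w hw
      rw [hw]; ring

lemma ahlfors {F S u p G k : ℂ → ℂ} {r c : ℝ} (hr : 0 < r) (hr1 : r < 1) (hc : 0 < c)
    (hF : DifferentiableOn ℂ F (ball 0 1)) (hS : DifferentiableOn ℂ S (ball 0 1))
    (hu : DifferentiableOn ℂ u (ball 0 1))
    (hG : DifferentiableOn ℂ G (ball 0 r)) (hk : DifferentiableOn ℂ k (ball 0 r))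
    (hF1 : ∀ z ∈ ball (0:ℂ) 1, ‖F z‖ < 1) (hS0 : ∀ z ∈ ball (0:ℂ) 1, S z ≠ 0)
    (hFS : ∀ z ∈ ball (0:ℂ) 1, ‖F z‖ ≤ ‖S z‖)
    (hFu : ∀ z ∈ ball (0:ℂ) 1, deriv F z = p z * u z)
    (hu0 : ∀ z ∈ ball (0:ℂ) r, u z ≠ 0)
    (hG1 : ∀ z ∈ ball (0:ℂ) r, ‖G z‖ < 1)
    (hGk : ∀ z ∈ ball (0:ℂ) r, deriv G z = p z * k z)
    (hGc : ∀ z ∈ ball (0:ℂ) r, c * (1 - ‖G z‖ ^ 2) ≤ (r ^ 2 - ‖z‖ ^ 2) * ‖k z‖) :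
    ∀ z ∈ ball (0:ℂ) r, ‖u z‖ * (1 - ‖G z‖ ^ 2) ≤ 2 * (1 - ‖F z‖) * Real.sqrt ‖S z‖ * ‖k z‖ := by
  have hsub : ball (0:ℂ) r ⊆ ball 0 1 := ball_subset_ball hr1.le
  have hk0 : ∀ z ∈ ball (0:ℂ) r, 0 < ‖k z‖ := by
    intro z hz
    by_contra h
    have h0 : ‖k z‖ = 0 := le_antisymm (not_lt.1 h) (norm_nonneg _)
    have := hGc z hz
    rw [h0, mul_zero] at this
    nlinarith [one_sub_sq_pos (hG1 z hz)]
  have hSp : ∀ z ∈ ball (0:ℂ) 1, 0 < Real.sqrt ‖S z‖ := fun z hz => Real.sqrt_pos.2 (norm_pos_iff.2 (hS0 z hz))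
  have hFp : ∀ z ∈ ball (0:ℂ) 1, 0 < 1 - ‖F z‖ := fun z hz => by linarith [hF1 z hz]
  set A : ℂ → ℝ := fun z => ‖u z‖ / (2 * (1 - ‖F z‖) * Real.sqrt ‖S z‖) with hA
  have hAc : ContinuousOn A (ball 0 1) := by
    refine ContinuousOn.div hu.continuousOn.norm ?_ (fun z hz => ?_)
    · exact (continuousOn_const.mul (continuousOn_const.sub hF.continuousOn.norm)).mul hS.continuousOn.norm.sqrt
    · have := hSp z hz; have := hFp z hz; positivity
  obtain ⟨M, hM⟩ := (isCompact_closedBall (0:ℂ) r).exists_bound_of_continuousOn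
    (hAc.mono (closedBall_subset_ball hr1))
  set E : ℂ → ℝ := fun z => A z * ((1 - ‖G z‖ ^ 2) / ‖k z‖) with hE
  have hEc : ContinuousOn E (ball 0 r) :=
    (hAc.mono hsub).mul (ContinuousOn.div (continuousOn_const.sub (hG.continuousOn.norm.pow 2))
      hk.continuousOn.norm (fun z hz => (hk0 z hz).ne'))
  have hA0 : ∀ z ∈ ball (0:ℂ) 1, 0 ≤ A z := fun z hz => by
    have := hSp z hz; have := hFp z hz; simp only [hA]; positivity
  have hEb : ∀ z ∈ ball (0:ℂ) r, E z ≤ M * ((r ^ 2 - ‖z‖ ^ 2) / c) := by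
    intro z hz
    have h1 := hM z (ball_subset_closedBall hz)
    rw [Real.norm_eq_abs] at h1
    have h2 := (le_abs_self _).trans h1
    have h3 : (1 - ‖G z‖ ^ 2) / ‖k z‖ ≤ (r ^ 2 - ‖z‖ ^ 2) / c := by
      rw [div_le_div_iff₀ (hk0 z hz) hc]; linarith [hGc z hz]
    have h4 : 0 ≤ (1 - ‖G z‖ ^ 2) / ‖k z‖ := div_nonneg (one_sub_sq_pos (hG1 z hz)).le (norm_nonneg _)
    exact mul_le_mul h2 h3 h4 ((hA0 z (hsub hz)).trans h2)
  suffices H : ∀ z ∈ ball (0:ℂ) r, E z ≤ 1 by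
    intro z hz
    have h := H z hz
    have a1 := hSp z (hsub hz); have a2 := hFp z (hsub hz); have a3 := hk0 z hz
    simp only [hE, hA] at h
    rw [div_mul_div_comm, div_le_one (by positivity)] at h
    exact h
  intro z0 hz0
  by_contra! hcon
  set ε := Real.log (E z0) / 2 with hε
  have hεp : 0 < ε := div_pos (Real.log_pos hcon) two_pos
  have hEz0 : E z0 = Real.exp (2 * ε) := by
    rw [hε, mul_div_cancel₀ _ two_ne_zero, Real.exp_log (by linarith)]
  set Φ : ℂ → ℝ := fun z => E z * Real.exp (ε * ‖z‖ ^ 2) with hΦ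
  have hlim : Tendsto (fun t : ℝ => M * ((r ^ 2 - t ^ 2) / c)) (𝓝[<] r) (𝓝 0) := by
    have : ContinuousAt (fun t : ℝ => M * ((r ^ 2 - t ^ 2) / c)) r := by fun_prop
    have h := this.tendsto
    simp only [sub_self, zero_div, mul_zero] at h
    exact h.mono_left nhdsWithin_le_nhds
  have hz0' : ‖z0‖ < r := by simpa using hz0
  obtain ⟨r', hr'1, hr'2, hr'3⟩ := ((hlim.eventually_lt_const (Real.exp_pos ε)).and
    (Ioo_mem_nhdsLT hz0')).exists
  have hr'3 : r' < r := hr'3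
  have hcb : closedBall (0:ℂ) r' ⊆ ball 0 r := closedBall_subset_ball hr'3
  have hΦc : ContinuousOn Φ (closedBall 0 r') := by
    refine (hEc.mono hcb).mul ?_
    fun_prop
  obtain ⟨z1, hz1, hmax⟩ := (isCompact_closedBall (0:ℂ) r').exists_isMaxOn
    ⟨z0, by simpa using hr'2.le⟩ hΦc
  have hΦz1 : Real.exp (2 * ε) ≤ Φ z1 := by
    have h1 := hmax (show z0 ∈ closedBall (0:ℂ) r' by simpa using hr'2.le)
    refine le_trans ?_ h1
    simp only [hΦ]
    rw [← hEz0]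
    exact le_mul_of_one_le_right (by linarith) (Real.one_le_exp (by positivity))
  have hz1r : z1 ∈ ball (0:ℂ) r := hcb hz1
  have hz1r' : ‖z1‖ < r := by simpa using hz1r
  have hexp : Real.exp (ε * ‖z1‖ ^ 2) ≤ Real.exp ε := by
    rw [Real.exp_le_exp]
    have : ‖z1‖ ^ 2 ≤ 1 := pow_le_one₀ (norm_nonneg _) (by linarith)
    nlinarith
  have hEz1 : Real.exp ε ≤ E z1 := by
    by_contra! h
    have : Φ z1 < Real.exp ε * Real.exp ε := by
      simp only [hΦ]
      calc E z1 * Real.exp (ε * ‖z1‖ ^ 2) < Real.exp ε * Real.exp (ε * ‖z1‖ ^ 2) :=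
            mul_lt_mul_of_pos_right h (Real.exp_pos _)
        _ ≤ _ := mul_le_mul_of_nonneg_left hexp (Real.exp_pos _).le
    rw [← Real.exp_add, ← two_mul] at this
    linarith
  have hz1lt : ‖z1‖ < r' := by
    rcases lt_or_eq_of_le (show ‖z1‖ ≤ r' by simpa using hz1) with h | h
    · exact h
    · exfalso
      have := hEb z1 hz1r
      rw [h] at this
      linarith
  have hz1D := hsub hz1r
  have hz1D' : ‖z1‖ < 1 := by simpa using hz1D
  have hnh : ∀ᶠ w in 𝓝 z1, w ∈ closedBall (0:ℂ) r' := by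
    filter_upwards [isOpen_ball.mem_nhds (show z1 ∈ ball (0:ℂ) r' by simpa using hz1lt)] with w hw
      using ball_subset_closedBall hw
  have hE1 : 1 < E z1 := lt_of_lt_of_le (Real.one_lt_exp_iff.2 hεp) hEz1
  have huA := diffOn_analyticAt hu hz1D'
  have hSA := diffOn_analyticAt hS hz1D'
  have hFA := diffOn_analyticAt hF hz1D'
  have hkA := hk.analyticAt (isOpen_ball.mem_nhds hz1r)
  have hGA := hG.analyticAt (isOpen_ball.mem_nhds hz1r)
  obtain ⟨L, hL, hsubF⟩ := subLap_F hFA (hF1 z1 hz1D) (norm_pos_iff.2 (hS0 z1 hz1D)) (hFS z1 hz1D)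
  have hk1 : k z1 ≠ 0 := norm_pos_iff.1 (hk0 z1 hz1r)
  have hT := (((((SubLap.log_norm huA (hu0 z1 hz1r) 1).add (SubLap.log_norm hSA (hS0 z1 hz1D) (-(1/2)))).add
    (SubLap.log_norm hkA hk1 (-1))).add
    (SubLap.log_one_sub hGA (hG1 z1 hz1r) 1 (Or.inl rfl))).add hsubF).add
    (SubLap.sq_norm (analyticAt_id (z := z1)) ε)
  have hΦE : ∀ w ∈ ball (0:ℂ) r, Real.log (Φ w) = (((((1 * Real.log ‖u w‖ + -(1/2) * Real.log ‖S w‖) +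
    -1 * Real.log ‖k w‖) + 1 * Real.log (1 - ‖G w‖ ^ 2)) + - Real.log (1 - ‖F w‖)) + ε * ‖id w‖ ^ 2)
      - Real.log 2 := by
    intro w hw
    have a1 := hSp w (hsub hw); have a2 := hFp w (hsub hw); have a3 := hk0 w hw
    have a4 := one_sub_sq_pos (hG1 w hw)
    have a5 := norm_pos_iff.2 (hu0 w hw)
    simp only [hΦ, hE, hA, id]
    rw [Real.log_mul (by positivity) (Real.exp_pos _).ne', Real.log_exp, Real.log_mul (by positivity)
      (by positivity), Real.log_div a5.ne' (by positivity), Real.log_div a4.ne' a3.ne',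
      Real.log_mul (by positivity) a1.ne', Real.log_mul two_ne_zero a2.ne', Real.log_sqrt (norm_nonneg _)]
    ring
  have hEpos : ∀ w ∈ ball (0:ℂ) r, 0 < Φ w := by
    intro w hw
    have a1 := hSp w (hsub hw); have a2 := hFp w (hsub hw); have a3 := hk0 w hw
    have a4 := one_sub_sq_pos (hG1 w hw)
    have a5 := norm_pos_iff.2 (hu0 w hw)
    simp only [hΦ, hE, hA]; positivity
  have hle0 := hT.le_zero (by
    filter_upwards [hnh] with w hw
    have h1 := hmax hw
    have h2 := Real.log_le_log (hEpos w (hcb hw)) h1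
    rw [hΦE w (hcb hw), hΦE z1 hz1r] at h2
    linarith)
  simp only [deriv_id, norm_one] at hle0
  have hlam : (‖deriv G z1‖ / (1 - ‖G z1‖ ^ 2)) ^ 2 ≤ L := by
    refine le_trans ?_ hL
    have a1 := hSp z1 hz1D; have a2 := hFp z1 hz1D; have a3 := hk0 z1 hz1r
    have a4 := one_sub_sq_pos (hG1 z1 hz1r)
    refine pow_le_pow_left₀ (by positivity) ?_ 2
    rw [hGk z1 hz1r, hFu z1 hz1D, norm_mul, norm_mul, div_le_div_iff₀ a4 (by positivity)]
    simp only [hE, hA] at hE1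
    rw [div_mul_div_comm, lt_div_iff₀ (by positivity), one_mul] at hE1
    nlinarith [norm_nonneg (p z1)]
  linarith

lemma zero_extract {v : ℂ → ℂ} (hv : DifferentiableOn ℂ v (ball 0 1)) (hnz : ∃ z ∈ ball (0:ℂ) 1, v z ≠ 0)
    {r : ℝ} (hr1 : r < 1) :
    ∃ (n : ℕ) (w : Fin n → ℂ) (u : ℂ → ℂ), (∀ j, ‖w j‖ < r) ∧ DifferentiableOn ℂ u (ball 0 1) ∧
      (∀ z ∈ ball (0:ℂ) 1, v z = (∏ j, (z - w j)) * u z) ∧ ∀ z ∈ ball (0:ℂ) r, u z ≠ 0 := by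
  classical
  set Z : Set ℂ := {z | z ∈ ball (0:ℂ) r ∧ v z = 0} with hZ
  have hZf : Z.Finite := by
    by_contra hinf
    have hinf : Z.Infinite := hinf
    obtain ⟨x, hx, hacc⟩ := hinf.exists_accPt_of_subset_isCompact (isCompact_closedBall (0:ℂ) r)
      (fun z hz => ball_subset_closedBall hz.1)
    have h1 := eventually_ne_zero hv hnz (closedBall_subset_ball hr1 hx)
    have h2 := accPt_iff_frequently_nhdsNE.1 hacc
    obtain ⟨y, hy1, hy2⟩ := (h2.and_eventually h1).exists
    exact hy2 hy1.2
  have : Fintype Z := hZf.fintype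
  set N : ℂ → ℕ := fun z => analyticOrderNatAt v z with hN
  let ι : Type := Σ a : Z, Fin (N a)
  let e := Fintype.equivFin ι
  set n := Fintype.card ι
  set P : ℂ → ℂ := fun z => ∏ j : ι, (z - (j.1 : ℂ)) with hP
  have hPd : DifferentiableOn ℂ P (ball 0 1) := by
    simp only [hP]
    fun_prop
  have hPo : ∀ z, analyticOrderAt P z = ((Finset.univ.filter fun j : ι => (j.1 : ℂ) = z).card : ℕ∞) := by
    intro z
    refine order_prod_card Finset.univ (fun (j : ι) (w : ℂ) => w - (j.1 : ℂ)) (fun j => (j.1 : ℂ))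
      (fun j => by fun_prop) (fun j => ?_)
    split_ifs with h
    · rw [← h]; exact analyticOrderAt_id_sub_const_self
    · exact analyticOrderAt_id_sub_const_of_ne (Ne.symm h)
  have hPle : ∀ z ∈ ball (0:ℂ) 1, analyticOrderAt P z ≤ analyticOrderAt v z := by
    intro z hz
    rw [hPo, ← order_nat hv hnz hz]
    exact_mod_cast card_sig_le Z N Finset.univ z
  have hPnz : ∃ z ∈ ball (0:ℂ) 1, P z ≠ 0 := by
    obtain ⟨z, hz, hvz⟩ := hnz
    refine ⟨z, hz, ?_⟩
    simp only [hP]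
    rw [Finset.prod_ne_zero_iff]
    intro j _ h
    exact hvz (by rw [sub_eq_zero.1 h]; exact j.1.2.2)
  obtain ⟨u, hud, hue⟩ := exists_div hv hPd hPnz hPle
  refine ⟨n, fun i => ((e.symm i).1 : ℂ), u, fun j => by simpa using (e.symm j).1.2.1, hud, fun z hz => ?_, fun z hz => ?_⟩
  · rw [hue z hz, mul_comm]
    congr 1
    exact (Equiv.prod_comp e.symm (fun j : ι => z - (j.1 : ℂ))).symm
  · have hzD : z ∈ ball (0:ℂ) 1 := ball_subset_ball hr1.le hz
    refine ne_zero_of_order hPd hud hv hnz (fun z hz => by rw [hue z hz, mul_comm]) hzD ?_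
    rw [hPo, ← order_nat hv hnz hzD]
    by_cases h0 : v z = 0
    · obtain ⟨A₀, hA₀⟩ := card_sig_eq Z N (z := z) ⟨hz, h0⟩
      exact_mod_cast hA₀ Finset.univ (Finset.subset_univ _)
    · have : (N z) = 0 := by
        have := (diffOn_analyticAt hv (by simpa using hzD)).analyticOrderAt_eq_zero.2 h0
        simp [hN, analyticOrderNatAt, this]
      have h2 := card_sig_le Z N Finset.univ z
      have h3 : (Finset.univ.filter fun j : ι => (j.1 : ℂ) = z).card = N z := by
        rw [this] at h2 ⊢; exact Nat.le_zero.1 h2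
      exact_mod_cast h3

lemma lemmaD_scaled {n : ℕ} {r : ℝ} (hr : 0 < r) (w : Fin n → ℂ) (hw : ∀ j, ‖w j‖ < r) :
    ∃ (G k : ℂ → ℂ) (c : ℝ), 0 < c ∧ DifferentiableOn ℂ G (ball 0 r) ∧ DifferentiableOn ℂ k (ball 0 r) ∧
      ∀ z ∈ ball (0:ℂ) r, ‖G z‖ < 1 ∧ deriv G z = (∏ j, (z - w j)) * k z ∧
        c * (1 - ‖G z‖ ^ 2) ≤ (r ^ 2 - ‖z‖ ^ 2) * ‖k z‖ := by
  have hrC : (r : ℂ) ≠ 0 := by exact_mod_cast hr.ne'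
  obtain ⟨G, k, c, hc, hG, hk, h⟩ := lemmaD (fun j => w j / r) (fun j => by
    rw [norm_div, Complex.norm_real, Real.norm_eq_abs, abs_of_pos hr, div_lt_one hr]; exact hw j)
  have hmaps : ∀ z ∈ ball (0:ℂ) r, z / r ∈ ball (0:ℂ) 1 := fun z hz => by
    have : ‖z‖ < r := by simpa using hz
    rw [mem_ball_zero_iff, norm_div, Complex.norm_real, Real.norm_eq_abs, abs_of_pos hr, div_lt_one hr]; exact this
  have hdd : DifferentiableOn ℂ (fun z : ℂ => z / r) (ball 0 r) := by fun_prop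
  refine ⟨fun z => G (z / r), fun z => ((r:ℂ) ^ (n+1))⁻¹ * k (z / r), c * r ^ 2 * (r ^ (n+1))⁻¹, by positivity,
    hG.comp hdd hmaps, (hk.comp hdd hmaps).const_mul _, fun z hz => ?_⟩
  obtain ⟨h1, h2, h3⟩ := h _ (hmaps z hz)
  refine ⟨h1, ?_, ?_⟩
  · have hd : HasDerivAt (fun z : ℂ => z / r) (1 / r) z := (hasDerivAt_id z).div_const _
    have := ((hG.differentiableAt (isOpen_ball.mem_nhds (hmaps z hz))).hasDerivAt.comp z hd).deriv
    simp only [Function.comp_def] at this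
    rw [this, h2]
    have e : ∏ j, (z / r - w j / r) = (∏ j, (z - w j)) / (r:ℂ) ^ n := by
      simp only [← sub_div]
      rw [Finset.prod_div_distrib]; simp
    rw [e]
    field_simp
    ring
  · rw [norm_mul, norm_inv, norm_pow, Complex.norm_real, Real.norm_eq_abs, abs_of_pos hr]
    rw [norm_div, Complex.norm_real, Real.norm_eq_abs, abs_of_pos hr, div_pow] at h3
    have e1 : r ^ 2 * (1 - ‖z‖ ^ 2 / r ^ 2) = r ^ 2 - ‖z‖ ^ 2 := by field_simp
    have hp : 0 ≤ r ^ 2 * (r ^ (n+1))⁻¹ := by positivity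
    calc _ = (r ^ 2 * (r ^ (n+1))⁻¹) * (c * (1 - ‖G (z / r)‖ ^ 2)) := by ring
      _ ≤ (r ^ 2 * (r ^ (n+1))⁻¹) * ((1 - ‖z‖ ^ 2 / r ^ 2) * ‖k (z / r)‖) := mul_le_mul_of_nonneg_left h3 hp
      _ = _ := by rw [← e1]; ring

lemma pack {F S : ℂ → ℂ} (hF : DifferentiableOn ℂ F (ball 0 1)) (hS : DifferentiableOn ℂ S (ball 0 1))
    (hF1 : ∀ z ∈ ball (0:ℂ) 1, ‖F z‖ < 1) (hS0 : ∀ z ∈ ball (0:ℂ) 1, S z ≠ 0)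
    (hFS : ∀ z ∈ ball (0:ℂ) 1, ‖F z‖ ≤ ‖S z‖) (hnz : ∃ z ∈ ball (0:ℂ) 1, deriv F z ≠ 0)
    {x : ℂ} {r : ℝ} (hxr : ‖x‖ < r) (hr1 : r < 1) :
    ∃ h : ℂ → ℂ, DifferentiableOn ℂ h (ball 0 r) ∧ (∀ z ∈ ball (0:ℂ) r, ‖h z‖ ≤ 1) ∧ h x = 0 ∧
      ‖deriv F x‖ ≤ 2 * (1 - ‖F x‖) * Real.sqrt ‖S x‖ * ‖deriv h x‖ ∧
      ∀ ζ ∈ ball (0:ℂ) r, analyticOrderAt (deriv F) ζ ≤ analyticOrderAt (deriv h) ζ := by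
  have hr : 0 < r := lt_of_le_of_lt (norm_nonneg _) hxr
  have hsub : ball (0:ℂ) r ⊆ ball 0 1 := ball_subset_ball hr1.le
  obtain ⟨n, w, u, hw, hu, hFu, hu0⟩ := zero_extract (deriv_diffOn hF) hnz hr1
  obtain ⟨G, k, c, hc, hG, hk, hall⟩ := lemmaD_scaled hr w hw
  have hcmp := ahlfors (p := fun z => ∏ j, (z - w j)) hr hr1 hc hF hS hu hG hk hF1 hS0 hFS hFu hu0
    (fun z hz => (hall z hz).1) (fun z hz => (hall z hz).2.1) (fun z hz => (hall z hz).2.2)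
  have hx : x ∈ ball (0:ℂ) r := by simpa using hxr
  have hGx := (hall x hx).1
  have hmaps : ∀ z ∈ ball (0:ℂ) r, G z ∈ ball (0:ℂ) 1 := fun z hz => by simpa using (hall z hz).1
  have hder : ∀ z ∈ ball (0:ℂ) r, deriv (fun z => mb (G x) (G z)) z = deriv (mb (G x)) (G z) * deriv G z :=
    fun z hz => deriv_comp (h₂ := mb (G x)) (h := G) z
      ((mb_diffOn hGx).differentiableAt (isOpen_ball.mem_nhds (hmaps z hz)))
      (hG.differentiableAt (isOpen_ball.mem_nhds hz))
  refine ⟨fun z => mb (G x) (G z), (mb_diffOn hGx).comp hG hmaps, fun z hz => (mb_norm_lt hGx (hall z hz).1).le,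
    mb_self _, ?_, fun ζ hζ => ?_⟩
  · rw [hder x hx, norm_mul]
    have h1 := mb_deriv_norm hGx hGx
    rw [mb_self, norm_zero] at h1
    have h2 := hcmp x hx
    rw [(hall x hx).2.1, hFu x (hsub hx), norm_mul, norm_mul]
    set D := ‖deriv (mb (G x)) (G x)‖
    set P := ‖∏ j, (x - w j)‖
    have hD : 0 ≤ D * P := by positivity
    have h3 := mul_le_mul_of_nonneg_left h2 hD
    calc P * ‖u x‖ = D * P * (‖u x‖ * (1 - ‖G x‖ ^ 2)) := by linear_combination (-P * ‖u x‖) * h1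
      _ ≤ _ := h3
      _ = _ := by ring
  · have hζ1 : ‖ζ‖ < 1 := by simpa using hsub hζ
    have hPA : AnalyticAt ℂ (fun z => ∏ j, (z - w j)) ζ := by
      apply Finset.analyticAt_fun_prod; intro j _; fun_prop
    have e1 : deriv F =ᶠ[𝓝 ζ] (fun z => ∏ j, (z - w j)) * u := by
      filter_upwards [isOpen_ball.mem_nhds (hsub hζ)] with z hz using hFu z hz
    have e2 : deriv (fun z => mb (G x) (G z)) =ᶠ[𝓝 ζ]
        (fun z => ∏ j, (z - w j)) * (fun z => deriv (mb (G x)) (G z) * k z) := by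
      filter_upwards [isOpen_ball.mem_nhds hζ] with z hz
      rw [hder z hz, (hall z hz).2.1, Pi.mul_apply]; ring
    have hA2 : AnalyticAt ℂ (fun z => deriv (mb (G x)) (G z) * k z) ζ := by
      have : DifferentiableOn ℂ (fun z => deriv (mb (G x)) (G z) * k z) (ball 0 r) :=
        ((deriv_diffOn (mb_diffOn hGx)).comp hG hmaps).mul hk
      exact this.analyticAt (isOpen_ball.mem_nhds hζ)
    rw [analyticOrderAt_congr e1, analyticOrderAt_congr e2, analyticOrderAt_mul hPA (diffOn_analyticAt hu hζ1),
      analyticOrderAt_mul hPA hA2, (diffOn_analyticAt hu hζ1).analyticOrderAt_eq_zero.2 (hu0 ζ hζ), add_zero]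
    exact le_self_add

lemma sqrt_bound {F S : ℂ → ℂ} (hM : MaxP F) (hS : DifferentiableOn ℂ S (ball 0 1))
    (hS0 : ∀ z ∈ ball (0:ℂ) 1, S z ≠ 0)
    (hFS : ∀ z ∈ ball (0:ℂ) 1, ‖F z‖ ≤ ‖S z‖) {x : ℂ} (hx : x ∈ ball (0:ℂ) 1) (hx0 : deriv F x ≠ 0) :
    1 + ‖F x‖ ≤ 2 * Real.sqrt ‖S x‖ := by
  obtain ⟨hF, hF1, hnz, hmax⟩ := hM
  have hx1 : ‖x‖ < 1 := by simpa using hx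
  set r : ℕ → ℝ := fun n => 1 - (1 - ‖x‖) / (n + 2) with hr
  have hrx : ∀ n, ‖x‖ < r n ∧ r n < 1 := by
    intro n
    have hp : 0 < 1 - ‖x‖ := by linarith
    have h2 : (1 - ‖x‖) / ((n:ℝ) + 2) < 1 - ‖x‖ := div_lt_self hp (by have : (0:ℝ) ≤ n := n.cast_nonneg; linarith)
    have h3 : 0 < (1 - ‖x‖) / ((n:ℝ) + 2) := by positivity
    simp only [hr]
    constructor <;> linarith
  have hrt : Tendsto r atTop (𝓝 1) := by
    have : Tendsto (fun n : ℕ => (1 - ‖x‖) / ((n:ℝ) + 2)) atTop (𝓝 0) :=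
      Tendsto.div_atTop tendsto_const_nhds (tendsto_atTop_add_const_right _ _ tendsto_natCast_atTop_atTop)
    simpa using tendsto_const_nhds.sub this
  have hex := fun n => pack hF hS hF1 hS0 hFS hnz (hrx n).1 (hrx n).2
  choose h hd h1 hx00 hcmp hord using hex
  set U : Ultrafilter ℕ := Ultrafilter.of (atTop : Filter ℕ) with hU
  have hUle : (U : Filter ℕ) ≤ atTop := Ultrafilter.of_le _
  have hrev : ∀ ρ : ℝ, ρ < 1 → ∀ᶠ n in (U : Filter ℕ), ρ < r n := fun ρ hρ =>
    hUle (hrt.eventually_const_lt hρ)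
  obtain ⟨g, hg, hgle, hglim, hgder⟩ := normal_family U h (fun ρ hρ => by
    filter_upwards [hrev ρ hρ] with n hn
    exact ⟨(hd n).mono (ball_subset_ball hn.le), fun z hz => h1 n z (ball_subset_ball hn.le hz)⟩)
  have hgx : g x = 0 := by
    refine tendsto_nhds_unique (hglim x hx) ?_
    simp only [hx00]; exact tendsto_const_nhds
  have hgd : ‖deriv F x‖ ≤ 2 * (1 - ‖F x‖) * Real.sqrt ‖S x‖ * ‖deriv g x‖ := by
    have := hgder 1 x hx
    simp only [iteratedDeriv_one] at this
    exact ge_of_tendsto (tendsto_const_nhds.mul this.norm) (Eventually.of_forall hcmp)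
  have hg0 : deriv g x ≠ 0 := by
    intro h0
    rw [h0, norm_zero, mul_zero] at hgd
    exact hx0 (norm_le_zero_iff.1 hgd)
  have hg1 := norm_lt_of_nonconst hg hgle (nonconst_of_deriv hx hg0)
  have hgord : ∀ ζ ∈ ball (0:ℂ) 1, analyticOrderAt (deriv F) ζ ≤ analyticOrderAt (deriv g) ζ := by
    intro ζ hζ
    have hζ1 : ‖ζ‖ < 1 := by simpa using hζ
    rw [← order_nat (deriv_diffOn hF) hnz hζ,
      natCast_le_analyticOrderAt_iff_iteratedDeriv_eq_zero (diffOn_analyticAt (deriv_diffOn hg) hζ1)]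
    intro i hi
    rw [← iteratedDeriv_succ']
    refine tendsto_nhds_unique (hgder (i+1) ζ hζ) ?_
    refine tendsto_const_nhds.congr' ?_
    filter_upwards [hrev _ hζ1] with n hn
    have hζn : ζ ∈ ball (0:ℂ) (r n) := by simpa using hn
    have h2 := hord n ζ hζn
    rw [← order_nat (deriv_diffOn hF) hnz hζ,
      natCast_le_analyticOrderAt_iff_iteratedDeriv_eq_zero
        (((hd n).deriv isOpen_ball).analyticAt (isOpen_ball.mem_nhds hζn))] at h2
    rw [iteratedDeriv_succ']
    exact (h2 i hi).symm
  obtain ⟨q, hq, hgq⟩ := exists_div (deriv_diffOn hg) (deriv_diffOn hF) hnz hgord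
  have hR := hmax g q hg hq hg1 hgq x hx
  rw [ratE, hgx, norm_zero] at hR
  norm_num at hR
  rw [hgq x hx, norm_mul] at hgd
  have hdp : 0 < ‖deriv F x‖ := norm_pos_iff.2 hx0
  have hkey : 1 ≤ 2 * (1 - ‖F x‖) * Real.sqrt ‖S x‖ * ‖q x‖ := by
    by_contra! hlt
    have := mul_lt_mul_of_pos_right hlt hdp
    linarith
  have hs := Real.sqrt_nonneg ‖S x‖
  have hf0 := norm_nonneg (F x)
  calc 1 + ‖F x‖ = (1 + ‖F x‖) * 1 := by ring
    _ ≤ (1 + ‖F x‖) * (2 * (1 - ‖F x‖) * Real.sqrt ‖S x‖ * ‖q x‖) := mul_le_mul_of_nonneg_left hkey (by linarith)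
    _ = 2 * Real.sqrt ‖S x‖ * (‖q x‖ * (1 - ‖F x‖ ^ 2)) := by ring
    _ ≤ 2 * Real.sqrt ‖S x‖ * 1 := mul_le_mul_of_nonneg_left hR (by linarith)
    _ = _ := by ring

lemma sqrt_bound_all {F S : ℂ → ℂ} (hM : MaxP F) (hS : DifferentiableOn ℂ S (ball 0 1))
    (hS0 : ∀ z ∈ ball (0:ℂ) 1, S z ≠ 0)
    (hFS : ∀ z ∈ ball (0:ℂ) 1, ‖F z‖ ≤ ‖S z‖) {x : ℂ} (hx : x ∈ ball (0:ℂ) 1) :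
    1 + ‖F x‖ ≤ 2 * Real.sqrt ‖S x‖ := by
  have hFc := (hM.1.continuousOn.continuousAt (isOpen_ball.mem_nhds hx)).norm
  have hSc := (hS.continuousOn.continuousAt (isOpen_ball.mem_nhds hx)).norm
  have t1 : Tendsto (fun w => 1 + ‖F w‖) (𝓝[≠] x) (𝓝 (1 + ‖F x‖)) :=
    (tendsto_const_nhds.add hFc.tendsto).mono_left nhdsWithin_le_nhds
  have t2 : Tendsto (fun w => 2 * Real.sqrt ‖S w‖) (𝓝[≠] x) (𝓝 (2 * Real.sqrt ‖S x‖)) :=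
    (tendsto_const_nhds.mul (hSc.sqrt).tendsto).mono_left nhdsWithin_le_nhds
  refine le_of_tendsto_of_tendsto t1 t2 ?_
  filter_upwards [eventually_ne_zero (deriv_diffOn hM.1) hM.2.2.1 hx,
    nhdsWithin_le_nhds (isOpen_ball.mem_nhds hx)] with w h1 h2
  exact sqrt_bound hM hS hS0 hFS h2 h1

lemma log_bound {s t : ℝ} (ht0 : 0 ≤ t) (ht : t < 1) (hs : 0 < s) (h : 1 + t ≤ 2 * Real.sqrt s) :
    2 • (-(1 - t)) ≤ Real.log s := by
  have h1 : Real.log ((1 + t) / 2) ≤ Real.log (Real.sqrt s) := Real.log_le_log (by linarith) (by linarith)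
  rw [Real.log_sqrt hs.le] at h1
  have h2 := Real.one_sub_inv_le_log_of_pos (show 0 < (1 + t) / 2 by linarith)
  have h3 : -(1 - t) ≤ 1 - ((1 + t) / 2)⁻¹ := by
    rw [inv_div]
    have : 2 / (1 + t) ≤ 2 - t := by
      rw [div_le_iff₀ (by linarith)]; nlinarith
    linarith
  simp only [nsmul_eq_mul]; push_cast
  linarith

lemma blaschke_of_maxP {F : ℂ → ℂ} (hM : MaxP F) (hmean : MeanP F)
    (hFd : ∀ z ∈ ball (0:ℂ) 1, DifferentiableAt ℂ F z) : IsBlaschkeProduct F := by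
  have hF := hM.1
  have hF1 := hM.2.1
  have hFnz : ∃ z ∈ ball (0:ℂ) 1, F z ≠ 0 := by
    obtain ⟨x, hx, hx0⟩ := hM.2.2.1
    obtain ⟨a, ha, b, hb, hab⟩ := nonconst_of_deriv hx hx0
    by_contra! hc
    exact hab (by rw [hc a ha, hc b hb])
  obtain ⟨m, ι, a, S, ha, hs, hS, hSle, hS0, hfac⟩ := factor hF (fun z hz => (hF1 z hz).le) hFnz
  have hFS : ∀ z ∈ ball (0:ℂ) 1, ‖F z‖ ≤ ‖S z‖ := by
    intro z hz
    have hz1 : ‖z‖ < 1 := by simpa using hz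
    rw [hfac z hz, norm_mul, norm_mul, norm_pow]
    refine mul_le_of_le_one_left (norm_nonneg _) ?_
    exact mul_le_one₀ (pow_le_one₀ (norm_nonneg _) hz1.le) (norm_nonneg _) (bp_norm_le ha hs hz1)
  have h0D : (0:ℂ) ∈ ball (0:ℂ) 1 := by simp
  have hS00 : 0 < ‖S 0‖ := norm_pos_iff.2 (hS0 0 h0D)
  have hge : 0 ≤ Real.log ‖S 0‖ := by
    refine le_of_forall_pos_le_add fun ε hε => ?_
    obtain ⟨ρ₀, hρ₀, h⟩ := hmean (ε / 2) (by positivity)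
    obtain ⟨ρ, hρ1, hρ2⟩ := exists_between (max_lt hρ₀ zero_lt_one)
    have a1 : ρ₀ < ρ := lt_of_le_of_lt (le_max_left _ _) hρ1
    have a2 : 0 < ρ := lt_of_le_of_lt (le_max_right _ _) hρ1
    have hav := h ρ a2 a1 hρ2
    have hcb : closedBall (0:ℂ) |ρ| ⊆ ball 0 1 := by rw [abs_of_pos a2]; exact closedBall_subset_ball hρ2
    have hsp : sphere (0:ℂ) |ρ| ⊆ ball 0 1 := sphere_subset_closedBall.trans hcb
    have hJ := AnalyticOnNhd.circleAverage_log_norm_of_ne_zero (c := 0) (R := ρ) (g := S)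
      ((hS.analyticOnNhd isOpen_ball).mono hcb) (fun u hu => hS0 u (hcb hu))
    have i1 : CircleIntegrable (fun z => (-2:ℝ) • (1 - ‖F z‖)) 0 ρ := by
      have := (hF.continuousOn.mono hsp).norm
      exact ContinuousOn.circleIntegrable' (by fun_prop)
    have i2 : CircleIntegrable (fun z => Real.log ‖S z‖) 0 ρ :=
      ContinuousOn.circleIntegrable' ((hS.continuousOn.mono hsp).norm.log
        (fun z hz => (norm_pos_iff.2 (hS0 z (hsp hz))).ne'))
    have hmono := Real.circleAverage_mono i1 i2 (fun z hz => by
      have hzD := hsp hz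
      have := log_bound (norm_nonneg (F z)) (hF1 z hzD) (norm_pos_iff.2 (hS0 z hzD)) (sqrt_bound_all hM hS hS0 hFS hzD)
      simp only [nsmul_eq_mul, smul_eq_mul] at this ⊢
      push_cast at this
      linarith)
    rw [Real.circleAverage_fun_smul, smul_eq_mul, hJ] at hmono
    linarith
  have hS1 : 1 ≤ ‖S 0‖ := (Real.log_nonneg_iff hS00).1 hge
  have hconst : ∀ z ∈ ball (0:ℂ) 1, S z = S 0 := by
    by_contra! hc
    obtain ⟨z, hz, hne⟩ := hc
    exact absurd (norm_lt_of_nonconst hS hSle ⟨z, hz, 0, h0D, hne⟩ 0 h0D) (not_lt.2 hS1)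
  refine ⟨hFd, S 0, m, ι, a, le_antisymm (hSle 0 h0D) hS1, ha, hs, fun z hz => ?_⟩
  rw [hfac z hz, hconst z hz]
  simp only [bf]
  ring

lemma MaxP.congr {F f : ℂ → ℂ} (hF : MaxP F) (he : ∀ z ∈ ball (0:ℂ) 1, f z = F z) : MaxP f := by
  obtain ⟨hd, h1, ⟨x, hx, hx0⟩, hmax⟩ := hF
  have hder : ∀ z ∈ ball (0:ℂ) 1, deriv f z = deriv F z := fun z hz =>
    Filter.EventuallyEq.deriv_eq (by filter_upwards [isOpen_ball.mem_nhds hz] with w hw using he w hw)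
  refine ⟨hd.congr he, fun z hz => by rw [he z hz]; exact h1 z hz, ⟨x, hx, by rw [hder x hx]; exact hx0⟩,
    fun h q hh hq hh1 hhq z hz => ?_⟩
  have := hmax h q hh hq hh1 (fun z hz => by rw [hhq z hz, hder z hz]) z hz
  rwa [ratE, he z hz]

lemma main_aux (B : ℂ → ℂ) (hB : IsMaximalBlaschke B)
    (f : ℂ → ℂ)
    (hf_diff : ∀ z ∈ Metric.ball (0 : ℂ) 1, DifferentiableAt ℂ f z)
    (hf_le : ∀ z ∈ Metric.ball (0 : ℂ) 1, ‖f z‖ ≤ 1)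
    (hf_nc : ∃ z ∈ Metric.ball (0 : ℂ) 1, ∃ w ∈ Metric.ball (0 : ℂ) 1, f z ≠ f w)
    (hcrit : ∀ z ∈ Metric.ball (0 : ℂ) 1, vOrder (deriv B) z ≤ vOrder (deriv f) z)
    (z : ℕ → ℂ) (hz_mem : ∀ n, z n ∈ Metric.ball (0 : ℂ) 1)
    (hz_crit : ∀ n, deriv B (z n) ≠ 0)
    (hz_bd : Tendsto (fun n => ‖z n‖) atTop (nhds 1))
    (hlittleo : Tendsto
      (fun n => (hDeriv f (z n) / hDeriv B (z n) - 1) / (1 - ‖z n‖) ^ 2)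
      atTop (nhds 0)) :
    (∃ (τ : ℂ) (z₀ : ℂ), ‖τ‖ = 1 ∧ ‖z₀‖ < 1 ∧
      ∀ w ∈ Metric.ball (0 : ℂ) 1,
        f w = τ * (z₀ - B w) / (1 - (starRingEnd ℂ) z₀ * B w)) ∧
    IsMaximalBlaschke f := by
  obtain ⟨hBd, hBle, hBmean⟩ := blaschke_mean hB.1
  have hM : MaxP B := maxP_of_maximal hB hBle ⟨z 0, hz_mem 0, hz_crit 0⟩
  have hfd : DifferentiableOn ℂ f (ball 0 1) := fun z hz => (hf_diff z hz).differentiableWithinAt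
  have hf1 := norm_lt_of_nonconst hfd hf_le hf_nc
  obtain ⟨q, hq, hfq⟩ := exists_div (deriv_diffOn hfd) (deriv_diffOn hBd) hM.2.2.1 (fun z hz => by
    have hz' : ‖z‖ < 1 := by simpa using hz
    have := hcrit z hz
    rwa [vOrder_eq (diffOn_analyticAt (deriv_diffOn hBd) hz'),
      vOrder_eq (diffOn_analyticAt (deriv_diffOn hfd) hz')] at this)
  have hE := hM.2.2.2 f q hfd hq hf1 hfq
  have hrat : ∀ n, hDeriv f (z n) / hDeriv B (z n) = ratE q B f (z n) := by
    intro n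
    have a1 : 0 < 1 - ‖z n‖ ^ 2 := one_sub_sq_pos (by simpa using hz_mem n)
    have a2 := one_sub_sq_pos (hf1 _ (hz_mem n))
    have a3 := one_sub_sq_pos (hM.2.1 _ (hz_mem n))
    have a4 := norm_pos_iff.2 (hz_crit n)
    rw [hDeriv, hDeriv, ratE, hfq _ (hz_mem n), norm_mul]
    field_simp
  simp only [hrat] at hlittleo
  have hone : ∀ a ∈ ball (0:ℂ) 1, ratE q B f a = 1 := by
    intro a ha
    by_contra hne
    obtain ⟨ε, hε, hb⟩ := rigidity hM.1 hfd hq hM.2.1 hf1 hfq hE (by simpa using ha) (lt_of_le_of_ne (hE a ha) hne)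
    have hlim2 : Tendsto (fun n => ε * (1 - ‖z n‖) ^ 2) atTop (𝓝 0) := by
      have := ((tendsto_const_nhds (x := (1:ℝ))).sub hz_bd).pow 2
      simpa using this.const_mul ε
    obtain ⟨n, h1, h2⟩ := ((hlittleo.eventually_const_lt (show -(ε/2) < 0 by linarith)).and
      (hlim2.eventually_lt_const (show (0:ℝ) < 1 by norm_num))).exists
    have hδ : 0 < (1 - ‖z n‖) ^ 2 := by
      have : ‖z n‖ < 1 := by simpa using hz_mem n
      have : 0 < 1 - ‖z n‖ := by linarith
      positivity
    have h3 := hb (z n) (hz_mem n)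
    rw [lt_div_iff₀ hδ] at h1
    set t := ε * (1 - ‖z n‖) ^ 2 with ht
    have ht0 : 0 < t := by positivity
    have h4 : Real.exp (-t) ≤ 1 / (1 + t) := by
      rw [Real.exp_neg, ← one_div]
      exact one_div_le_one_div_of_le (by linarith) (by linarith [Real.add_one_le_exp t])
    have h5 : 1 / (1 + t) ≤ 1 - t / 2 := by
      rw [div_le_iff₀ (by linarith)]; nlinarith
    nlinarith
  obtain ⟨τ, c, hτ, hc, he⟩ := eq_moebius hM hfd hq hf1 hfq hone
  refine ⟨⟨-τ, c, by simpa using hτ, hc, fun w hw => ?_⟩, ?_⟩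
  · rw [he w hw, mb]; ring
  · have hMf : MaxP f := (maxP_comp hM hτ hc).congr he
    exact maximal_of_maxP hMf (blaschke_of_maxP hMf (hBmean.moebius hBd hM.2.1 hτ hc hfd he) hf_diff)

/-- **Strong form of the generalized Nehari–Schwarz lemma at the boundary.** Let `B`
be a maximal Blaschke product and `f` a nonconstant holomorphic map of the open unit
disk into the closed unit disk whose critical set contains that of `B`. If there is a
sequence `(z_n)` in the disk with `B'(z_n) ≠ 0`, `|z_n| → 1` and
`f^h(z_n)/B^h(z_n) = 1 + o((1 − |z_n|)²)`, then `f = T ∘ B` for some conformal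
automorphism `T` of the disk; in particular `f` is itself a maximal Blaschke
product. -/
theorem nehari_schwarz_boundary_rigidity (B : ℂ → ℂ) (hB : IsMaximalBlaschke B)
    (f : ℂ → ℂ)
    (hf_diff : ∀ z ∈ Metric.ball (0 : ℂ) 1, DifferentiableAt ℂ f z)
    (hf_le : ∀ z ∈ Metric.ball (0 : ℂ) 1, ‖f z‖ ≤ 1)
    (hf_nc : ∃ z ∈ Metric.ball (0 : ℂ) 1, ∃ w ∈ Metric.ball (0 : ℂ) 1, f z ≠ f w)
    (hcrit : ∀ z ∈ Metric.ball (0 : ℂ) 1, vOrder (deriv B) z ≤ vOrder (deriv f) z)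
    (z : ℕ → ℂ) (hz_mem : ∀ n, z n ∈ Metric.ball (0 : ℂ) 1)
    (hz_crit : ∀ n, deriv B (z n) ≠ 0)
    (hz_bd : Tendsto (fun n => ‖z n‖) atTop (nhds 1))
    (hlittleo : Tendsto
      (fun n => (hDeriv f (z n) / hDeriv B (z n) - 1) / (1 - ‖z n‖) ^ 2)
      atTop (nhds 0)) :
    (∃ (τ : ℂ) (z₀ : ℂ), ‖τ‖ = 1 ∧ ‖z₀‖ < 1 ∧
      ∀ w ∈ Metric.ball (0 : ℂ) 1,
        f w = τ * (z₀ - B w) / (1 - (starRingEnd ℂ) z₀ * B w)) ∧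
    IsMaximalBlaschke f := by
  exact main_aux B hB f hf_diff hf_le hf_nc hcrit z hz_mem hz_crit hz_bd hlittleo
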